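/- Let f ∈ ℤ[X] be a monic cubic polynomial and let R = ℤ[X]/(f). Let m be the number of irreducible factors of f in ℤ[X], counted with multiplicity. Then the Dirichlet series Z(s) = Σ_{k≥1} a_R(k) k^{−s} converges for Re(s) > 1, and there exist δ > 0 and a function g holomorphic on {s ∈ ℂ : Re(s) > 1 − δ} with g(1) ≠ 0 such that Z(s) = g(s)·(s−1)^{−m} for all s with Re(s) > 1. -/

import Mathlib

/-- `idealCount R k` is the number of ideals `I` of `R` such that `R ⧸ I` is finite
with exactly `k` elements. -/
noncomputable def idealCount (R : Type) [CommRing R] (k : ℕ) : ℕ :=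
  Set.ncard {I : Ideal R | Nat.card (R ⧸ I) = k}

set_option linter.unusedSectionVars false

section Part1
namespace CubicZeta

section Riemann
open MeasureTheory Module
open scoped Pointwise

theorem riemann_sum {E : Type*} [NormedAddCommGroup E] [NormedSpace ℝ E] [FiniteDimensional ℝ E]
    [MeasurableSpace E] [BorelSpace E] (μ : Measure E) [μ.IsAddHaarMeasure] {ι : Type*} [Finite ι]
    (b : Basis ι ℝ E) (G : E → ℝ) (L : ℝ) (hL0 : 0 ≤ L)
    (hL : ∀ x y, |G x - G y| ≤ L * ‖x - y‖) (R : ℝ) (hR : ∀ x, R < ‖x‖ → G x = 0) :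
    ∃ c C : ℝ, ∀ h : ℝ, 0 < h → h ≤ 1 →
      |h ^ (finrank ℝ E) * ∑' l : Submodule.span ℤ (Set.range b), G (h • (l : E)) - c|
        ≤ C * h := by
  classical
  have hproper : ProperSpace E := FiniteDimensional.proper_real E
  set n := finrank ℝ E with hn
  set P := ZSpan.fundamentalDomain b with hP
  have hPb : Bornology.IsBounded P := ZSpan.fundamentalDomain_isBounded b
  obtain ⟨D, hD0, hD⟩ : ∃ D : ℝ, 0 < D ∧ ∀ x ∈ P, ‖x‖ ≤ D := by
    obtain ⟨D, hD⟩ := hPb.exists_norm_le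
    exact ⟨max D 1, by positivity, fun x hx => (hD x hx).trans (le_max_left _ _)⟩
  have : VAddInvariantMeasure (Submodule.span ℤ (Set.range b)) E μ :=
    ⟨fun l s _ => measure_preimage_add μ (l : E) s⟩
  have hfd := ZSpan.isAddFundamentalDomain b μ
  have hP0 : μ P ≠ 0 := ZSpan.measure_fundamentalDomain_ne_zero b
  have hPt : μ P ≠ ⊤ := hPb.measure_lt_top.ne
  have hPm : MeasurableSet P := ZSpan.fundamentalDomain_measurableSet b
  set V := μ.real P with hV
  have hVpos : 0 < V := ENNReal.toReal_pos hP0 hPt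
  set B := μ.real (Metric.closedBall (0 : E) 1)
  have hGc : Continuous G := by
    have : LipschitzWith ⟨L, hL0⟩ G := LipschitzWith.of_dist_le_mul fun x y => by
      rw [Real.dist_eq, dist_eq_norm]; exact hL x y
    exact this.continuous
  set R' := max R 0 with hR'
  have hR'0 : 0 ≤ R' := le_max_right _ _
  have hRR : ∀ x, R' < ‖x‖ → G x = 0 := fun x hx => hR x ((le_max_left _ _).trans_lt hx)
  have hGs : HasCompactSupport G := by
    refine HasCompactSupport.of_support_subset_isCompact (isCompact_closedBall (0 : E) R') ?_
    intro x hx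
    rw [mem_closedBall_zero_iff]
    by_contra hcon
    exact hx (hRR x (not_le.mp hcon))
  refine ⟨V⁻¹ * ∫ x, G x ∂μ, V⁻¹ * (L * D * ((R' + 2 * D) ^ n * B)), fun h hh hh1 => ?_⟩
  set T0 : Set (Submodule.span ℤ (Set.range b)) := {l | ‖(l : E)‖ ≤ (R' + D) / h} with hT0
  have hT0f : T0.Finite := by
    have := ZSpan.setFinite_inter b (Metric.isBounded_closedBall (x := (0 : E)) (r := (R' + D) / h))
    refine Set.Finite.of_finite_image (f := Subtype.val) (this.subset ?_)
      Subtype.val_injective.injOn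
    rintro _ ⟨l, hl, rfl⟩
    exact ⟨by rw [mem_closedBall_zero_iff]; exact hl, l.2⟩
  set T := hT0f.toFinset with hT
  have hnotT : ∀ l, l ∉ T → (R' + D) / h < ‖(l : E)‖ := fun l hl => by
    simpa [hT, hT0] using hl
  have hIntg : Integrable (fun y => G (h • y)) μ :=
    (hGc.integrable_of_hasCompactSupport hGs).comp_smul hh.ne'
  have hzero : ∀ l : Submodule.span ℤ (Set.range b), l ∉ T → ∀ x, ‖x‖ ≤ D →
      G (h • ((l : E) + x)) = 0 := by
    intro l hl x hx
    apply hRR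
    have h1 := hnotT l hl
    rw [div_lt_iff₀ hh] at h1
    have h2 : ‖(l : E)‖ ≤ ‖(l : E) + x‖ + ‖x‖ := by
      simpa using norm_sub_le ((l : E) + x) x
    rw [norm_smul, Real.norm_of_nonneg hh.le]
    nlinarith
  have hmemP : ∀ l : Submodule.span ℤ (Set.range b), ∀ y ∈ l +ᵥ P, ∃ x ∈ P, y = (l : E) + x := by
    rintro l _ ⟨x, hx, rfl⟩
    exact ⟨x, hx, rfl⟩
  have hmeas : ∀ l : Submodule.span ℤ (Set.range b), μ (l +ᵥ P) = μ P := fun l => by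
    rw [measure_vadd]
  have hmset : ∀ l : Submodule.span ℤ (Set.range b), MeasurableSet (l +ᵥ P) := fun l =>
    hPm.const_vadd l
  have e1 : ∫ y, G (h • y) ∂μ = ∑ l ∈ T, ∫ y in l +ᵥ P, G (h • y) ∂μ := by
    rw [hfd.integral_eq_tsum _ hIntg]
    refine tsum_eq_sum fun l hl => ?_
    refine setIntegral_eq_zero_of_forall_eq_zero fun y hy => ?_
    obtain ⟨x, hx, rfl⟩ := hmemP l y hy
    exact hzero l hl x (hD x hx)
  have e2 : ∑' l : Submodule.span ℤ (Set.range b), G (h • (l : E)) = ∑ l ∈ T, G (h • (l : E)) :=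
    tsum_eq_sum fun l hl => by simpa using hzero l hl 0 (by simpa using hD0.le)
  have e3 : ∀ l : Submodule.span ℤ (Set.range b),
      |∫ y in l +ᵥ P, G (h • y) ∂μ - V * G (h • (l : E))| ≤ L * h * D * V := by
    intro l
    have : V * G (h • (l : E)) = ∫ y in l +ᵥ P, G (h • (l : E)) ∂μ := by
      rw [setIntegral_const, Measure.real, hmeas]; simp [hV, Measure.real]
    rw [this, ← integral_sub hIntg.integrableOn (integrableOn_const (by rw [hmeas]; exact hPt))]
    have := norm_setIntegral_le_of_norm_le_const (μ := μ) (s := l +ᵥ P)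
      (f := fun y => G (h • y) - G (h • (l : E))) (C := L * h * D)
      (by rw [hmeas]; exact hPt.lt_top) (fun y hy => ?_)
    · rw [Measure.real, hmeas] at this
      exact this
    · obtain ⟨x, hx, rfl⟩ := hmemP l y hy
      rw [Real.norm_eq_abs]
      refine (hL _ _).trans ?_
      rw [← smul_sub, add_sub_cancel_left, norm_smul, Real.norm_of_nonneg hh.le, mul_assoc]
      gcongr
      exact hD x hx
  have e4 : T.card * V ≤ (h ^ n)⁻¹ * ((R' + 2 * D) ^ n * B) := by
    have h1 : ∑ l ∈ T, μ P ≤ μ (Metric.closedBall (0 : E) ((R' + 2 * D) / h)) := by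
      rw [hfd.measure_eq_tsum' (Metric.closedBall (0 : E) ((R' + 2 * D) / h))]
      refine le_trans (Finset.sum_le_sum fun l hl => ?_) (ENNReal.sum_le_tsum T)
      rw [← hmeas l]
      refine measure_mono (Set.subset_inter ?_ subset_rfl)
      intro y hy
      obtain ⟨x, hx, rfl⟩ := hmemP l y hy
      rw [mem_closedBall_zero_iff]
      have h3 : ‖(l : E)‖ ≤ (R' + D) / h := by simpa [hT, hT0] using hl
      have h4 := hD x hx
      have h5 := norm_add_le (l : E) x
      have h6 : D ≤ D / h := by rw [le_div_iff₀ hh]; nlinarith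
      have : (R' + 2 * D) / h = (R' + D) / h + D / h := by ring
      linarith
    rw [Measure.addHaar_closedBall' μ _ (by positivity), Finset.sum_const, nsmul_eq_mul] at h1
    have h2 := ENNReal.toReal_mono (by
      exact ENNReal.mul_ne_top ENNReal.ofReal_ne_top
        (measure_closedBall_lt_top).ne) h1
    rw [ENNReal.toReal_mul, ENNReal.toReal_mul, ENNReal.toReal_ofReal (by positivity)] at h2
    simp only [ENNReal.toReal_natCast] at h2
    refine h2.trans (le_of_eq ?_)
    rw [div_pow]
    simp only [B, Measure.real, hn]
    ring
  have e5 : ∫ y, G (h • y) ∂μ = (h ^ n)⁻¹ * ∫ x, G x ∂μ := by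
    rw [Measure.integral_comp_smul, abs_of_pos (by positivity), smul_eq_mul]
  have hhn : (0 : ℝ) < h ^ n := by positivity
  have e6 : |∫ y, G (h • y) ∂μ - V * ∑ l ∈ T, G (h • (l : E))| ≤ T.card * (L * h * D * V) := by
    rw [e1, Finset.mul_sum, ← Finset.sum_sub_distrib]
    refine (Finset.abs_sum_le_sum_abs _ _).trans ?_
    refine (Finset.sum_le_sum fun l _ => e3 l).trans ?_
    rw [Finset.sum_const, nsmul_eq_mul]
  rw [e2]
  have e7 : h ^ n * ∑ l ∈ T, G (h • (l : E)) - V⁻¹ * ∫ x, G x ∂μ =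
      -(h ^ n * V⁻¹) * (∫ y, G (h • y) ∂μ - V * ∑ l ∈ T, G (h • (l : E))) := by
    rw [e5]; field_simp; ring
  rw [e7, abs_mul, abs_neg, abs_of_pos (by positivity)]
  calc h ^ n * V⁻¹ * |∫ y, G (h • y) ∂μ - V * ∑ l ∈ T, G (h • (l : E))|
      ≤ h ^ n * V⁻¹ * (T.card * (L * h * D * V)) := by gcongr
    _ = h ^ n * V⁻¹ * (L * h * D) * (T.card * V) := by ring
    _ ≤ h ^ n * V⁻¹ * (L * h * D) * ((h ^ n)⁻¹ * ((R' + 2 * D) ^ n * B)) := by gcongr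
    _ = _ := by field_simp

end Riemann

end CubicZeta
end Part1

section Part2
namespace CubicZeta

section Mellin
open MeasureTheory Set Filter Topology

/-- test function -/
noncomputable def phi (v : ℝ) : ℝ := v * max 0 (1 - v)

theorem phi_zero : phi 0 = 0 := by simp [phi]

theorem phi_of_one_le {v : ℝ} (h : 1 ≤ v) : phi v = 0 := by
  rw [phi, max_eq_left (by linarith), mul_zero]

theorem continuous_phi : Continuous phi := by unfold phi; fun_prop

theorem phi_nonneg {v : ℝ} (h : 0 ≤ v) : 0 ≤ phi v := mul_nonneg h (le_max_left _ _)

theorem phi_eq_indicator {t : ℝ} (ht : 0 < t) : (phi t : ℂ) =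
    (Ioc (0 : ℝ) 1).indicator (fun t : ℝ => (t : ℂ) ^ (1 : ℂ)) t -
      (Ioc (0 : ℝ) 1).indicator (fun t : ℝ => (t : ℂ) ^ (2 : ℂ)) t := by
  by_cases h1 : t ≤ 1
  · have hm : t ∈ Ioc (0 : ℝ) 1 := ⟨ht, h1⟩
    rw [indicator_of_mem hm, indicator_of_mem hm, phi, max_eq_right (by linarith)]
    rw [Complex.cpow_one, Complex.cpow_ofNat]
    push_cast; ring
  · rw [indicator_of_notMem (by simp [h1]), indicator_of_notMem (by simp [h1]),
      phi_of_one_le (by linarith)]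
    simp

theorem hasMellin_phi {s : ℂ} (hs : 0 < s.re) :
    HasMellin (fun t => (phi t : ℂ)) s (1 / (s + 1) - 1 / (s + 2)) := by
  have h1 := hasMellin_cpow_Ioc 1 (s := s) (by simp; linarith)
  have h2 := hasMellin_cpow_Ioc 2 (s := s) (by simp; linarith)
  have h3 := hasMellin_sub h1.1 h2.1
  rw [h1.2, h2.2] at h3
  refine ⟨h3.1.congr_fun (fun t ht => ?_) measurableSet_Ioi, ?_⟩
  · simp only [phi_eq_indicator (mem_Ioi.mp ht)]
  · rw [← h3.2]
    refine setIntegral_congr_fun measurableSet_Ioi fun t ht => ?_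
    simp only [phi_eq_indicator (mem_Ioi.mp ht)]

/-- smoothed counting function -/
noncomputable def theta (a : ℕ → ℝ) (t : ℝ) : ℝ := ∑' k : ℕ, a k * phi (t * k)

theorem theta_term_zero (a : ℕ → ℝ) {t x : ℝ} (hx : 0 < x) (hxt : x ≤ t) (k : ℕ)
    (hk : k ∉ Finset.range (⌈x⁻¹⌉₊ + 1)) : a k * phi (t * k) = 0 := by
  rw [phi_of_one_le, mul_zero]
  have h1 : x⁻¹ ≤ k := (Nat.le_ceil _).trans (by
    have := Finset.mem_range.not.mp hk
    exact_mod_cast (by omega : ⌈x⁻¹⌉₊ ≤ k))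
  have ht : 0 ≤ t := hx.le.trans hxt
  calc (1 : ℝ) = x * x⁻¹ := by field_simp
    _ ≤ t * k := by gcongr

theorem theta_eq_sum (a : ℕ → ℝ) {t x : ℝ} (hx : 0 < x) (hxt : x ≤ t) :
    theta a t = ∑ k ∈ Finset.range (⌈x⁻¹⌉₊ + 1), a k * phi (t * k) :=
  tsum_eq_sum fun k hk => theta_term_zero a hx hxt k hk

theorem continuousOn_theta (a : ℕ → ℝ) : ContinuousOn (theta a) (Ioi 0) := by
  intro t ht
  refine ContinuousAt.continuousWithinAt ?_
  have ht' : 0 < t := ht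
  have : (fun t => ∑ k ∈ Finset.range (⌈(t/2)⁻¹⌉₊ + 1), a k * phi (t * k)) = fun t =>
    ∑ k ∈ Finset.range (⌈(t/2)⁻¹⌉₊ + 1), a k * phi (t * k) := rfl
  have hc : ContinuousAt (fun u =>
      ∑ k ∈ Finset.range (⌈(t/2)⁻¹⌉₊ + 1), a k * phi (u * k)) t := by
    refine Continuous.continuousAt ?_
    refine continuous_finsetSum _ fun k _ => continuous_const.mul (continuous_phi.comp ?_)
    fun_prop
  refine hc.congr ?_
  filter_upwards [lt_mem_nhds (half_lt_self ht')] with u hu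
  exact (theta_eq_sum a (by positivity) hu.le).symm

theorem theta_of_one_lt (a : ℕ → ℝ) {t : ℝ} (ht : 1 < t) : theta a t = 0 := by
  unfold theta
  refine (tsum_congr fun k => ?_).trans tsum_zero
  rcases Nat.eq_zero_or_pos k with rfl | hk
  · simp [phi_zero]
  · rw [phi_of_one_le, mul_zero]
    have : (1 : ℝ) ≤ k := by exact_mod_cast hk
    nlinarith

theorem mellin_theta (a : ℕ → ℝ) (ha : ∀ k, 0 ≤ a k) {s : ℂ} (hs : 0 < s.re)
    (hsum : LSeriesSummable (fun k => (a k : ℂ)) s) :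
    mellin (fun t => (theta a t : ℂ)) s =
      LSeries (fun k => (a k : ℂ)) s * (1 / (s + 1) - 1 / (s + 2)) := by
  set F : ℕ → ℝ → ℂ := fun k t => (t : ℂ) ^ (s - 1) • ((a k : ℂ) * (phi (k * t) : ℂ)) with hF
  set I0 := ∫ t in Ioi (0 : ℝ), ‖(t : ℂ) ^ (s - 1) • (phi t : ℂ)‖ with hI0
  have hF0 : F 0 = 0 := by ext t; simp [hF, phi_zero]
  have hconv : ∀ k : ℕ, 0 < k → MellinConvergent (fun t => (phi (k * t) : ℂ)) s := fun k hk =>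
    (MellinConvergent.comp_mul_left (f := fun t => (phi t : ℂ)) (by exact_mod_cast hk)).mpr
      (hasMellin_phi hs).1
  have hFint : ∀ k, Integrable (F k) (volume.restrict (Ioi 0)) := by
    intro k
    rcases Nat.eq_zero_or_pos k with rfl | hk
    · rw [hF0]; exact integrable_zero _ _ _
    · have := (hconv k hk).const_smul (a k : ℂ)
      refine this.congr_fun (fun t _ => ?_) measurableSet_Ioi
      simp [hF]
  have hFval : ∀ k, ∫ t in Ioi (0 : ℝ), F k t =
      LSeries.term (fun k => (a k : ℂ)) s k * (1 / (s + 1) - 1 / (s + 2)) := by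
    intro k
    rcases Nat.eq_zero_or_pos k with rfl | hk
    · simp [hF0]
    · have h1 : mellin (fun t => (phi (k * t) : ℂ)) s = _ :=
        mellin_comp_mul_left (fun t => (phi t : ℂ)) s (a := (k : ℝ)) (by exact_mod_cast hk)
      rw [(hasMellin_phi hs).2] at h1
      have h2 : ∫ t in Ioi (0 : ℝ), F k t = (a k : ℂ) * mellin (fun t => (phi (k * t) : ℂ)) s := by
        rw [mellin, ← integral_const_mul]
        refine integral_congr_ae (Eventually.of_forall fun t => ?_)
        simp [hF]; ring
      rw [h2, h1, LSeries.term_of_ne_zero hk.ne', Complex.cpow_neg]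
      simp only [smul_eq_mul, Complex.ofReal_natCast]
      ring
  have hFnorm : ∀ k, ∫ t in Ioi (0 : ℝ), ‖F k t‖ =
      ‖LSeries.term (fun k => (a k : ℂ)) s k‖ * I0 := by
    intro k
    rcases Nat.eq_zero_or_pos k with rfl | hk
    · simp [hF0]
    · have hk' : (0 : ℝ) < k := by exact_mod_cast hk
      have h2 := integral_comp_mul_left_Ioi
        (fun t : ℝ => ‖(t : ℂ) ^ (s - 1) • (phi t : ℂ)‖) 0 hk'
      rw [mul_zero, ← hI0] at h2
      rw [LSeries.norm_term_eq, if_neg hk.ne']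
      have h3 : ∫ t in Ioi (0 : ℝ), ‖F k t‖ = ∫ t in Ioi (0 : ℝ), (a k * (k : ℝ) ^ (1 - s.re)) *
          ‖((k * t : ℝ) : ℂ) ^ (s - 1) • (phi (k * t) : ℂ)‖ := by
        refine setIntegral_congr_fun measurableSet_Ioi fun t ht => ?_
        have ht' : (0 : ℝ) < t := ht
        simp only [hF, norm_smul, norm_mul]
        rw [Complex.norm_cpow_eq_rpow_re_of_pos ht', Complex.norm_cpow_eq_rpow_re_of_pos
          (by positivity), Real.mul_rpow hk'.le ht'.le, Complex.norm_real (a k),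
          Real.norm_of_nonneg (ha k)]
        have : (k : ℝ) ^ (1 - s.re) * (k : ℝ) ^ ((s - 1).re) = 1 := by
          rw [← Real.rpow_add hk']; simp
        linear_combination (-(t ^ (s - 1).re * a k * ‖(phi (k * t) : ℂ)‖)) * this
      rw [h3, integral_const_mul, h2, Complex.norm_real, Real.norm_of_nonneg (ha k), smul_eq_mul,
        Real.rpow_sub hk', Real.rpow_one]
      field_simp
  have hsm : Summable fun k => ∫ t in Ioi (0 : ℝ), ‖F k t‖ := by
    simp_rw [hFnorm]
    exact hsum.norm.mul_right _
  have hS := hasSum_integral_of_summable_integral_norm hFint hsm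
  simp_rw [hFval] at hS
  rw [LSeries, ← tsum_mul_right, hS.tsum_eq, mellin]
  refine setIntegral_congr_fun measurableSet_Ioi fun t ht => ?_
  simp only [hF, smul_eq_mul]
  rw [tsum_mul_left]
  congr 1
  rw [theta, Complex.ofReal_tsum]
  refine tsum_congr fun k => ?_
  rw [mul_comm t]
  push_cast; rfl

theorem continuation (a : ℕ → ℝ) (ha : ∀ k, 0 ≤ a k)
    (hsum : ∀ s : ℂ, 1 < s.re → LSeriesSummable (fun k => (a k : ℂ)) s) (c C ε : ℝ)
    (hε : 0 < ε) (hε1 : ε ≤ 1)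
    (hth : ∀ t, 0 < t → t ≤ 1 → |theta a t - c / t| ≤ C * t ^ (ε - 1)) :
    ∃ g : ℂ → ℂ, DifferentiableOn ℂ g {s : ℂ | 1 - ε < s.re} ∧
      ∀ s : ℂ, 1 < s.re → LSeries (fun k => (a k : ℂ)) s = g s / (s - 1) := by
  set f : ℝ → ℂ := (Ioc (0 : ℝ) 1).indicator fun t => ((theta a t - c / t : ℝ) : ℂ) with hf
  have hloc : LocallyIntegrableOn f (Ioi 0) volume := by
    rw [locallyIntegrableOn_iff isOpen_Ioi.isLocallyClosed]
    intro k hk hkc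
    refine IntegrableOn.indicator ?_ measurableSet_Ioc
    refine ContinuousOn.integrableOn_compact hkc ?_
    refine Complex.continuous_ofReal.comp_continuousOn ?_
    refine ((continuousOn_theta a).mono hk).sub ?_
    exact continuousOn_const.div continuousOn_id fun x hx => (hk hx).ne'
  have htop : ∀ A : ℝ, f =O[atTop] fun x => x ^ (-A) := fun A => by
    refine Asymptotics.IsBigO.of_bound 0 ?_
    filter_upwards [eventually_gt_atTop 1] with x hx
    rw [hf, indicator_of_notMem (by simp; intro _; exact hx)]
    simp
  have hzero : f =O[𝓝[>] 0] fun x => x ^ (-(1 - ε)) := by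
    refine Asymptotics.IsBigO.of_bound C ?_
    filter_upwards [Ioc_mem_nhdsGT (zero_lt_one' ℝ)] with x hx
    rw [hf, indicator_of_mem hx, Complex.norm_real, Real.norm_eq_abs, Real.norm_of_nonneg
      (Real.rpow_nonneg hx.1.le _), neg_sub]
    exact hth x hx.1 hx.2
  have hMd : ∀ s : ℂ, 1 - ε < s.re → DifferentiableAt ℂ (mellin f) s := fun s hs =>
    mellin_differentiableAt_of_isBigO_rpow hloc (htop (s.re + 1)) (by linarith) hzero hs
  have hMc : ∀ s : ℂ, 1 - ε < s.re → MellinConvergent f s := fun s hs =>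
    mellinConvergent_of_isBigO_rpow hloc (htop (s.re + 1)) (by linarith) hzero hs
  refine ⟨fun s => (s + 1) * (s + 2) * (c + (s - 1) * mellin f s), ?_, ?_⟩
  · intro s hs
    have := hMd s hs
    exact DifferentiableAt.differentiableWithinAt (by fun_prop)
  · intro s hs
    have h1 := mellin_theta a ha (by linarith) (hsum s hs)
    have h2 := hasMellin_cpow_Ioc (-1) (s := s) (by simp; linarith)
    have h3 := h2.1.const_smul (c : ℂ)
    have h4 := hasMellin_add (hMc s (by linarith)) h3
    have h5 : mellin (fun t => (theta a t : ℂ)) s = mellin f s + c * (1 / (s + -1)) := by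
      have h6 := mellin_const_smul ((Ioc (0 : ℝ) 1).indicator fun t : ℝ => (t : ℂ) ^ (-1 : ℂ)) s
        (c : ℂ)
      rw [h2.2] at h6
      rw [← smul_eq_mul, ← h6, ← h4.2]
      refine setIntegral_congr_fun measurableSet_Ioi fun t ht => ?_
      have ht' : 0 < t := ht
      simp only [hf]
      congr 1
      by_cases h : t ≤ 1
      · have hm : t ∈ Ioc (0 : ℝ) 1 := ⟨ht', h⟩
        rw [indicator_of_mem hm, indicator_of_mem hm, Complex.cpow_neg_one]
        push_cast
        simp [div_eq_mul_inv]
      · rw [indicator_of_notMem (by simp [h]), indicator_of_notMem (by simp [h]),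
          theta_of_one_lt a (not_le.mp h)]
        simp
    have hs1 : s - 1 ≠ 0 := fun h => by
      have := congrArg Complex.re h; simp at this; linarith
    have hs2 : s + 1 ≠ 0 := fun h => by
      have := congrArg Complex.re h; simp at this; linarith
    have hs3 : s + 2 ≠ 0 := fun h => by
      have := congrArg Complex.re h; simp at this; linarith
    rw [h5] at h1
    rw [← sub_eq_add_neg] at h1
    field_simp at h1 ⊢
    linear_combination -h1
  
end Mellin

end CubicZeta
end Part2

section Part3
namespace CubicZeta

section Gam

variable {W ι : Type*} [Fintype W] [Fintype ι] (μ : W → ℕ) (c : ι → W → ℝ)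

noncomputable def nrm (a : W → ℝ) : ℝ := ∏ w, a w ^ μ w

noncomputable def lg (a : W → ℝ) (w : W) : ℝ :=
  Real.log (a w) - Real.log (nrm μ a) * ((∑ w, μ w : ℕ) : ℝ)⁻¹

noncomputable def tt (i : ι) (a : W → ℝ) : ℝ := ∑ w, c i w * lg μ a w

noncomputable def psi (a : W → ℝ) : ℝ := ∏ i, max 0 (1 - |tt μ c i a|)

noncomputable def Gam (a : W → ℝ) : ℝ := phi (nrm μ a) * psi μ c a

theorem psi_nonneg (a : W → ℝ) : 0 ≤ psi μ c a :=
  Finset.prod_nonneg fun _ _ => le_max_left _ _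

theorem psi_le_one (a : W → ℝ) : psi μ c a ≤ 1 :=
  Finset.prod_le_one (fun _ _ => le_max_left _ _) fun _ _ =>
    max_le (by norm_num) (by linarith [abs_nonneg (tt μ c ‹_› a)])

theorem abs_prod_sub_prod_le {s : Finset ι} (f g : ι → ℝ) (hf : ∀ i, |f i| ≤ 1)
    (hg : ∀ i, |g i| ≤ 1) {d : ℝ} (hd : ∀ i, |f i - g i| ≤ d) :
    |∏ i ∈ s, f i - ∏ i ∈ s, g i| ≤ s.card * d := by
  classical
  induction s using Finset.induction_on with
  | empty => simp
  | insert i s hi ih =>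
    rw [Finset.prod_insert hi, Finset.prod_insert hi, Finset.card_insert_of_notMem hi]
    have h1 : |∏ i ∈ s, f i| ≤ 1 := by
      rw [Finset.abs_prod]
      exact Finset.prod_le_one (fun _ _ => abs_nonneg _) fun _ _ => hf _
    have e : f i * ∏ i ∈ s, f i - g i * ∏ i ∈ s, g i =
      (f i - g i) * ∏ i ∈ s, f i + g i * (∏ i ∈ s, f i - ∏ i ∈ s, g i) := by ring
    rw [e]
    refine (abs_add_le _ _).trans ?_
    rw [abs_mul, abs_mul]
    have h2 := mul_le_mul (hd i) h1 (abs_nonneg _) ((abs_nonneg _).trans (hd i))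
    have h3 := mul_le_mul (hg i) ih (abs_nonneg _) zero_le_one
    push_cast
    linarith

theorem phi_lip {u v : ℝ} (hu : 0 ≤ u) (hv : 0 ≤ v) : |phi u - phi v| ≤ |u - v| := by
  unfold phi
  rcases le_total u 1 with h1 | h1 <;> rcases le_total v 1 with h2 | h2
  · rw [max_eq_right (by linarith), max_eq_right (by linarith)]
    have : u * (1 - u) - v * (1 - v) = (u - v) * (1 - u - v) := by ring
    rw [this, abs_mul]
    exact mul_le_of_le_one_right (abs_nonneg _) (abs_le.mpr ⟨by linarith, by linarith⟩)
  · rw [max_eq_right (by linarith), max_eq_left (by linarith), abs_of_nonneg (by nlinarith),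
      abs_of_nonpos (by linarith)]
    nlinarith
  · rw [max_eq_left (by linarith), max_eq_right (by linarith), abs_of_nonpos (by nlinarith),
      abs_of_nonneg (by linarith)]
    nlinarith
  · rw [max_eq_left (by linarith), max_eq_left (by linarith)]
    simp

theorem phi_le {u : ℝ} (hu : 0 ≤ u) : phi u ≤ u :=
  mul_le_of_le_one_right hu (max_le (by norm_num) (by linarith))

theorem abs_log_sub_le {a b : ℝ} (ha : 0 < a) (hab : |a - b| ≤ a / 2) :
    |Real.log a - Real.log b| ≤ 2 * |a - b| / a := by
  have hab' := abs_le.mp hab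
  have hb : a / 2 ≤ b := by linarith
  have hb0 : 0 < b := by linarith
  have key : ∀ x y : ℝ, 0 < x → 0 < y → Real.log x - Real.log y ≤ (x - y) / y := by
    intro x y hx hy
    rw [← Real.log_div hx.ne' hy.ne']
    refine (Real.log_le_sub_one_of_pos (by positivity)).trans (le_of_eq ?_)
    field_simp
  have h1 := key a b ha hb0
  have h2 := key b a hb0 ha
  have h3 : (a - b) / b ≤ 2 * |a - b| / a := by
    rw [div_le_div_iff₀ hb0 ha]
    have := le_abs_self (a - b)
    have := abs_nonneg (a - b)
    nlinarith
  have h4 : (b - a) / a ≤ 2 * |a - b| / a := by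
    gcongr
    have := neg_abs_le (a - b)
    have := abs_nonneg (a - b)
    linarith
  rw [abs_le]; constructor <;> linarith

variable {μ c}

theorem log_nrm {a : W → ℝ} (ha : ∀ w, 0 < a w) :
    Real.log (nrm μ a) = ∑ w, μ w * Real.log (a w) := by
  rw [nrm, Real.log_prod fun w _ => (pow_pos (ha w) _).ne']
  simp

theorem abs_exp_sub_le (p q : ℝ) : |Real.exp p - Real.exp q| ≤ |p - q| *
    max (Real.exp p) (Real.exp q) := by
  have key : ∀ p q : ℝ, q ≤ p → |Real.exp p - Real.exp q| ≤ |p - q| *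
    max (Real.exp p) (Real.exp q) := by
    intro p q h
    rw [abs_of_nonneg (by simpa using h), abs_of_nonneg (by linarith),
      max_eq_left (by simpa using h)]
    have h1 := Real.add_one_le_exp (q - p)
    have h2 : Real.exp q = Real.exp p * Real.exp (q - p) := by rw [← Real.exp_add]; ring_nf
    have := Real.exp_pos p
    rw [h2]; nlinarith
  rcases le_total q p with h | h
  · exact key p q h
  · rw [abs_sub_comm, abs_sub_comm p, max_comm]; exact key q p h

theorem nrm_nonneg {a : W → ℝ} (ha : ∀ w, 0 ≤ a w) : 0 ≤ nrm μ a :=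
  Finset.prod_nonneg fun w _ => pow_nonneg (ha w) _

theorem Gam_info (hn : 0 < ∑ w, μ w) (hμ : ∀ w, 0 < μ w) {A : ℝ}
    (hA : ∀ a : W → ℝ, (∀ w, 0 < a w) → (∀ i, |tt μ c i a| ≤ 1) → ∀ w, |lg μ a w| ≤ A)
    {a : W → ℝ} (ha : ∀ w, 0 ≤ a w) (h : Gam μ c a ≠ 0) :
    (∀ w, 0 < a w) ∧ ∃ r, 0 < r ∧ r ≤ 1 ∧ nrm μ a ≤ r ∧ (∀ w, r ≤ Real.exp A * a w) ∧
      ∀ w, a w ≤ Real.exp A * r := by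
  have h1 : phi (nrm μ a) ≠ 0 := left_ne_zero_of_mul h
  have h2 : psi μ c a ≠ 0 := right_ne_zero_of_mul h
  have hN0 : nrm μ a ≠ 0 := fun h0 => h1 (by rw [h0, phi_zero])
  have hN1 : nrm μ a ≤ 1 := by
    by_contra! h0
    exact h1 (phi_of_one_le h0.le)
  have hpos : ∀ w, 0 < a w := by
    intro w
    refine lt_of_le_of_ne (ha w) fun h0 => hN0 ?_
    exact Finset.prod_eq_zero (Finset.mem_univ w) (by rw [← h0, zero_pow (hμ w).ne'])
  have ht : ∀ i, |tt μ c i a| ≤ 1 := by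
    intro i
    by_contra! h0
    exact h2 (Finset.prod_eq_zero (Finset.mem_univ i) (max_eq_left (by linarith)))
  have hl := hA a hpos ht
  have hNpos : 0 < nrm μ a := lt_of_le_of_ne (nrm_nonneg ha) (Ne.symm hN0)
  have hn1 : (1 : ℝ) ≤ ((∑ w, μ w : ℕ) : ℝ) := by exact_mod_cast hn
  have hninv : ((∑ w, μ w : ℕ) : ℝ)⁻¹ ≤ 1 := inv_le_one_of_one_le₀ hn1
  have hninv0 : 0 < ((∑ w, μ w : ℕ) : ℝ)⁻¹ := by positivity
  have hlogN : Real.log (nrm μ a) ≤ 0 := Real.log_nonpos hNpos.le hN1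
  refine ⟨hpos, Real.exp (Real.log (nrm μ a) * ((∑ w, μ w : ℕ) : ℝ)⁻¹), Real.exp_pos _, ?_, ?_,
    fun w => ?_, fun w => ?_⟩
  · rw [Real.exp_le_one_iff]; nlinarith
  · rw [← Real.log_le_iff_le_exp hNpos]; nlinarith
  · have := abs_le.mp (hl w)
    unfold lg at this
    conv_rhs => rw [← Real.exp_log (hpos w), ← Real.exp_add]
    gcongr; linarith
  · have := abs_le.mp (hl w)
    unfold lg at this
    conv_lhs => rw [← Real.exp_log (hpos w)]
    rw [← Real.exp_add]
    gcongr; linarith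

theorem Gam_lip (hn : 0 < ∑ w, μ w) (hμ : ∀ w, 0 < μ w) {A : ℝ}
    (hA : ∀ a : W → ℝ, (∀ w, 0 < a w) → (∀ i, |tt μ c i a| ≤ 1) → ∀ w, |lg μ a w| ≤ A) :
    ∃ L, 0 ≤ L ∧ ∀ a b : W → ℝ, (∀ w, 0 ≤ a w) → (∀ w, 0 ≤ b w) → ∀ D, (∀ w, |a w - b w| ≤ D) →
      |Gam μ c a - Gam μ c b| ≤ L * D := by
  set n : ℕ := ∑ w, μ w with hndef
  set E := Real.exp A with hE
  have hE0 : 0 < E := Real.exp_pos _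
  set C1 : ℝ := ∑ i, ∑ w, |c i w| * 2 with hC1
  have hC10 : 0 ≤ C1 := Finset.sum_nonneg fun _ _ => Finset.sum_nonneg fun _ _ => by positivity
  -- bound when `Gam a ≠ 0`
  have hGa : ∀ a : W → ℝ, (∀ w, 0 ≤ a w) → ∀ w, |Gam μ c a| ≤ E * a w := by
    intro a ha w
    by_cases h : Gam μ c a = 0
    · rw [h, abs_zero]; exact mul_nonneg hE0.le (ha w)
    obtain ⟨_, r, _, _, h3, h4, _⟩ := Gam_info hn hμ hA ha h
    refine le_trans ?_ (h3.trans (h4 w))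
    rw [Gam, abs_mul, abs_of_nonneg (phi_nonneg (nrm_nonneg ha)), abs_of_nonneg (psi_nonneg _ _ _)]
    exact (mul_le_of_le_one_right (phi_nonneg (nrm_nonneg ha)) (psi_le_one _ _ _)).trans
      (phi_le (nrm_nonneg ha))
  set L : ℝ := 5 * E + (Fintype.card ι * C1 * (2 * E) + 2 ^ n * (n * (2 * E))) with hL
  have hmain : ∀ a b : W → ℝ, (∀ w, 0 ≤ a w) → (∀ w, 0 ≤ b w) → ∀ D, (∀ w, |a w - b w| ≤ D) →
      Gam μ c a ≠ 0 → |Gam μ c a - Gam μ c b| ≤ L * D := by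
    intro a b ha hb D hD hne
    obtain ⟨hapos, r, hr0, hr1, hNr, hra, _⟩ := Gam_info hn hμ hA ha hne
    have hW : Nonempty W := by
      by_contra h0
      rw [not_nonempty_iff] at h0
      simp [hndef] at hn
    have hD0 : 0 ≤ D := (abs_nonneg _).trans (hD (Classical.arbitrary W))
    by_cases hcase : ∃ w, a w / 2 < |a w - b w|
    · obtain ⟨w, hw⟩ := hcase
      have h1 := hGa a ha w
      have h2 := hGa b hb w
      have h3 := hD w
      have h4 : b w ≤ 3 * D := by
        have := neg_abs_le (a w - b w); linarith
      have h5 : |Gam μ c a - Gam μ c b| ≤ 5 * E * D := by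
        refine (abs_sub _ _).trans ?_
        nlinarith
      refine h5.trans ?_
      gcongr
      rw [hL]
      have : 0 ≤ (Fintype.card ι * C1 * (2 * E) + 2 ^ n * (n * (2 * E))) := by positivity
      linarith
    · push Not at hcase
      have hbpos : ∀ w, 0 < b w := fun w => by
        have := (abs_le.mp (hcase w)).2
        have := hapos w
        linarith
      set η := 2 * E * D / r with hη
      have hη0 : 0 ≤ η := by positivity
      have hlog : ∀ w, |Real.log (a w) - Real.log (b w)| ≤ η := by
        intro w
        refine (abs_log_sub_le (hapos w) (hcase w)).trans ?_
        rw [hη, div_le_div_iff₀ (hapos w) hr0]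
        have := hra w
        have h5 := mul_le_mul (hD w) this hr0.le hD0
        linarith
      have hlogN : |Real.log (nrm μ a) - Real.log (nrm μ b)| ≤ n * η := by
        rw [log_nrm hapos, log_nrm hbpos, ← Finset.sum_sub_distrib]
        refine (Finset.abs_sum_le_sum_abs _ _).trans ?_
        rw [hndef, Nat.cast_sum, Finset.sum_mul]
        refine Finset.sum_le_sum fun w _ => ?_
        rw [← mul_sub, abs_mul, Nat.abs_cast]
        gcongr
        exact hlog w
      have hn0 : (0 : ℝ) < n := by exact_mod_cast hn
      have hlg : ∀ w, |lg μ a w - lg μ b w| ≤ 2 * η := by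
        intro w
        have e : lg μ a w - lg μ b w = (Real.log (a w) - Real.log (b w)) -
          (Real.log (nrm μ a) - Real.log (nrm μ b)) * (n : ℝ)⁻¹ := by unfold lg; ring
        rw [e]
        refine (abs_sub _ _).trans ?_
        rw [abs_mul, abs_of_pos (inv_pos.mpr hn0)]
        have h6 : |Real.log (nrm μ a) - Real.log (nrm μ b)| * (n : ℝ)⁻¹ ≤ n * η * (n : ℝ)⁻¹ := by
          gcongr
        have h7 : n * η * (n : ℝ)⁻¹ = η := by field_simp
        linarith [hlog w]
      have htt : ∀ i, |tt μ c i a - tt μ c i b| ≤ C1 * η := by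
        intro i
        unfold tt
        rw [← Finset.sum_sub_distrib]
        refine (Finset.abs_sum_le_sum_abs _ _).trans ?_
        have h8 : ∑ w, |c i w| * 2 ≤ C1 :=
          Finset.single_le_sum (f := fun i => ∑ w, |c i w| * 2)
            (fun _ _ => Finset.sum_nonneg fun _ _ => by positivity) (Finset.mem_univ i)
        refine le_trans ?_ (mul_le_mul_of_nonneg_right h8 hη0)
        rw [Finset.sum_mul]
        refine Finset.sum_le_sum fun w _ => ?_
        rw [← mul_sub, abs_mul, mul_assoc]
        gcongr
        exact hlg w
      have hpsi : |psi μ c a - psi μ c b| ≤ Fintype.card ι * (C1 * η) := by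
        unfold psi
        have hle : ∀ (a : W → ℝ) (i : ι), |max 0 (1 - |tt μ c i a|)| ≤ 1 := fun a i => by
          rw [abs_of_nonneg (le_max_left _ _)]
          exact max_le (by norm_num) (by linarith [abs_nonneg (tt μ c i a)])
        refine abs_prod_sub_prod_le _ _ (hle a) (hle b) fun i => ?_
        refine le_trans ?_ (htt i)
        rw [max_comm 0, max_comm 0]
        refine (abs_max_sub_max_le_abs _ _ _).trans ?_
        have e3 : 1 - |tt μ c i a| - (1 - |tt μ c i b|) = |tt μ c i b| - |tt μ c i a| := by ring
        rw [e3, abs_sub_comm (tt μ c i a)]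
        exact abs_abs_sub_abs_le _ _
      have hNa : 0 < nrm μ a := Finset.prod_pos fun w _ => pow_pos (hapos w) _
      have hNb : 0 < nrm μ b := Finset.prod_pos fun w _ => pow_pos (hbpos w) _
      have hNab : nrm μ b ≤ 2 ^ n * nrm μ a := by
        rw [nrm, nrm, hndef, ← Finset.prod_pow_eq_pow_sum, ← Finset.prod_mul_distrib]
        refine Finset.prod_le_prod (fun w _ => pow_nonneg (hb w) _) fun w _ => ?_
        rw [← mul_pow]
        refine pow_le_pow_left₀ (hb w) ?_ _
        have := (abs_le.mp (hcase w)).1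
        have := hapos w
        linarith
      have hNdiff : |nrm μ a - nrm μ b| ≤ (n * η) * (2 ^ n * nrm μ a) := by
        have := abs_exp_sub_le (Real.log (nrm μ a)) (Real.log (nrm μ b))
        rw [Real.exp_log hNa, Real.exp_log hNb] at this
        refine this.trans ?_
        gcongr
        refine max_le ?_ hNab
        exact le_mul_of_one_le_left hNa.le (one_le_pow₀ (by norm_num))
      have hNη : nrm μ a * η ≤ 2 * E * D := by
        calc nrm μ a * η ≤ r * η := by gcongr
          _ = 2 * E * D := by rw [hη]; field_simp
      have e : Gam μ c a - Gam μ c b = phi (nrm μ a) * (psi μ c a - psi μ c b) +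
        (phi (nrm μ a) - phi (nrm μ b)) * psi μ c b := by unfold Gam; ring
      have h9 : |phi (nrm μ a) * (psi μ c a - psi μ c b)| ≤
          nrm μ a * (Fintype.card ι * (C1 * η)) := by
        rw [abs_mul, abs_of_nonneg (phi_nonneg hNa.le)]
        exact mul_le_mul (phi_le hNa.le) hpsi (abs_nonneg _) hNa.le
      have h10 : |(phi (nrm μ a) - phi (nrm μ b)) * psi μ c b| ≤
          (n * η) * (2 ^ n * nrm μ a) := by
        rw [abs_mul, abs_of_nonneg (psi_nonneg _ _ b)]
        exact (mul_le_of_le_one_right (abs_nonneg _) (psi_le_one _ _ b)).trans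
          ((phi_lip hNa.le hNb.le).trans hNdiff)
      rw [e]
      refine (abs_add_le _ _).trans ((add_le_add h9 h10).trans ?_)
      have e2 : nrm μ a * (Fintype.card ι * (C1 * η)) + (n * η) * (2 ^ n * nrm μ a) =
        (Fintype.card ι * C1 + n * 2 ^ n) * (nrm μ a * η) := by ring
      rw [e2]
      calc _ ≤ (Fintype.card ι * C1 + n * 2 ^ n) * (2 * E * D) := by gcongr
        _ ≤ _ := by
          rw [hL]
          have : 0 ≤ 5 * E * D := by positivity
          nlinarith
  have hL0 : 0 ≤ L := by positivity
  refine ⟨L, hL0, fun a b ha hb D hD => ?_⟩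
  by_cases h : Gam μ c a = 0
  · by_cases h' : Gam μ c b = 0
    · rw [h, h', sub_zero, abs_zero]
      by_cases hW : Nonempty W
      · exact mul_nonneg hL0 ((abs_nonneg _).trans (hD (Classical.arbitrary W)))
      · rw [not_nonempty_iff] at hW
        simp [hndef] at hn
    · rw [abs_sub_comm]
      exact hmain b a hb ha D (fun w => by rw [abs_sub_comm]; exact hD w) h'
  · exact hmain a b ha hb D hD h

end Gam

end CubicZeta
end Part3

section Part4
namespace CubicZeta

section Mixed

open NumberField NumberField.mixedEmbedding NumberField.Units NumberField.InfinitePlace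
  NumberField.Units.dirichletUnitTheorem Module
open scoped Classical

variable (K : Type*) [Field K] [NumberField K]

noncomputable def ubas : Basis (Fin (rank K)) ℝ (logSpace K) :=
  (basisUnitLattice K).ofZLatticeBasis ℝ _

noncomputable def cK (i : Fin (rank K)) (w : InfinitePlace K) : ℝ :=
  if h : w ≠ w₀ then (ubas K).repr (Pi.single ⟨w, h⟩ 1) i * mult w else 0

theorem sum_ne_w0 (f : InfinitePlace K → ℝ) :
    ∑ w, f w = f w₀ + ∑ w : {w : InfinitePlace K // w ≠ w₀}, f w.1 := by
  rw [← Finset.add_sum_erase _ _ (Finset.mem_univ w₀)]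
  congr 1
  exact Finset.sum_subtype _ (by simp) f

theorem tt_eq (i : Fin (rank K)) (a : InfinitePlace K → ℝ) :
    tt mult (cK K) i a =
      (ubas K).repr (fun w : {w : InfinitePlace K // w ≠ w₀} => mult w.1 * lg mult a w.1) i := by
  set v : logSpace K := (fun w : {w : InfinitePlace K // w ≠ w₀} => mult w.1 * lg mult a w.1) with hv
  have h1 : v = ∑ w, v w • (Pi.single w (1 : ℝ) : logSpace K) := by
    ext w
    simp [Finset.sum_apply, Pi.single_apply]
  have h2 : (ubas K).repr v i = ∑ w, v w * (ubas K).repr (Pi.single w (1 : ℝ)) i := by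
    conv_lhs => rw [h1]
    simp
  rw [h2, tt, sum_ne_w0]
  have h3 : cK K i w₀ = 0 := by simp [cK]
  rw [h3, zero_mul, zero_add]
  refine Finset.sum_congr rfl fun w _ => ?_
  rw [cK, dif_pos w.2, hv]
  ring

theorem sum_mult_pos : 0 < ∑ w : InfinitePlace K, mult w := by
  rw [sum_mult_eq]; exact finrank_pos

theorem lg_bound : ∃ A : ℝ, ∀ a : InfinitePlace K → ℝ, (∀ w, 0 < a w) →
    (∀ i, |tt mult (cK K) i a| ≤ 1) → ∀ w, |lg mult a w| ≤ A := by
  set A0 : ℝ := ∑ i, ∑ w, |ubas K i w| with hA0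
  have hA00 : 0 ≤ A0 := Finset.sum_nonneg fun _ _ => Finset.sum_nonneg fun _ _ => abs_nonneg _
  refine ⟨A0, fun a ha ht => ?_⟩
  set v : logSpace K := (fun w : {w : InfinitePlace K // w ≠ w₀} => mult w.1 * lg mult a w.1) with hv
  have hvw : ∀ w, |v w| ≤ ∑ i, |ubas K i w| := by
    intro w
    have h1 : v w = ∑ i, tt mult (cK K) i a * ubas K i w := by
      conv_lhs => rw [← (ubas K).sum_repr v]
      simp [Finset.sum_apply, tt_eq, hv]
    rw [h1]
    refine (Finset.abs_sum_le_sum_abs _ _).trans (Finset.sum_le_sum fun i _ => ?_)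
    rw [abs_mul]
    exact mul_le_of_le_one_left (abs_nonneg _) (ht i)
  have hm : ∀ w : InfinitePlace K, |lg mult a w| ≤ |mult w * lg mult a w| := by
    intro w
    rw [abs_mul, Nat.abs_cast]
    have : (1 : ℝ) ≤ mult w := by exact_mod_cast mult_pos
    exact le_mul_of_one_le_left (abs_nonneg _) this
  have hsum : ∑ w : {w : InfinitePlace K // w ≠ w₀}, |v w| ≤ A0 := by
    rw [hA0, Finset.sum_comm]
    exact Finset.sum_le_sum fun w _ => hvw w
  intro w
  refine (hm w).trans ?_
  by_cases hw : w = w₀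
  · have h0 : ∑ w : InfinitePlace K, mult w * lg mult a w = 0 := by
      simp only [lg, mul_sub, Finset.sum_sub_distrib]
      rw [← log_nrm ha, ← Finset.sum_mul, ← Nat.cast_sum]
      have : ((∑ w : InfinitePlace K, mult w : ℕ) : ℝ) ≠ 0 := by
        exact_mod_cast (sum_mult_pos K).ne'
      field_simp
      ring
    rw [sum_ne_w0] at h0
    rw [hw, eq_neg_of_add_eq_zero_left h0, abs_neg]
    exact (Finset.abs_sum_le_sum_abs _ _).trans hsum
  · refine le_trans ?_ hsum
    exact Finset.single_le_sum (f := fun w => |v w|) (fun _ _ => abs_nonneg _)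
      (Finset.mem_univ (⟨w, hw⟩ : {w : InfinitePlace K // w ≠ w₀}))

noncomputable def nap (x : mixedSpace K) (w : InfinitePlace K) : ℝ := normAtPlace w x

theorem nrm_nap (x : mixedSpace K) : nrm mult (nap K x) = mixedEmbedding.norm x := rfl

noncomputable def psiK (x : mixedSpace K) : ℝ := psi mult (cK K) (nap K x)

noncomputable def GK (x : mixedSpace K) : ℝ := phi (mixedEmbedding.norm x) * psiK K x

theorem GK_eq (x : mixedSpace K) : GK K x = Gam mult (cK K) (nap K x) := rfl

theorem tt_nap (i : Fin (rank K)) (x : mixedSpace K) :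
    tt mult (cK K) i (nap K x) = (ubas K).repr (logMap x) i := by
  rw [tt_eq]
  congr 2
  ext w
  rw [lg, nrm_nap, sum_mult_eq, logMap_apply]
  rfl

theorem normAtPlace_le_norm (w : InfinitePlace K) (x : mixedSpace K) : normAtPlace w x ≤ ‖x‖ := by
  rw [norm_eq_sup'_normAtPlace]
  exact Finset.le_sup' (fun w => normAtPlace w x) (Finset.mem_univ w)

theorem GK_lip : ∃ L, 0 ≤ L ∧ ∀ x y : mixedSpace K, |GK K x - GK K y| ≤ L * ‖x - y‖ := by
  obtain ⟨A, hA⟩ := lg_bound K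
  obtain ⟨L, hL0, hL⟩ := Gam_lip (sum_mult_pos K) (fun w => mult_pos) hA
  refine ⟨L, hL0, fun x y => hL _ _ (fun w => normAtPlace_nonneg _ _)
    (fun w => normAtPlace_nonneg _ _) _ fun w => ?_⟩
  refine le_trans ?_ (normAtPlace_le_norm K w (x - y))
  have h1 := normAtPlace_add_le w (x - y) y
  have h2 := normAtPlace_add_le w (-(x - y)) x
  rw [normAtPlace_neg] at h2
  rw [sub_add_cancel] at h1
  rw [neg_sub, sub_add_cancel] at h2
  rw [abs_le]; constructor <;> linarith

theorem GK_supp : ∃ R, ∀ x : mixedSpace K, R < ‖x‖ → GK K x = 0 := by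
  obtain ⟨A, hA⟩ := lg_bound K
  refine ⟨Real.exp A, fun x hx => ?_⟩
  by_contra h
  obtain ⟨_, r, hr0, hr1, _, _, h5⟩ := Gam_info (sum_mult_pos K) (fun w => mult_pos) hA
    (a := nap K x) (fun w => normAtPlace_nonneg _ _) h
  rw [norm_eq_sup'_normAtPlace] at hx
  obtain ⟨w, _, hw⟩ := (Finset.lt_sup'_iff _).mp hx
  have := h5 w
  unfold nap at this
  have := Real.exp_pos A
  nlinarith

theorem GK_nonneg (x : mixedSpace K) : 0 ≤ GK K x :=
  mul_nonneg (phi_nonneg (mixedEmbedding.norm_nonneg x)) (psi_nonneg _ _ _)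

theorem psiK_eq (x : mixedSpace K) :
    psiK K x = ∏ i, max 0 (1 - |(ubas K).repr (logMap x) i|) := by
  simp only [psiK, psi, tt_nap]

theorem psiK_smul (x : mixedSpace K) (hx : mixedEmbedding.norm x ≠ 0) {h : ℝ} (hh : h ≠ 0) :
    psiK K (h • x) = psiK K x := by
  rw [psiK_eq, psiK_eq, logMap_real_smul hx hh]

/-- partition of unity on the line -/
theorem hat_sum (t : ℝ) : ∑ m ∈ ({-⌊t⌋, -⌊t⌋ - 1} : Finset ℤ), max 0 (1 - |t + m|) = 1 := by
  rw [Finset.sum_pair (by omega)]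
  have h0 := Int.fract_nonneg t
  have h1 := (Int.fract_lt_one t).le
  have e : t = ⌊t⌋ + Int.fract t := (Int.floor_add_fract t).symm
  have e1 : t + ((-⌊t⌋ : ℤ) : ℝ) = Int.fract t := by push_cast; linarith
  have e2 : t + ((-⌊t⌋ - 1 : ℤ) : ℝ) = Int.fract t - 1 := by push_cast; linarith
  rw [e1, e2, abs_of_nonneg h0, abs_of_nonpos (by linarith), max_eq_right (by linarith),
    max_eq_right (by linarith)]
  ring

theorem hat_zero (t : ℝ) (m : ℤ) (hm : m ∉ ({-⌊t⌋, -⌊t⌋ - 1} : Finset ℤ)) :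
    max 0 (1 - |t + m|) = 0 := by
  simp only [Finset.mem_insert, Finset.mem_singleton, not_or] at hm
  apply max_eq_left
  have h0 := Int.fract_nonneg t
  have h1 := (Int.fract_lt_one t).le
  have e : t = ⌊t⌋ + Int.fract t := (Int.floor_add_fract t).symm
  rcases lt_or_gt_of_ne hm.1 with h | h
  · have h2 : m ≤ -⌊t⌋ - 2 := by omega
    have h3 : (m : ℝ) ≤ -⌊t⌋ - 2 := by exact_mod_cast h2
    have := neg_abs_le (t + m)
    linarith
  · have h2 : -⌊t⌋ + 1 ≤ m := by omega
    have h3 : (-⌊t⌋ + 1 : ℝ) ≤ m := by exact_mod_cast h2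
    have := le_abs_self (t + m)
    linarith

noncomputable def unitEquiv : torsion K × (Fin (rank K) → ℤ) ≃ (𝓞 K)ˣ :=
  Equiv.ofBijective (fun p => p.1 * ∏ i, (fundSystem K i) ^ (p.2 i)) <| by
    refine Function.bijective_iff_existsUnique _ |>.mpr fun u => ?_
    obtain ⟨p, hp, hp'⟩ := exist_unique_eq_mul_prod K u
    exact ⟨p, hp.symm, fun q hq => hp' q hq.symm⟩

theorem unitEquiv_apply (p : torsion K × (Fin (rank K) → ℤ)) :
    unitEquiv K p = p.1 * ∏ i, (fundSystem K i) ^ (p.2 i) := rfl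

theorem psiK_unit (x : mixedSpace K) (hx : mixedEmbedding.norm x ≠ 0)
    (p : torsion K × (Fin (rank K) → ℤ)) :
    psiK K (unitEquiv K p • x) = ∏ i, max 0 (1 - |(ubas K).repr (logMap x) i + p.2 i|) := by
  rw [psiK_eq, logMap_unit_smul _ hx]
  have h1 : logEmbedding K (Additive.ofMul (unitEquiv K p)) =
      ∑ i, (p.2 i : ℝ) • ubas K i := by
    rw [unitEquiv_apply, ofMul_mul, map_add, ofMul_prod, map_sum,
      logEmbedding_eq_zero_iff.mpr p.1.2, zero_add]
    refine Finset.sum_congr rfl fun i _ => ?_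
    rw [ofMul_zpow, map_zsmul, logEmbedding_fundSystem, ubas, Basis.ofZLatticeBasis_apply,
      Int.cast_smul_eq_zsmul]
  refine Finset.prod_congr rfl fun i _ => ?_
  rw [h1, map_add, Finsupp.add_apply, Basis.repr_sum_self, add_comm]

theorem sum_units (x : mixedSpace K) (hx : mixedEmbedding.norm x ≠ 0) :
    ∑' u : (𝓞 K)ˣ, ENNReal.ofReal (psiK K (u • x)) = torsionOrder K := by
  rw [← (unitEquiv K).tsum_eq]
  simp_rw [psiK_unit K x hx]
  rw [ENNReal.tsum_prod' (f := fun c : torsion K × (Fin (rank K) → ℤ) =>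
    ENNReal.ofReal (∏ i, max 0 (1 - |(ubas K).repr (logMap x) i + c.2 i|)))]
  have h1 : ∑' m : Fin (rank K) → ℤ, ENNReal.ofReal
      (∏ i, max 0 (1 - |(ubas K).repr (logMap x) i + m i|)) = 1 := by
    rw [tsum_eq_sum (s := Fintype.piFinset fun i =>
      ({-⌊(ubas K).repr (logMap x) i⌋, -⌊(ubas K).repr (logMap x) i⌋ - 1} : Finset ℤ))]
    · rw [← ENNReal.ofReal_sum_of_nonneg fun _ _ => Finset.prod_nonneg fun _ _ => le_max_left _ _]
      rw [← Finset.prod_univ_sum (fun i =>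
        ({-⌊(ubas K).repr (logMap x) i⌋, -⌊(ubas K).repr (logMap x) i⌋ - 1} : Finset ℤ))
        (fun i m => max 0 (1 - |(ubas K).repr (logMap x) i + m|))]
      simp only [hat_sum]
      simp
    · intro m hm
      rw [Fintype.mem_piFinset] at hm
      push Not at hm
      obtain ⟨i, hi⟩ := hm
      rw [Finset.prod_eq_zero (Finset.mem_univ i) (hat_zero _ _ hi), ENNReal.ofReal_zero]
  simp only [h1]
  rw [ENNReal.tsum_const, mul_one, torsionOrder, ENat.card_eq_coe_natCard]
  simp

end Mixed
end CubicZeta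
end Part4

section Part5
namespace CubicZeta

section Mixed2

open NumberField NumberField.mixedEmbedding NumberField.Units NumberField.InfinitePlace
  NumberField.Units.dirichletUnitTheorem Module Ideal
open scoped Classical nonZeroDivisors

variable (K : Type*) [Field K] [NumberField K]

theorem GK_zero : GK K 0 = 0 := by
  have : mixedEmbedding.norm (0 : mixedSpace K) = 0 := map_zero _
  rw [GK, this, phi_zero, zero_mul]

theorem norm_emb (α : 𝓞 K) : mixedEmbedding.norm (mixedEmbedding K (α : K)) =
    (absNorm (span {α}) : ℝ) := by
  rw [norm_eq_norm, absNorm_span_singleton, ← Algebra.coe_norm_int]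
  simp [Nat.cast_natAbs]

noncomputable def latEquiv (J : (Ideal (𝓞 K))⁰) : (J : Ideal (𝓞 K)) ≃
    Submodule.span ℤ (Set.range (fractionalIdealLatticeBasis K (FractionalIdeal.mk0 K J))) :=
  Equiv.ofBijective (fun α => ⟨mixedEmbedding K ((α : 𝓞 K) : K), by
      rw [mem_span_fractionalIdealLatticeBasis]
      exact ⟨_, by simp, rfl⟩⟩) <| by
    constructor
    · intro α β h
      have := mixedEmbedding_injective K (Subtype.ext_iff.mp h)
      exact Subtype.ext (RingOfIntegers.ext this)
    · rintro ⟨x, hx⟩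
      rw [mem_span_fractionalIdealLatticeBasis] at hx
      obtain ⟨y, hy, rfl⟩ := hx
      have hy' : y ∈ ((J : Ideal (𝓞 K)) : FractionalIdeal (𝓞 K)⁰ K) := hy
      rw [FractionalIdeal.mem_coeIdeal] at hy'
      obtain ⟨α, hα, rfl⟩ := hy'
      exact ⟨⟨α, hα⟩, rfl⟩

theorem lattice_sum (J : (Ideal (𝓞 K))⁰) {h : ℝ} (hh : 0 < h) :
    ∑' l : Submodule.span ℤ (Set.range (fractionalIdealLatticeBasis K (FractionalIdeal.mk0 K J))),
      ENNReal.ofReal (GK K (h • (l : mixedSpace K))) =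
    torsionOrder K * ∑' I : {I : (Ideal (𝓞 K))⁰ // Submodule.IsPrincipal ((J : Ideal (𝓞 K)) * (I : Ideal (𝓞 K)))},
      ENNReal.ofReal (phi (h ^ finrank ℚ K * absNorm (J : Ideal (𝓞 K)) * absNorm (I.1 : Ideal (𝓞 K)))) := by
  refine ((latEquiv K J).tsum_eq (fun l => ENNReal.ofReal (GK K (h • (l : mixedSpace K))))).symm.trans
    ?_
  have hex : ∀ I : {I : (Ideal (𝓞 K))⁰ //
      Submodule.IsPrincipal ((J : Ideal (𝓞 K)) * (I : Ideal (𝓞 K)))},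
      ∃ α : 𝓞 K, span {α} = (J : Ideal (𝓞 K)) * (I.1 : Ideal (𝓞 K)) := fun I => by
    obtain ⟨α, hα⟩ := I.2.principal
    exact ⟨α, hα.symm⟩
  choose gen hspan using hex
  have hJ0 : (J : Ideal (𝓞 K)) ≠ 0 := nonZeroDivisors.coe_ne_zero J
  have hgen0 : ∀ I, gen I ≠ 0 := fun I h0 => by
    have := hspan I
    rw [h0, span_singleton_zero, eq_comm] at this
    exact mul_ne_zero hJ0 (nonZeroDivisors.coe_ne_zero I.1) this
  have hmem : ∀ I, gen I ∈ (J : Ideal (𝓞 K)) := fun I => by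
    have h1 : span {gen I} ≤ (J : Ideal (𝓞 K)) := by
      rw [hspan I]
      exact Ideal.mul_le_left (I := (J : Ideal (𝓞 K))) (J := (I.1 : Ideal (𝓞 K)))
    exact h1 (mem_span_singleton_self (gen I))
  let g : {I : (Ideal (𝓞 K))⁰ // Submodule.IsPrincipal ((J : Ideal (𝓞 K)) * (I : Ideal (𝓞 K)))} × (𝓞 K)ˣ →
    (J : Ideal (𝓞 K)) := fun p => ⟨(p.2 : 𝓞 K) * gen p.1, Ideal.mul_mem_left _ _ (hmem p.1)⟩
  have hginj : Function.Injective g := by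
    rintro ⟨I, u⟩ ⟨I', u'⟩ h0
    have h1 : (u : 𝓞 K) * gen I = u' * gen I' := Subtype.ext_iff.mp h0
    have h2 : span {gen I} = span {gen I'} := by
      have e1 : span {(u : 𝓞 K) * gen I} = span {gen I} :=
        span_singleton_mul_left_unit u.isUnit _
      have e2 : span {(u' : 𝓞 K) * gen I'} = span {gen I'} :=
        span_singleton_mul_left_unit u'.isUnit _
      rw [← e1, ← e2, h1]
    rw [hspan, hspan] at h2
    have h3 := mul_left_cancel₀ hJ0 h2
    have h4 : I = I' := Subtype.ext (Subtype.ext h3)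
    subst h4
    have h5 := mul_right_cancel₀ (hgen0 I) h1
    rw [Units.ext h5]
  have hgsupp : Function.support (fun α : (J : Ideal (𝓞 K)) =>
      ENNReal.ofReal (GK K (h • ((latEquiv K J α : _) : mixedSpace K)))) ⊆ Set.range g := by
    intro α hα
    have hα0 : (α : 𝓞 K) ≠ 0 := fun h0 => by
      apply hα
      have : ((latEquiv K J α : _) : mixedSpace K) = mixedEmbedding K ((α : 𝓞 K) : K) := rfl
      simp only [this, h0]
      simp [GK_zero]
    obtain ⟨I, hI⟩ : (J : Ideal (𝓞 K)) ∣ span {(α : 𝓞 K)} := by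
      rw [Ideal.dvd_span_singleton]; exact α.2
    have hI0 : I ≠ 0 := fun h0 => by
      rw [h0, mul_zero] at hI
      exact hα0 (by simpa using hI)
    have hp : ((J : Ideal (𝓞 K)) * I).IsPrincipal := by rw [← hI]; exact ⟨_, rfl⟩
    let I' : {I : (Ideal (𝓞 K))⁰ //
      Submodule.IsPrincipal ((J : Ideal (𝓞 K)) * (I : Ideal (𝓞 K)))} :=
      ⟨⟨I, mem_nonZeroDivisors_of_ne_zero hI0⟩, hp⟩
    have h1 : span {gen I'} = span {(α : 𝓞 K)} := by rw [hspan, hI]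
    obtain ⟨u, hu⟩ := Ideal.span_singleton_eq_span_singleton.mp h1
    exact ⟨(I', u), Subtype.ext ((mul_comm _ _).trans hu)⟩
  rw [← hginj.tsum_eq hgsupp, ENNReal.tsum_prod', ← ENNReal.tsum_mul_left]
  refine tsum_congr fun I => ?_
  set x := mixedEmbedding K ((gen I : 𝓞 K) : K) with hx
  have hNx : mixedEmbedding.norm x = absNorm (J : Ideal (𝓞 K)) * absNorm (I.1 : Ideal (𝓞 K)) := by
    rw [hx, norm_emb, hspan, map_mul]; push_cast; rfl
  have hNx0 : mixedEmbedding.norm x ≠ 0 := by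
    rw [hNx, ← Nat.cast_mul, ← map_mul, ← hspan]
    simpa [absNorm_eq_zero_iff] using hgen0 I
  have hterm : ∀ u : (𝓞 K)ˣ, GK K (h • ((latEquiv K J (g (I, u)) : _) : mixedSpace K)) =
      phi (h ^ finrank ℚ K * absNorm (J : Ideal (𝓞 K)) * absNorm (I.1 : Ideal (𝓞 K))) *
        psiK K (u • x) := by
    intro u
    have e1 : ((latEquiv K J (g (I, u)) : _) : mixedSpace K) = u • x := by
      rw [unitSMul_smul, hx, ← map_mul]
      rfl
    rw [e1, GK, psiK_smul _ _ _ hh.ne', mixedEmbedding.norm_smul, norm_unit_smul, hNx,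
      abs_of_pos hh, mul_assoc]
    rwa [norm_unit_smul]
  simp only [hterm]
  simp_rw [ENNReal.ofReal_mul (phi_nonneg (v := h ^ finrank ℚ K * absNorm (J : Ideal (𝓞 K)) *
    absNorm (I.1 : Ideal (𝓞 K))) (by positivity))]
  rw [ENNReal.tsum_mul_left, sum_units K x hNx0, mul_comm]

end Mixed2
end CubicZeta
end Part5

section Part6
namespace CubicZeta

section Mixed3

open NumberField NumberField.mixedEmbedding NumberField.Units NumberField.InfinitePlace
  NumberField.Units.dirichletUnitTheorem Module Ideal
open scoped Classical nonZeroDivisors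

variable (K : Type*) [Field K] [NumberField K]

noncomputable def SJ (J : (Ideal (𝓞 K))⁰) (t : ℝ) : ENNReal :=
  ∑' I : {I : (Ideal (𝓞 K))⁰ // Submodule.IsPrincipal ((J : Ideal (𝓞 K)) * (I : Ideal (𝓞 K)))},
      ENNReal.ofReal (phi (t * absNorm (I.1 : Ideal (𝓞 K))))

theorem GK_summable (J : (Ideal (𝓞 K))⁰) {h : ℝ} (hh : 0 < h) :
    Summable fun l : Submodule.span ℤ (Set.range (fractionalIdealLatticeBasis K
      (FractionalIdeal.mk0 K J))) => GK K (h • (l : mixedSpace K)) := by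
  obtain ⟨R, hR⟩ := GK_supp K
  have hfin := ZSpan.setFinite_inter (fractionalIdealLatticeBasis K (FractionalIdeal.mk0 K J))
    (Metric.isBounded_closedBall (x := (0 : mixedSpace K)) (r := R / h))
  refine summable_of_hasFiniteSupport ?_
  refine Set.Finite.subset (hfin.preimage (f := ((↑) : Submodule.span ℤ (Set.range
    (fractionalIdealLatticeBasis K (FractionalIdeal.mk0 K J))) → mixedSpace K))
    Subtype.val_injective.injOn) ?_
  intro l hl
  refine ⟨?_, l.2⟩
  rw [mem_closedBall_zero_iff, le_div_iff₀ hh]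
  by_contra! h0
  apply hl
  apply hR
  rw [_root_.norm_smul, Real.norm_of_nonneg hh.le]
  linarith

theorem SJ_bound (J : (Ideal (𝓞 K))⁰) : ∃ c C : ℝ, 0 ≤ C ∧ ∀ t : ℝ, 0 < t → t ≤ 1 →
    SJ K J t ≠ ⊤ ∧ |(SJ K J t).toReal - c / t| ≤ C * t ^ ((finrank ℚ K : ℝ)⁻¹ - 1) := by
  obtain ⟨L, hL0, hL⟩ := GK_lip K
  obtain ⟨R, hR⟩ := GK_supp K
  obtain ⟨c, C, hC⟩ := riemann_sum MeasureTheory.Measure.addHaar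
    (fractionalIdealLatticeBasis K (FractionalIdeal.mk0 K J)) (GK K) L hL0 hL R hR
  have hC0 : 0 ≤ C := by
    have := (abs_nonneg _).trans (hC 1 one_pos le_rfl)
    linarith
  set n := finrank ℚ K with hn
  have hn0 : n ≠ 0 := finrank_pos.ne'
  set NJ : ℝ := ((absNorm (J : Ideal (𝓞 K)) : ℕ) : ℝ) with hNJ
  have hNJ1 : 1 ≤ NJ := by
    rw [hNJ]; exact_mod_cast absNorm_pos_of_nonZeroDivisors J
  set w : ℝ := ((torsionOrder K : ℕ) : ℝ) with hw
  have hw0 : 0 < w := by rw [hw]; exact_mod_cast (torsionOrder_ne_zero K).bot_lt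
  refine ⟨c * NJ / w, C * NJ / w, by positivity, fun t ht ht1 => ?_⟩
  set h : ℝ := (t / NJ) ^ (n : ℝ)⁻¹ with hh
  have hh0 : 0 < h := by positivity
  have hhn : h ^ n * NJ = t := by
    rw [hh, Real.rpow_inv_natCast_pow (by positivity) hn0]; field_simp
  have hh1 : h ≤ t ^ (n : ℝ)⁻¹ := by
    refine Real.rpow_le_rpow (by positivity) (div_le_self ht.le hNJ1) (by positivity)
  have hh2 : h ≤ 1 := hh1.trans (Real.rpow_le_one ht.le ht1 (by positivity))
  have hs := lattice_sum K J hh0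
  rw [← ENNReal.ofReal_tsum_of_nonneg (fun _ => GK_nonneg K _) (GK_summable K J hh0)] at hs
  rw [← hn, ← hNJ, hhn] at hs
  change ENNReal.ofReal _ = _ * SJ K J t at hs
  have hfin : SJ K J t ≠ ⊤ := by
    intro h0
    rw [h0, ENNReal.mul_top (by exact_mod_cast torsionOrder_ne_zero K)] at hs
    exact ENNReal.ofReal_ne_top hs
  refine ⟨hfin, ?_⟩
  have hs2 := congrArg ENNReal.toReal hs
  rw [ENNReal.toReal_ofReal (tsum_nonneg fun _ => GK_nonneg K _), ENNReal.toReal_mul,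
    ENNReal.toReal_natCast] at hs2
  have hb := hC h hh0 hh2
  rw [mixedEmbedding.finrank, ← hn, hs2] at hb
  have hhn' : h ^ n = t / NJ := by rw [← hhn]; field_simp
  rw [hhn'] at hb
  have e : (SJ K J t).toReal - c * NJ / w / t = NJ / (w * t) *
    (t / NJ * (w * (SJ K J t).toReal) - c) := by
    field_simp
  rw [e, abs_mul, abs_of_pos (by positivity)]
  calc _ ≤ NJ / (w * t) * (C * t ^ (n : ℝ)⁻¹) := by gcongr; exact hb.trans (by gcongr)
    _ = _ := by
      rw [Real.rpow_sub ht, Real.rpow_one]; field_simp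

noncomputable def aK (k : ℕ) : ℝ := Nat.card {I : Ideal (𝓞 K) // absNorm I = k}

theorem sum_aK (f : ℕ → ENNReal) (hf : f 0 = 0) :
    ∑' k : ℕ, (Nat.card {I : Ideal (𝓞 K) // absNorm I = k} : ENNReal) * f k =
      ∑' I : (Ideal (𝓞 K))⁰, f (absNorm (I : Ideal (𝓞 K))) := by
  have h1 : ∑' I : (Ideal (𝓞 K))⁰, f (absNorm (I : Ideal (𝓞 K))) =
      ∑' I : Ideal (𝓞 K), f (absNorm I) := by
    refine Function.Injective.tsum_eq (g := ((↑) : (Ideal (𝓞 K))⁰ → Ideal (𝓞 K)))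
      (f := fun I => f (absNorm I)) Subtype.val_injective ?_
    intro I hI
    refine ⟨⟨I, mem_nonZeroDivisors_of_ne_zero fun h0 => hI ?_⟩, rfl⟩
    simp only [h0, map_zero, hf]
  rw [h1, ← (Equiv.sigmaFiberEquiv fun I : Ideal (𝓞 K) => absNorm I).tsum_eq, ENNReal.tsum_sigma']
  refine tsum_congr fun k => ?_
  have h2 : ∀ I : {I : Ideal (𝓞 K) // absNorm I = k},
    f (absNorm (Equiv.sigmaFiberEquiv (fun I : Ideal (𝓞 K) => absNorm I) ⟨k, I⟩)) = f k :=
    fun I => congrArg f I.2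
  simp only [h2]
  have : Finite {I : Ideal (𝓞 K) // absNorm I = k} := Ideal.finite_setOfPred_absNorm_eq k
  rw [ENNReal.tsum_const, ENat.card_eq_coe_natCard]
  simp

theorem theta_K : ∃ c C : ℝ, ∀ t : ℝ, 0 < t → t ≤ 1 →
    |theta (aK K) t - c / t| ≤ C * t ^ ((finrank ℚ K : ℝ)⁻¹ - 1) := by
  choose J hJ using fun D : ClassGroup (𝓞 K) => ClassGroup.mk0_surjective D⁻¹
  choose c C hC0 hC using fun D => SJ_bound K (J D)
  refine ⟨∑ D, c D, ∑ D, C D, fun t ht ht1 => ?_⟩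
  have key : ENNReal.ofReal (theta (aK K) t) = ∑ D, SJ K (J D) t := by
    have h1 : ENNReal.ofReal (theta (aK K) t) =
        ∑' k : ℕ, (Nat.card {I : Ideal (𝓞 K) // absNorm I = k} : ENNReal) *
          ENNReal.ofReal (phi (t * k)) := by
      rw [theta, ENNReal.ofReal_tsum_of_nonneg]
      · refine tsum_congr fun k => ?_
        rw [ENNReal.ofReal_mul (by unfold aK; positivity), aK, ENNReal.ofReal_natCast]
      · intro k
        exact mul_nonneg (by unfold aK; positivity) (phi_nonneg (by positivity))
      · refine summable_of_hasFiniteSupport ?_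
        refine Set.Finite.subset (Finset.finite_toSet (Finset.range (⌈t⁻¹⌉₊ + 1))) ?_
        intro k hk
        by_contra h0
        exact hk (theta_term_zero (aK K) ht le_rfl k h0)
    rw [h1, sum_aK K (fun k => ENNReal.ofReal (phi (t * k))) (by simp [phi_zero])]
    rw [← (Equiv.sigmaFiberEquiv fun I : (Ideal (𝓞 K))⁰ => ClassGroup.mk0 I).tsum_eq,
      ENNReal.tsum_sigma', tsum_fintype]
    refine Finset.sum_congr rfl fun D _ => ?_
    have hiff : ∀ I : (Ideal (𝓞 K))⁰, ClassGroup.mk0 I = D ↔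
        Submodule.IsPrincipal ((J D : Ideal (𝓞 K)) * (I : Ideal (𝓞 K))) := by
      intro I
      rw [← ClassGroup.mk0_eq_one_iff (mul_mem (J D).2 I.2)]
      have : (⟨(J D : Ideal (𝓞 K)) * (I : Ideal (𝓞 K)), mul_mem (J D).2 I.2⟩ : (Ideal (𝓞 K))⁰) =
        J D * I := rfl
      rw [this, map_mul, hJ, inv_mul_eq_one, eq_comm]
    rw [SJ, ← (Equiv.subtypeEquivRight hiff).tsum_eq]
    rfl
  have h2 : theta (aK K) t = ∑ D, (SJ K (J D) t).toReal := by
    rw [← ENNReal.toReal_sum fun D _ => (hC D t ht ht1).1, ← key, ENNReal.toReal_ofReal]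
    exact tsum_nonneg fun k => mul_nonneg (by unfold aK; positivity) (phi_nonneg (by positivity))
  rw [h2, Finset.sum_div, ← Finset.sum_sub_distrib, Finset.sum_mul]
  exact (Finset.abs_sum_le_sum_abs _ _).trans (Finset.sum_le_sum fun D _ => (hC D t ht ht1).2)

end Mixed3
end CubicZeta
end Part6

section Part7
namespace CubicZeta

section
open Filter Topology Asymptotics

theorem hasSum_fib {ι κ : Type*} (ν : ι → κ) (hfin : ∀ k, Finite {i // ν i = k}) (F : κ → ℂ)
    (z : ℂ) (h : HasSum (fun i => F (ν i)) z) :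
    HasSum (fun k => (Nat.card {i // ν i = k} : ℂ) * F k) z := by
  have h1 := (Equiv.sigmaFiberEquiv ν).hasSum_iff.mpr h
  refine h1.sigma fun k => ?_
  have := hfin k
  have := Fintype.ofFinite {i // ν i = k}
  have h2 : ∀ i : {i // ν i = k}, ((fun i => F (ν i)) ∘ (Equiv.sigmaFiberEquiv ν)) ⟨k, i⟩ = F k :=
    fun i => congrArg F i.2
  simp only [h2]
  have h3 := hasSum_fintype (fun i : {i // ν i = k} => F k)
  simpa [Nat.card_eq_fintype_card] using h3

theorem summable_fib {ι κ : Type*} (ν : ι → κ) (hfin : ∀ k, Finite {i // ν i = k}) (F : κ → ℝ)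
    (hF : ∀ k, 0 ≤ F k) (h : Summable (fun k => (Nat.card {i // ν i = k} : ℝ) * F k)) :
    Summable (fun i => F (ν i)) := by
  rw [← (Equiv.sigmaFiberEquiv ν).summable_iff]
  refine (summable_sigma_of_nonneg (fun x => hF (ν (Equiv.sigmaFiberEquiv ν x)))).mpr ?_
  have h2 : ∀ k, ∀ i : {i // ν i = k},
    F (ν ((Equiv.sigmaFiberEquiv ν) ⟨k, i⟩)) = F k :=
    fun k i => congrArg F i.2
  constructor
  · intro k
    have := hfin k
    exact Summable.of_finite
  · refine h.congr fun k => ?_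
    simp only [h2]
    simp
end

section
open NumberField Ideal Module Filter Topology Asymptotics

variable (K : Type*) [Field K] [NumberField K]

noncomputable def νK (I : {I : Ideal (𝓞 K) // I ≠ ⊥}) : ℕ+ :=
  ⟨absNorm (I : Ideal (𝓞 K)), absNorm_pos_iff_mem_nonZeroDivisors.mpr
    (mem_nonZeroDivisors_of_ne_zero I.2)⟩

theorem sum_aK_tendsto : Tendsto (fun n : ℕ => (∑ k ∈ Finset.Icc 1 n, aK K k) / n) atTop
    (𝓝 (dedekindZeta_residue K)) := by
  refine ((Ideal.tendsto_norm_le_div_atTop₀ K).comp tendsto_natCast_atTop_atTop).congr fun n ↦ ?_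
  simp only [Function.comp_apply, Nat.cast_le, ← Nat.cast_sum, aK]
  congr
  rw [← add_left_inj 1, ← card_norm_le_eq_card_norm_le_add_one,
    show Finset.Icc 1 n = Finset.Ioc 0 n from Finset.Icc_succ_left_eq_Ioc _ _,
    show 1 = Nat.card {I : Ideal (𝓞 K) // absNorm I = 0} by simp [Ideal.absNorm_eq_zero_iff],
    Finset.sum_Ioc_add_eq_sum_Icc (n.zero_le),
    ← Finset.card_preimage_eq_sum_card_image_eq (fun k _ ↦ finite_setOfPred_absNorm_eq k)]
  simp [Set.coe_eq_subtype]

theorem aK_summable (s : ℂ) (hs : 1 < s.re) : LSeriesSummable (fun k => (aK K k : ℂ)) s := by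
  refine LSeriesSummable_of_sum_norm_bigO_and_nonneg (f := aK K) (r := 1) ?_
    (fun _ => by unfold aK; positivity) zero_le_one hs
  have h1 : (fun n : ℕ => (∑ k ∈ Finset.Icc 1 n, aK K k) / n) =O[atTop] (fun _ => (1 : ℝ)) :=
    (sum_aK_tendsto K).isBigO_one ℝ
  have h2 := h1.mul (isBigO_refl (fun n : ℕ => (n : ℝ)) atTop)
  refine (h2.congr' ?_ ?_)
  · filter_upwards [eventually_gt_atTop 0] with n hn
    field_simp
  · filter_upwards with n
    simp

theorem zetaK : ∃ δ > (0 : ℝ), ∃ g : ℂ → ℂ,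
    DifferentiableOn ℂ g {s : ℂ | 1 - δ < s.re} ∧ g 1 ≠ 0 ∧
      ∀ s : ℂ, 1 < s.re → HasSum (fun I : {I : Ideal (𝓞 K) // I ≠ ⊥} =>
        ((absNorm (I : Ideal (𝓞 K)) : ℕ) : ℂ) ^ (-s)) (g s / (s - 1)) := by
  obtain ⟨c, C, hC⟩ := theta_K K
  have hn : 0 < (finrank ℚ K : ℝ) := by exact_mod_cast finrank_pos
  have hn1 : 1 ≤ (finrank ℚ K : ℝ) := by exact_mod_cast (finrank_pos : 0 < finrank ℚ K)
  have hδ : 0 < (finrank ℚ K : ℝ)⁻¹ := by positivity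
  obtain ⟨g, hg, hgs⟩ := continuation (aK K) (fun _ => by unfold aK; positivity) (aK_summable K)
    c C (finrank ℚ K : ℝ)⁻¹ hδ (inv_le_one_of_one_le₀ hn1) hC
  refine ⟨_, hδ, g, hg, ?_, ?_⟩
  · have h1 := tendsto_sub_one_mul_dedekindZeta_nhdsGT K
    have hopen : IsOpen {s : ℂ | 1 - (finrank ℚ K : ℝ)⁻¹ < s.re} :=
      isOpen_lt continuous_const Complex.continuous_re
    have h1' : ContinuousAt g 1 := (hg.differentiableAt (hopen.mem_nhds (by
      simp only [Set.mem_ofPred_eq, Complex.one_re]; linarith))).continuousAt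
    have h2 : Tendsto (fun s : ℝ => g s) (𝓝[>] 1) (𝓝 (g 1)) := by
      have : Tendsto (fun s : ℝ => (s : ℂ)) (𝓝[>] 1) (𝓝 1) := by
        have := (Complex.continuous_ofReal.tendsto (1:ℝ)).mono_left
          (nhdsWithin_le_nhds (s := Set.Ioi 1))
        simpa using this
      exact h1'.tendsto.comp this
    have h3 : Tendsto (fun s : ℝ ↦ (s - 1) * dedekindZeta K s) (𝓝[>] 1) (𝓝 (g 1)) := by
      refine h2.congr' ?_
      filter_upwards [self_mem_nhdsWithin] with s hs
      have hs : 1 < s := hs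
      have e : dedekindZeta K s = g s / (s - 1) := by
        rw [← hgs s (by simpa using hs), dedekindZeta]
        simp [aK]
      rw [e]
      have : (s : ℂ) - 1 ≠ 0 := by
        rw [sub_ne_zero]; exact_mod_cast hs.ne'
      field_simp
    rw [tendsto_nhds_unique h3 h1]
    exact_mod_cast dedekindZeta_residue_ne_zero K
  · intro s hs
    have hfin : ∀ k : ℕ+, Finite {I : {I : Ideal (𝓞 K) // I ≠ ⊥} //
        νK K I = k} := by
      intro k
      have := Ideal.finite_setOfPred_absNorm_eq (S := 𝓞 K) (k : ℕ)
      have : Finite {I : Ideal (𝓞 K) // absNorm I = k} := this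
      refine Finite.of_injective (β := {I : Ideal (𝓞 K) // absNorm I = k})
        (fun I => ⟨I.1.1, congrArg PNat.val I.2⟩) ?_
      intro I J h
      have h' : I.1.1 = J.1.1  := by injection h
      exact Subtype.ext (Subtype.ext h')
    have hcard : ∀ k : ℕ+, Nat.card {I : {I : Ideal (𝓞 K) // I ≠ ⊥} //
        νK K I = k} =
        Nat.card {I : Ideal (𝓞 K) // absNorm I = k} := by
      intro k
      refine Nat.card_congr ⟨fun I => ⟨I.1.1, congrArg PNat.val I.2⟩, fun I => ⟨⟨I.1, ?_⟩, ?_⟩,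
        fun _ => rfl, fun _ => rfl⟩
      · intro h0
        have := I.2
        rw [h0, absNorm_bot] at this
        exact k.pos.ne this
      · exact PNat.eq I.2
    have hS := aK_summable K s hs
    have hS2 : HasSum (fun k : ℕ+ => (aK K k : ℂ) * ((k : ℕ) : ℂ) ^ (-s)) (g s / (s - 1)) := by
      have h1 : HasSum (LSeries.term (fun k => (aK K k : ℂ)) s) (g s / (s - 1)) := by
        rw [← hgs s hs]; exact hS.hasSum
      have h2 := (Function.Injective.hasSum_iff (f := LSeries.term (fun k => (aK K k : ℂ)) s)
        (g := ((↑) : ℕ+ → ℕ)) PNat.coe_injective ?_).mpr h1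
      · refine h2.congr_fun ?_
        intro k
        simp [LSeries.term, Complex.cpow_neg, div_eq_mul_inv]
      · intro k hk
        have : k = 0 := by
          by_contra h0
          exact hk ⟨⟨k, Nat.pos_of_ne_zero h0⟩, rfl⟩
        simp [this]
    have hS3 := summable_fib (νK K) hfin (fun k => ((k : ℕ) : ℝ) ^ (-s.re)) (fun _ => by positivity) (by
      refine hS2.summable.norm.congr fun k => ?_
      rw [hcard, norm_mul, Complex.norm_natCast_cpow_of_pos k.pos, Complex.norm_real,
        Real.norm_of_nonneg (by unfold aK; positivity), Complex.neg_re, aK])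
    have hS4 : Summable (fun I : {I : Ideal (𝓞 K) // I ≠ ⊥} =>
        ((absNorm (I : Ideal (𝓞 K)) : ℕ) : ℂ) ^ (-s)) := by
      refine Summable.of_norm (hS3.congr fun I => ?_)
      rw [Complex.norm_natCast_cpow_of_pos (absNorm_pos_iff_mem_nonZeroDivisors.mpr
          (mem_nonZeroDivisors_of_ne_zero I.2))]
      rfl
    have h5 := hasSum_fib (νK K) hfin (fun k => ((k : ℕ) : ℂ) ^ (-s)) _ hS4.hasSum
    have h6 : (fun k : ℕ+ => (aK K k : ℂ) * ((k : ℕ) : ℂ) ^ (-s)) =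
        fun k : ℕ+ => (Nat.card {i // νK K i = k} : ℂ) * ((k : ℕ) : ℂ) ^ (-s) := by
      funext k
      rw [aK, ← hcard, Complex.ofReal_natCast]
    rw [h6] at hS2
    rw [← h5.unique hS2]
    exact hS4.hasSum
end
end CubicZeta
end Part7

section Part8
namespace CubicZeta

theorem hasSum_mul' {ι κ : Type*} {f : ι → ℂ} {g : κ → ℂ} {a b : ℂ} (h1 : HasSum f a)
    (h2 : HasSum g b) : HasSum (fun x : ι × κ => f x.1 * g x.2) (a * b) :=
  h1.mul h2 (summable_mul_of_summable_norm h1.summable.norm h2.summable.norm)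

section Rings
variable {R : Type*} [CommRing R]

noncomputable def nI (I : Ideal R) : ℕ := Nat.card (R ⧸ I)

theorem nI_mem (I : Ideal R) : ((nI I : ℕ) : R) ∈ I := by
  rw [← Ideal.Quotient.eq_zero_iff_mem, map_natCast]
  have := card_nsmul_eq_zero' (x := (1 : R ⧸ I))
  rwa [nsmul_one] at this

theorem nI_finite {I : Ideal R} (h : nI I ≠ 0) : Finite (R ⧸ I) :=
  Nat.finite_of_card_ne_zero h

theorem nI_top : nI (⊤ : Ideal R) = 1 := by
  have : Subsingleton (R ⧸ (⊤ : Ideal R)) := Ideal.Quotient.subsingleton_iff.mpr rfl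
  exact Nat.card_unique

theorem nI_cauchy {I : Ideal R} (h : nI I ≠ 0) {p : ℕ} (hp : p.Prime) (hd : p ∣ nI I) :
    ∃ x : R, x ∉ I ∧ (p : R) * x ∈ I := by
  have := nI_finite h
  have : Fact p.Prime := ⟨hp⟩
  obtain ⟨y, hy⟩ := exists_prime_addOrderOf_dvd_card' (G := R ⧸ I) p hd
  obtain ⟨x, rfl⟩ := Ideal.Quotient.mk_surjective y
  refine ⟨x, fun hx => ?_, ?_⟩
  · rw [Ideal.Quotient.eq_zero_iff_mem.mpr hx, addOrderOf_zero] at hy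
    exact hp.one_lt.ne hy
  · have := addOrderOf_nsmul_eq_zero ((Ideal.Quotient.mk I) x)
    rw [hy, nsmul_eq_mul] at this
    rw [← Ideal.Quotient.eq_zero_iff_mem, map_mul, map_natCast, this]

/-- Bezout inside a ring. -/
theorem bez {a b : ℕ} (h : a.Coprime b) : ∃ u v : R, (a : R) * u + (b : R) * v = 1 := by
  have := Nat.isCoprime_iff_coprime.mpr h
  obtain ⟨u, v, huv⟩ := this
  refine ⟨(u : R), (v : R), ?_⟩
  have := congrArg (Int.cast : ℤ → R) huv
  push_cast at this
  linear_combination this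

theorem mem_of_coprime {I : Ideal R} {a b : ℕ} (h : a.Coprime b) {x : R}
    (ha : (a : R) * x ∈ I) (hb : (b : R) * x ∈ I) : x ∈ I := by
  obtain ⟨u, v, huv⟩ := bez (R := R) h
  have : x = u * (a * x) + v * (b * x) := by linear_combination (-x) * huv
  rw [this]
  exact I.add_mem (I.mul_mem_left _ ha) (I.mul_mem_left _ hb)

theorem dvd_of_mem {I : Ideal R} (h : nI I ≠ 0) {p : ℕ} (hp : p.Prime) (hd : p ∣ nI I)
    {c : ℕ} (hc : (c : R) ∈ I) : p ∣ c := by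
  by_contra hpc
  obtain ⟨x, hx, hpx⟩ := nI_cauchy h hp hd
  exact hx (mem_of_coprime ((Nat.Prime.coprime_iff_not_dvd hp).mpr hpc) hpx
    (I.mul_mem_right _ hc))

theorem coprime_iff {I : Ideal R} (h : nI I ≠ 0) (N : ℕ) :
    (nI I).Coprime N ↔ ∃ u : R, 1 - (N : R) * u ∈ I := by
  constructor
  · intro hc
    obtain ⟨u, v, huv⟩ := bez (R := R) hc
    refine ⟨v, ?_⟩
    rw [← huv, add_sub_cancel_right]
    exact I.mul_mem_right _ (nI_mem I)
  · rintro ⟨u, hu⟩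
    refine Nat.Coprime.symm ?_
    refine Nat.Coprime.symm (Nat.coprime_of_dvd fun p hp h1 h2 => ?_)
    obtain ⟨x, hx, hpx⟩ := nI_cauchy h hp h1
    obtain ⟨c, rfl⟩ := h2
    apply hx
    have : x = (1 - ((p * c : ℕ) : R) * u) * x + (c * u) * (p * x) := by push_cast; ring
    rw [this]
    exact I.add_mem (I.mul_mem_right _ hu) (I.mul_mem_left _ hpx)

def Sm (N k : ℕ) : Prop := ∀ p : ℕ, p.Prime → p ∣ k → p ∣ N

theorem Sm.coprime {N a b : ℕ} (ha : a.Coprime N) (hb : Sm N b) : a.Coprime b :=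
  Nat.coprime_of_dvd fun p hp h1 h2 =>
    hp.one_lt.ne' (Nat.dvd_one.mp (ha ▸ Nat.dvd_gcd h1 (hb p hp h2)))

theorem Sm.mul {N a b : ℕ} (ha : Sm N a) (hb : Sm N b) : Sm N (a * b) :=
  fun p hp h => (hp.dvd_mul.mp h).elim (ha p hp) (hb p hp)

theorem Sm.of_dvd {N a b : ℕ} (ha : Sm N a) (hb : b ∣ a) : Sm N b :=
  fun p hp h => ha p hp (h.trans hb)

theorem sm_pow (N j : ℕ) : Sm N (N ^ j) := fun _ hp h => hp.dvd_of_dvd_pow h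

theorem split (N n : ℕ) (hn : n ≠ 0) : ∃ a b, n = a * b ∧ a.Coprime N ∧ Sm N b := by
  induction n using Nat.strong_induction_on with
  | _ n ih =>
    by_cases h : n.Coprime N
    · exact ⟨n, 1, by simp, h, fun p hp h1 => (hp.one_lt.ne' (Nat.dvd_one.mp h1)).elim⟩
    · obtain ⟨p, hp, h1, h2⟩ := Nat.Prime.not_coprime_iff_dvd.mp h
      obtain ⟨c, rfl⟩ := h1
      have hc : c ≠ 0 := by rintro rfl; simp at hn
      obtain ⟨a, b, rfl, ha, hb⟩ := ih c (by nlinarith [hp.two_le, Nat.pos_of_ne_zero hc]) hc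
      refine ⟨a, p * b, by ring, ha, Sm.mul ?_ hb⟩
      intro q hq hqp
      rwa [(Nat.prime_dvd_prime_iff_eq hq hp).mp hqp]

variable (R) in
def Fin' : Type _ := {I : Ideal R // nI I ≠ 0}
variable (R) in
def Cop (N : ℕ) : Type _ := {I : Ideal R // nI I ≠ 0 ∧ (nI I).Coprime N}
variable (R) in
def Smo (N : ℕ) : Type _ := {I : Ideal R // nI I ≠ 0 ∧ Sm N (nI I)}

theorem sup_top {I J : Ideal R} (h : (nI I).Coprime (nI J)) : I ⊔ J = ⊤ := by
  obtain ⟨u, v, huv⟩ := bez (R := R) h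
  rw [Ideal.eq_top_iff_one, ← huv]
  exact Submodule.add_mem_sup (I.mul_mem_right _ (nI_mem I)) (J.mul_mem_right _ (nI_mem J))

theorem nI_inf {I J : Ideal R} (h : (nI I).Coprime (nI J)) : nI (I ⊓ J) = nI I * nI J := by
  have h1 : IsCoprime I J := Ideal.isCoprime_iff_sup_eq.mpr (sup_top h)
  unfold nI
  rw [← Nat.card_prod]
  exact Nat.card_congr (Ideal.quotientInfEquivQuotientProd I J h1).toEquiv

theorem le_of_inf_le {I J I' : Ideal R} {c : ℕ} (hc : (c : R) ∈ J) (hc' : c.Coprime (nI I'))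
    (h : I ⊓ J ≤ I') : I ≤ I' := by
  intro x hx
  exact mem_of_coprime hc' (h ⟨I.mul_mem_left _ hx, J.mul_mem_right _ hc⟩)
    (I'.mul_mem_right _ (nI_mem I'))

theorem nI_sup_ne_zero {I J : Ideal R} (h : nI I ≠ 0) (hIJ : I ≤ J) : nI J ≠ 0 := by
  have := nI_finite h
  have : Finite (R ⧸ J) := Finite.of_surjective _ (Ideal.Quotient.factor_surjective hIJ)
  exact Nat.card_pos.ne'

noncomputable def decompFun (N : ℕ) (x : Cop R N × Smo R N) : Fin' R :=
  ⟨x.1.1 ⊓ x.2.1, by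
    rw [nI_inf (Sm.coprime x.1.2.2 x.2.2.2)]
    exact mul_ne_zero x.1.2.1 x.2.2.1⟩

theorem decomp_bij (N : ℕ) : Function.Bijective (decompFun (R := R) N) := by
  constructor
  · rintro ⟨⟨I, hI0, hI⟩, ⟨J, hJ0, hJ⟩⟩ ⟨⟨I', hI0', hI'⟩, ⟨J', hJ0', hJ'⟩⟩ h
    have h : I ⊓ J = I' ⊓ J' := congrArg Subtype.val h
    have e1 : I = I' := le_antisymm
      (le_of_inf_le (nI_mem J) (Sm.coprime hI' hJ).symm (h.le.trans inf_le_left))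
      (le_of_inf_le (nI_mem J') (Sm.coprime hI hJ').symm (h.ge.trans inf_le_left))
    have e2 : J = J' := le_antisymm
      (le_of_inf_le (nI_mem I) (Sm.coprime hI hJ')
        ((inf_comm _ _).le.trans (h.le.trans inf_le_right)))
      (le_of_inf_le (nI_mem I') (Sm.coprime hI' hJ)
        ((inf_comm _ _).le.trans (h.ge.trans inf_le_right)))
    subst e1 e2
    rfl
  · rintro ⟨I, hI⟩
    obtain ⟨a, b, hab, ha, hb⟩ := split N (nI I) hI
    have hA0 := nI_sup_ne_zero hI (le_sup_left : I ≤ I ⊔ Ideal.span {(a : R)})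
    have hB0 := nI_sup_ne_zero hI (le_sup_left : I ≤ I ⊔ Ideal.span {(b : R)})
    have hA1 : (a : R) ∈ I ⊔ Ideal.span {(a : R)} :=
      Ideal.mem_sup_right (Ideal.mem_span_singleton_self _)
    have hB1 : (b : R) ∈ I ⊔ Ideal.span {(b : R)} :=
      Ideal.mem_sup_right (Ideal.mem_span_singleton_self _)
    refine ⟨⟨⟨I ⊔ Ideal.span {(a : R)}, hA0, ?_⟩, ⟨I ⊔ Ideal.span {(b : R)}, hB0, ?_⟩⟩, ?_⟩
    · refine Nat.coprime_of_dvd fun p hp h1 h2 => ?_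
      have := dvd_of_mem hA0 hp h1 hA1
      exact hp.one_lt.ne' (Nat.dvd_one.mp (ha ▸ Nat.dvd_gcd this h2))
    · intro p hp h1
      exact hb p hp (dvd_of_mem hB0 hp h1 hB1)
    · apply Subtype.ext
      change (I ⊔ Ideal.span {(a : R)}) ⊓ (I ⊔ Ideal.span {(b : R)}) = I
      refine le_antisymm ?_ (le_inf le_sup_left le_sup_left)
      rintro x ⟨h1, h2⟩
      have hab' : ((b : R) * a) ∈ I := by
        have := nI_mem I
        rw [hab] at this
        push_cast at this
        rwa [mul_comm]
      refine mem_of_coprime (Sm.coprime ha hb) ?_ ?_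
      · obtain ⟨y, hy, z, hz, rfl⟩ := Submodule.mem_sup.mp h2
        obtain ⟨w, rfl⟩ := Ideal.mem_span_singleton'.mp hz
        rw [mul_add]
        refine I.add_mem (I.mul_mem_left _ hy) ?_
        rw [show (a : R) * (w * b) = w * (b * a) by ring]
        exact I.mul_mem_left _ hab'
      · obtain ⟨y, hy, z, hz, rfl⟩ := Submodule.mem_sup.mp h1
        obtain ⟨w, rfl⟩ := Ideal.mem_span_singleton'.mp hz
        rw [mul_add]
        refine I.add_mem (I.mul_mem_left _ hy) ?_
        rw [show (b : R) * (w * a) = w * (b * a) by ring]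
        exact I.mul_mem_left _ hab'

theorem decomp_sum (N : ℕ) (s : ℂ) (zc zs : ℂ)
    (h1 : HasSum (fun I : Cop R N => ((nI I.1 : ℕ) : ℂ) ^ (-s)) zc)
    (h2 : HasSum (fun I : Smo R N => ((nI I.1 : ℕ) : ℂ) ^ (-s)) zs) :
    HasSum (fun I : Fin' R => ((nI I.1 : ℕ) : ℂ) ^ (-s)) (zc * zs) := by
  have h3 := hasSum_mul' h1 h2
  rw [← (Equiv.ofBijective _ (decomp_bij (R := R) N)).hasSum_iff]
  refine h3.congr_fun fun x => ?_
  change ((nI (x.1.1 ⊓ x.2.1) : ℕ) : ℂ) ^ (-s) = _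
  rw [nI_inf (Sm.coprime x.1.2.2 x.2.2.2), Nat.cast_mul, Complex.natCast_mul_natCast_cpow]

end Rings
end CubicZeta
end Part8

section Part9
namespace CubicZeta

section QQ
variable (R : Type*) [CommRing R]

def QC (m : ℕ) (δ : ℝ) (N : ℕ) : Prop := ∃ g : ℂ → ℂ,
    DifferentiableOn ℂ g {s : ℂ | 1 - δ < s.re} ∧ g 1 ≠ 0 ∧ ∀ s : ℂ, 1 < s.re →
      HasSum (fun I : Cop R N => ((nI I.1 : ℕ) : ℂ) ^ (-s)) (g s / (s - 1) ^ m)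

def QS (δ : ℝ) (N : ℕ) : Prop := ∀ σ : ℝ, 1 - δ < σ →
  Summable (fun I : Smo R N => ((nI I.1 : ℕ) : ℝ) ^ (-σ))

def Q (m : ℕ) : Prop := ∃ δ > (0 : ℝ), ∀ N : ℕ, N ≠ 0 → QS R δ N ∧ QC R m δ N

variable {R}

theorem QS.mono {δ δ' : ℝ} {N : ℕ} (h : QS R δ N) (hδ : δ' ≤ δ) : QS R δ' N :=
  fun σ hσ => h σ (by linarith)

theorem QC.mono {m : ℕ} {δ δ' : ℝ} {N : ℕ} (h : QC R m δ N) (hδ : δ' ≤ δ) : QC R m δ' N := by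
  obtain ⟨g, hg, h1, h2⟩ := h
  refine ⟨g, hg.mono ?_, h1, h2⟩
  intro s hs
  have hs : 1 - δ' < s.re := hs
  change 1 - δ < s.re
  linarith

theorem Q_triv [Subsingleton R] : Q R 0 := by
  have h1 : ∀ I : Ideal R, nI I = 1 := fun I => by
    rw [Subsingleton.elim I ⊤, nI_top]
  refine ⟨1, one_pos, fun N _ => ⟨fun σ _ => ?_, fun _ => 1, by fun_prop, one_ne_zero,
    fun s hs => ?_⟩⟩
  · have : Subsingleton (Smo R N) := ⟨fun I J => Subtype.ext (Subsingleton.elim _ _)⟩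
    exact Summable.of_finite
  · have : Unique (Cop R N) := ⟨⟨⟨⊤, by simp [h1]⟩⟩,
      fun I => Subtype.ext (Subsingleton.elim _ _)⟩
    simp [h1]

variable {S : Type*} [CommRing S]

theorem nI_prod (I : Ideal R) (J : Ideal S) : nI (I.prod J) = nI I * nI J := by
  unfold nI
  rw [← Nat.card_prod]
  refine Nat.card_congr (Equiv.ofBijective (Quotient.lift
    (s := (Submodule.quotientRel (I.prod J))) (fun x : R × S =>
      ((Ideal.Quotient.mk I x.1, Ideal.Quotient.mk J x.2) : (R ⧸ I) × (S ⧸ J))) ?_) ⟨?_, ?_⟩)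
  · intro x y h
    have h' : x - y ∈ I.prod J := (Submodule.quotientRel_def _).mp h
    rw [Ideal.mem_prod] at h'
    rw [Prod.mk.injEq]
    exact ⟨Ideal.Quotient.eq.mpr h'.1, Ideal.Quotient.eq.mpr h'.2⟩
  · intro x y
    obtain ⟨x, rfl⟩ := Ideal.Quotient.mk_surjective x
    obtain ⟨y, rfl⟩ := Ideal.Quotient.mk_surjective y
    intro h
    have h : ((Ideal.Quotient.mk I x.1, Ideal.Quotient.mk J x.2) : (R ⧸ I) × (S ⧸ J)) =
      (Ideal.Quotient.mk I y.1, Ideal.Quotient.mk J y.2) := h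
    rw [Prod.mk.injEq] at h
    exact Ideal.Quotient.eq.mpr ((Ideal.mem_prod _ _).mpr
      ⟨Ideal.Quotient.eq.mp h.1, Ideal.Quotient.eq.mp h.2⟩)
  · rintro ⟨x, y⟩
    obtain ⟨x, rfl⟩ := Ideal.Quotient.mk_surjective x
    obtain ⟨y, rfl⟩ := Ideal.Quotient.mk_surjective y
    exact ⟨Ideal.Quotient.mk _ (x, y), rfl⟩

theorem prod_surj (I : Ideal (R × S)) : ∃ A : Ideal R, ∃ B : Ideal S, I = A.prod B :=
  ⟨_, _, Ideal.ideal_prod_eq I⟩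

theorem prod_inj {A A' : Ideal R} {B B' : Ideal S} (h : A.prod B = A'.prod B') :
    A = A' ∧ B = B' := Ideal.prod_inj.mp h

def prodCop (N : ℕ) (x : Cop R N × Cop S N) : Cop (R × S) N :=
  ⟨x.1.1.prod x.2.1, by
    rw [nI_prod]
    exact ⟨mul_ne_zero x.1.2.1 x.2.2.1, x.1.2.2.mul_left x.2.2.2⟩⟩

theorem prodCop_bij (N : ℕ) : Function.Bijective (prodCop (R := R) (S := S) N) := by
  constructor
  · intro x y h
    obtain ⟨h1, h2⟩ := prod_inj (congrArg Subtype.val h)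
    exact Prod.ext (Subtype.ext h1) (Subtype.ext h2)
  · rintro ⟨I, hI0, hI⟩
    obtain ⟨A, B, rfl⟩ := prod_surj I
    rw [nI_prod] at hI0 hI
    exact ⟨⟨⟨A, left_ne_zero_of_mul hI0, Nat.Coprime.coprime_dvd_left (dvd_mul_right _ _) hI⟩,
      ⟨B, right_ne_zero_of_mul hI0, Nat.Coprime.coprime_dvd_left (dvd_mul_left _ _) hI⟩⟩, rfl⟩

def prodSmo (N : ℕ) (x : Smo R N × Smo S N) : Smo (R × S) N :=
  ⟨x.1.1.prod x.2.1, by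
    rw [nI_prod]
    exact ⟨mul_ne_zero x.1.2.1 x.2.2.1, x.1.2.2.mul x.2.2.2⟩⟩

theorem prodSmo_bij (N : ℕ) : Function.Bijective (prodSmo (R := R) (S := S) N) := by
  constructor
  · intro x y h
    obtain ⟨h1, h2⟩ := prod_inj (congrArg Subtype.val h)
    exact Prod.ext (Subtype.ext h1) (Subtype.ext h2)
  · rintro ⟨I, hI0, hI⟩
    obtain ⟨A, B, rfl⟩ := prod_surj I
    rw [nI_prod] at hI0 hI
    exact ⟨⟨⟨A, left_ne_zero_of_mul hI0, hI.of_dvd (dvd_mul_right _ _)⟩,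
      ⟨B, right_ne_zero_of_mul hI0, hI.of_dvd (dvd_mul_left _ _)⟩⟩, rfl⟩

theorem Q_prod {m n : ℕ} (h1 : Q R m) (h2 : Q S n) : Q (R × S) (m + n) := by
  obtain ⟨δ, hδ, h1⟩ := h1
  obtain ⟨δ', hδ', h2⟩ := h2
  refine ⟨min δ δ', lt_min hδ hδ', fun N hN => ⟨?_, ?_⟩⟩
  · intro σ hσ
    have a1 := ((h1 N hN).1.mono (min_le_left _ _)) σ hσ
    have a2 := ((h2 N hN).1.mono (min_le_right _ _)) σ hσ
    have a3 := a1.mul_of_nonneg a2 (fun _ => by positivity) (fun _ => by positivity)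
    rw [← (Equiv.ofBijective _ (prodSmo_bij (R := R) (S := S) N)).summable_iff]
    refine a3.congr fun x => ?_
    change _ = ((nI (x.1.1.prod x.2.1) : ℕ) : ℝ) ^ (-σ)
    rw [nI_prod, Nat.cast_mul, Real.mul_rpow (by positivity) (by positivity)]
  · obtain ⟨g, hg, hg1, hgs⟩ := (h1 N hN).2.mono (min_le_left δ δ')
    obtain ⟨g', hg', hg1', hgs'⟩ := (h2 N hN).2.mono (min_le_right δ δ')
    refine ⟨g * g', hg.mul hg', mul_ne_zero hg1 hg1', fun s hs => ?_⟩
    have := hasSum_mul' (hgs s hs) (hgs' s hs)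
    rw [div_mul_div_comm, ← pow_add] at this
    rw [← (Equiv.ofBijective _ (prodCop_bij (R := R) (S := S) N)).hasSum_iff]
    refine this.congr_fun fun x => ?_
    change ((nI (x.1.1.prod x.2.1) : ℕ) : ℂ) ^ (-s) = _
    rw [nI_prod, Nat.cast_mul, Complex.natCast_mul_natCast_cpow]

end QQ

theorem final_step {R : Type} [CommRing R] (m : ℕ) (δ : ℝ) (hδ : 0 < δ) (N : ℕ) (h1 : QS R δ N)
    (h2 : QC R m δ N)
    (hfin : ∀ k : ℕ, k ≠ 0 → Finite (R ⧸ Ideal.span {(k : R)})) :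
    ∃ δ > (0 : ℝ), ∃ g : ℂ → ℂ,
      DifferentiableOn ℂ g {s : ℂ | 1 - δ < s.re} ∧ g 1 ≠ 0 ∧
      ∀ s : ℂ, 1 < s.re →
        HasSum (fun k : ℕ+ => (idealCount R k : ℂ) / (k : ℂ) ^ s) (g s / (s - 1) ^ m) := by
  obtain ⟨g, hg, hg1, hgs⟩ := h2.mono (by linarith : δ / 2 ≤ δ)
  have hb := h1 (1 - δ / 2) (by linarith)
  have hbound : ∀ (I : Smo R N) (s : ℂ), s ∈ {s : ℂ | 1 - δ / 2 < s.re} →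
      ‖((nI I.1 : ℕ) : ℂ) ^ (-s)‖ ≤ ((nI I.1 : ℕ) : ℝ) ^ (-(1 - δ / 2)) := by
    intro I s hs
    have hs : 1 - δ / 2 < s.re := hs
    rw [Complex.norm_natCast_cpow_of_pos (Nat.pos_of_ne_zero I.2.1), Complex.neg_re]
    refine Real.rpow_le_rpow_of_exponent_le ?_ (by linarith)
    exact_mod_cast Nat.one_le_iff_ne_zero.mpr I.2.1
  refine ⟨δ / 2, by linarith, fun s => g s * ∑' I : Smo R N, ((nI I.1 : ℕ) : ℂ) ^ (-s),
    hg.mul ?_, mul_ne_zero hg1 ?_, fun s hs => ?_⟩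
  · refine Complex.differentiableOn_tsum_of_summable_norm hb ?_
      (isOpen_lt continuous_const Complex.continuous_re) hbound
    intro I
    refine DifferentiableOn.const_cpow (by fun_prop) (Or.inl ?_)
    exact_mod_cast I.2.1
  · have e : ∀ I : Smo R N, ((nI I.1 : ℕ) : ℂ) ^ (-1 : ℂ) = (((nI I.1 : ℝ)⁻¹ : ℝ) : ℂ) := by
      intro I
      rw [Complex.cpow_neg_one]; push_cast; rfl
    simp only [e]
    rw [← Complex.ofReal_tsum]
    have hs : Summable fun I : Smo R N => (nI I.1 : ℝ)⁻¹ := by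
      refine (h1 1 (by linarith)).congr fun I => ?_
      rw [Real.rpow_neg_one]
    have : 0 < ∑' I : Smo R N, (nI I.1 : ℝ)⁻¹ := by
      refine hs.tsum_pos (fun I => by positivity)
        ⟨⊤, by simp [nI_top], fun p hp h => ?_⟩ ?_
      · rw [nI_top] at h
        exact (hp.one_lt.ne' (Nat.dvd_one.mp h)).elim
      · simp [nI_top]
    exact_mod_cast this.ne'
  · have hS : Summable (fun I : Smo R N => ((nI I.1 : ℕ) : ℂ) ^ (-s)) :=
      Summable.of_norm_bounded hb (fun I => hbound I s (by
        change 1 - δ / 2 < s.re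
        linarith))
    have h3 := decomp_sum N s _ _ (hgs s hs) hS.hasSum
    let ν : Fin' R → ℕ+ := fun I => ⟨nI I.1, Nat.pos_of_ne_zero I.2⟩
    have hν : ∀ I k, ν I = k ↔ nI I.1 = k := fun I k => by
      rw [← PNat.coe_inj]; rfl
    have hf : ∀ k : ℕ+, Finite {I : Ideal R // nI I = k} := by
      intro k
      have := hfin k k.ne_zero
      refine Finite.of_injective (β := Set (R ⧸ Ideal.span {((k : ℕ) : R)}))
        (fun I => Ideal.Quotient.mk _ '' (I.1 : Set R)) ?_
      have key : ∀ I J : {I : Ideal R // nI I = k},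
        Ideal.Quotient.mk (Ideal.span {((k : ℕ) : R)}) '' (I.1 : Set R) =
          Ideal.Quotient.mk (Ideal.span {((k : ℕ) : R)}) '' (J.1 : Set R) → I.1 ≤ J.1 := by
        intro I J h x hx
        have hx' : Ideal.Quotient.mk (Ideal.span {((k : ℕ) : R)}) x ∈
          Ideal.Quotient.mk (Ideal.span {((k : ℕ) : R)}) '' (J.1 : Set R) := h ▸ ⟨x, hx, rfl⟩
        obtain ⟨y, hy, hxy⟩ := hx'
        have h1 := Ideal.Quotient.eq.mp hxy
        have h2 : Ideal.span {((k : ℕ) : R)} ≤ J.1 := by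
          rw [Ideal.span_singleton_le_iff_mem]
          have h0 := nI_mem J.1
          rwa [J.2] at h0
        have := J.1.sub_mem hy (h2 h1)
        rwa [sub_sub_cancel] at this
      intro I J h
      exact Subtype.ext (le_antisymm (key I J h) (key J I h.symm))
    let e : ∀ k : ℕ+, {I : Fin' R // ν I = k} ≃ {I : Ideal R // nI I = k} := fun k =>
      { toFun := fun I => ⟨I.1.1, (hν _ _).mp I.2⟩
        invFun := fun I => ⟨⟨I.1, by rw [I.2]; exact k.ne_zero⟩, (hν _ _).mpr I.2⟩
        left_inv := fun _ => rfl
        right_inv := fun _ => rfl }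
    have h4 := hasSum_fib ν (fun k => have := hf k; Finite.of_equiv _ (e k).symm)
      (fun k => ((k : ℕ) : ℂ) ^ (-s)) _ h3
    rw [div_mul_eq_mul_div] at h4
    refine h4.congr_fun fun k => ?_
    rw [Nat.card_congr (e k), idealCount, Complex.cpow_neg, div_eq_mul_inv]
    rfl

end CubicZeta
end Part9

section Part10
namespace CubicZeta

section Transfer
variable {R O : Type*} [CommRing R] [CommRing O] (φ : R →+* O) (hφ : Function.Injective φ)
  (N : ℕ) (hN : N ≠ 0) (hNO : ∀ o : O, ∃ r, φ r = N * o)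

include hNO in
theorem nI_comap {J : Ideal O} (hJ : ∃ u : O, 1 - (N : O) * u ∈ J) : nI (J.comap φ) = nI J := by
  obtain ⟨u, hu⟩ := hJ
  have hs : Function.Surjective ((Ideal.Quotient.mk J).comp φ) := by
    intro y
    obtain ⟨y, rfl⟩ := Ideal.Quotient.mk_surjective y
    obtain ⟨r, hr⟩ := hNO (u * y)
    refine ⟨r, ?_⟩
    rw [RingHom.comp_apply, hr, eq_comm, Ideal.Quotient.eq]
    rw [show y - N * (u * y) = (1 - N * u) * y by ring]
    exact J.mul_mem_right _ hu
  have h1 : J.comap φ = RingHom.ker ((Ideal.Quotient.mk J).comp φ) := by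
    rw [← RingHom.comap_ker, Ideal.mk_ker]
  unfold nI
  rw [h1]
  exact Nat.card_congr (RingHom.quotientKerEquivOfSurjective hs).toEquiv

include hNO in
theorem mem_map (I : Ideal R) (y : O) (hy : y ∈ I.map φ) : ∃ i ∈ I, φ i = N * y := by
  suffices h : ∀ a : O, ∃ i ∈ I, φ i = N * (a * y) by simpa using h 1
  induction hy using Submodule.span_induction with
  | mem x h =>
    obtain ⟨i, hi, rfl⟩ := h
    intro a
    obtain ⟨r, hr⟩ := hNO a
    exact ⟨r * i, I.mul_mem_left _ hi, by rw [map_mul, hr]; ring⟩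
  | zero => exact fun _ => ⟨0, I.zero_mem, by simp⟩
  | add x y _ _ hx hy =>
    intro a
    obtain ⟨i, hi, h1⟩ := hx a
    obtain ⟨j, hj, h2⟩ := hy a
    exact ⟨i + j, I.add_mem hi hj, by rw [map_add, h1, h2]; ring⟩
  | smul b x _ hx =>
    intro a
    obtain ⟨i, hi, h1⟩ := hx (a * b)
    exact ⟨i, hi, by rw [h1, smul_eq_mul]; ring⟩

include hNO in
theorem comap_coprime {J : Ideal O} (h0 : nI J ≠ 0) (hJ : (nI J).Coprime N) :
    nI (J.comap φ) = nI J := nI_comap φ N hNO ((coprime_iff h0 N).mp hJ)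

noncomputable def tCop (x : Cop O N) : Cop R N :=
  ⟨x.1.comap φ, by
    rw [comap_coprime φ N hNO x.2.1 x.2.2]; exact x.2⟩

include hφ in
theorem tCop_bij : Function.Bijective (tCop φ N hNO) := by
  constructor
  · have key : ∀ x y : Cop O N, x.1.comap φ = y.1.comap φ → x.1 ≤ y.1 := by
      intro x y h o ho
      obtain ⟨r, hr⟩ := hNO o
      have h1 : r ∈ x.1.comap φ := by
        rw [Ideal.mem_comap, hr]; exact x.1.mul_mem_left _ ho
      rw [h, Ideal.mem_comap, hr] at h1
      exact mem_of_coprime y.2.2.symm h1 (y.1.mul_mem_right _ (nI_mem _))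
    intro x y h
    have h' := congrArg Subtype.val h
    exact Subtype.ext (le_antisymm (key x y h') (key y x h'.symm))
  · rintro ⟨I, hI0, hI⟩
    have h1 : (I.map φ).comap φ = I := by
      refine le_antisymm ?_ Ideal.le_comap_map
      intro x hx
      obtain ⟨i, hi, h⟩ := mem_map φ N hNO I _ hx
      have : i = N * x := hφ (by simp [h])
      rw [this] at hi
      exact mem_of_coprime hI.symm hi (I.mul_mem_right _ (nI_mem _))
    have h2 : nI (I.map φ) = nI I := by
      obtain ⟨u, hu⟩ := (coprime_iff hI0 N).mp hI
      rw [← nI_comap φ N hNO (J := I.map φ) ⟨φ u, ?_⟩, h1]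
      have := Ideal.mem_map_of_mem φ hu
      simpa using this
    refine ⟨⟨I.map φ, by rw [h2]; exact ⟨hI0, hI⟩⟩, Subtype.ext h1⟩

include hφ hNO in
theorem QC_transfer {m : ℕ} {δ : ℝ} (h : QC O m δ N) : QC R m δ N := by
  obtain ⟨g, hg, h1, h2⟩ := h
  refine ⟨g, hg, h1, fun s hs => ?_⟩
  rw [← (Equiv.ofBijective _ (tCop_bij φ hφ N hNO)).hasSum_iff]
  refine (h2 s hs).congr_fun fun x => ?_
  change ((nI (x.1.comap φ) : ℕ) : ℂ) ^ (-s) = _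
  rw [comap_coprime φ N hNO x.2.1 x.2.2]

theorem map_fin [Finite (O ⧸ Ideal.span {(N : O)})] (hNO : ∀ o : O, ∃ r, φ r = N * o)
    {I : Ideal R} (hI : nI I ≠ 0) :
    nI (I.map φ) ≠ 0 ∧ nI (I.map φ) ≤ nI (Ideal.span {(N : O)}) * nI I := by
  have := nI_finite hI
  let ψ : R ⧸ I →+* O ⧸ I.map φ := Ideal.quotientMap (I.map φ) φ Ideal.le_comap_map
  let F : (O ⧸ Ideal.span {(N : O)}) × (R ⧸ I) → O ⧸ I.map φ :=
    fun x => ψ x.2 + Ideal.Quotient.mk _ (Quotient.out x.1)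
  have hF : Function.Surjective F := by
    intro y
    obtain ⟨y, rfl⟩ := Ideal.Quotient.mk_surjective y
    have h1 : y - Quotient.out (Ideal.Quotient.mk (Ideal.span {(N : O)}) y) ∈
      Ideal.span {(N : O)} := by
      rw [← Ideal.Quotient.eq]
      exact (Quotient.out_eq _).symm
    obtain ⟨z, hz⟩ := Ideal.mem_span_singleton.mp h1
    obtain ⟨r, hr⟩ := hNO z
    refine ⟨(Ideal.Quotient.mk _ y, Ideal.Quotient.mk _ r), ?_⟩
    change ψ (Ideal.Quotient.mk _ r) + _ = _
    rw [Ideal.quotientMap_mk, ← map_add, hr, ← hz, sub_add_cancel]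
  have hfin : Finite (O ⧸ I.map φ) := Finite.of_surjective F hF
  refine ⟨Nat.card_pos.ne', ?_⟩
  have := Nat.card_le_card_of_surjective F hF
  rwa [Nat.card_prod] at this

theorem relI (hN0 : ∀ o : O, (N : O) * o = 0 → o = 0) (J : Ideal O) (hJ : nI J ≠ 0) :
    ((Submodule.toAddSubgroup J).map (AddMonoidHom.mulLeft (N : O))).relIndex
      (Submodule.toAddSubgroup J) = nI (Ideal.span {(N : O)}) := by
  set f := AddMonoidHom.mulLeft (N : O)
  have hf : Function.Injective f := by
    rw [injective_iff_map_eq_zero]; exact hN0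
  set A := Submodule.toAddSubgroup J
  have hle : A.map f ≤ A := by
    rintro _ ⟨x, hx, rfl⟩
    exact J.mul_mem_left _ hx
  have e1 := AddSubgroup.relIndex_mul_index hle
  have e2 := AddSubgroup.relIndex_mul_index (AddSubgroup.map_mono (f := f) (le_top : A ≤ ⊤))
  rw [AddSubgroup.relIndex_map_map_of_injective _ _ hf, AddSubgroup.relIndex_top_right] at e2
  have e3 : A.index = nI J := (Submodule.cardQuot_apply J)
  have e4 : ((⊤ : AddSubgroup O).map f).index = nI (Ideal.span {(N : O)}) := by
    rw [nI, ← Submodule.cardQuot_apply]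
    change _ = AddSubgroup.index _
    congr 1
    ext x
    change _ ↔ x ∈ Ideal.span {(N : O)}
    rw [Ideal.mem_span_singleton]
    constructor
    · rintro ⟨y, _, rfl⟩; exact ⟨y, rfl⟩
    · rintro ⟨y, rfl⟩; exact ⟨y, trivial, rfl⟩
  rw [e4] at e2
  rw [← e2, mul_comm] at e1
  exact Nat.eq_of_mul_eq_mul_left (Nat.pos_of_ne_zero (e3 ▸ hJ)) e1

noncomputable def mSmo [Finite (O ⧸ Ideal.span {(N : O)})] (hNO : ∀ o : O, ∃ r, φ r = N * o)
    (x : Smo R N) : Smo O N :=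
  ⟨x.1.map φ, (map_fin φ N hNO x.2.1).1, fun p hp h => by
    refine x.2.2 p hp (dvd_of_mem (map_fin φ N hNO x.2.1).1 hp h ?_)
    have := Ideal.mem_map_of_mem φ (nI_mem x.1)
    simpa using this⟩

include hφ in
theorem QS_transfer [Finite (O ⧸ Ideal.span {(N : O)})] (hNO : ∀ o : O, ∃ r, φ r = N * o)
    (hN0 : ∀ o : O, (N : O) * o = 0 → o = 0) {δ : ℝ} (hδ : δ ≤ 1) (h : QS O δ N) : QS R δ N := by
  set B := nI (Ideal.span {(N : O)}) with hB
  have hB0 : B ≠ 0 := Nat.card_pos.ne'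
  have he : ∀ J : Smo O N, ∃ e : (J.1 : Submodule O O) → Fin B, ∀ x y, e x = e y →
      ∃ z ∈ J.1, (x : O) - y = N * z := by
    intro J
    have h1 := relI N hN0 J.1 J.2.1
    rw [← hB] at h1
    have h2 : Nat.card (Submodule.toAddSubgroup J.1 ⧸
      ((Submodule.toAddSubgroup J.1).map (AddMonoidHom.mulLeft (N : O))).addSubgroupOf
      (Submodule.toAddSubgroup J.1)) = B := h1
    have := Nat.finite_of_card_ne_zero (h2 ▸ hB0)
    let e := Finite.equivFinOfCardEq h2
    refine ⟨fun x => e (QuotientAddGroup.mk (⟨x.1, x.2⟩ : Submodule.toAddSubgroup J.1)), ?_⟩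
    intro x y hxy
    have h3 := QuotientAddGroup.eq.mp (e.injective hxy).symm
    obtain ⟨z, hz, h4⟩ := AddSubgroup.mem_addSubgroupOf.mp h3
    refine ⟨z, hz, ?_⟩
    have h4 : (N : O) * z = -y.1 + x.1 := h4
    rw [h4]; ring
  choose e he using he
  have hmem : ∀ (x : Smo R N) (i : x.1), φ i ∈ (mSmo φ N hNO x).1 :=
    fun x i => Ideal.mem_map_of_mem φ i.2
  let E : Smo R N → Smo O N × Set (Fin B) := fun x =>
    (mSmo φ N hNO x, Set.range fun i : x.1 => e (mSmo φ N hNO x) ⟨φ i, hmem x i⟩)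
  have hE : Function.Injective E := by
    have key : ∀ x y, E x = E y → x.1 ≤ y.1 := by
      intro x y hxy i hi
      have h1 : mSmo φ N hNO x = mSmo φ N hNO y := congrArg Prod.fst hxy
      have h2 : (E x).2 = (E y).2 := congrArg Prod.snd hxy
      have h3 : e (mSmo φ N hNO x) ⟨φ i, hmem x ⟨i, hi⟩⟩ ∈ (E y).2 := by
        rw [← h2]; exact ⟨⟨i, hi⟩, rfl⟩
      obtain ⟨j, hj⟩ := h3
      have h4 : e (mSmo φ N hNO x) ⟨φ i, hmem x ⟨i, hi⟩⟩ =
        e (mSmo φ N hNO y) ⟨φ i, h1 ▸ hmem x ⟨i, hi⟩⟩ := by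
        have gen : ∀ J J' : Smo O N, J = J' → ∀ a (ha : a ∈ J.1) (ha' : a ∈ J'.1),
            e J ⟨a, ha⟩ = e J' ⟨a, ha'⟩ := by
          intro J J' h a ha ha'
          subst h
          rfl
        exact gen _ _ h1 _ _ _
      have hj : e (mSmo φ N hNO y) ⟨φ j, hmem y j⟩ = _ := hj
      rw [h4] at hj
      obtain ⟨z, hz, h5⟩ := he _ _ _ hj
      obtain ⟨w, hw, h6⟩ := mem_map φ N hNO y.1 z hz
      have h5 : φ j - φ i = N * z := h5
      have : i = j - w := hφ (by rw [map_sub, h6, ← h5]; ring)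
      rw [this]
      exact y.1.sub_mem j.2 hw
    intro x y hxy
    exact Subtype.ext (le_antisymm (key x y hxy) (key y x hxy.symm))
  intro σ hσ
  have hσ0 : 0 < σ := by linarith
  have h1 : Summable fun x : Smo O N × Set (Fin B) =>
      (B : ℝ) ^ σ * (((nI x.1.1 : ℕ) : ℝ) ^ (-σ) * 1) := by
    refine Summable.mul_left _ ?_
    exact (h σ hσ).mul_of_nonneg (g := fun _ : Set (Fin B) => (1 : ℝ)) Summable.of_finite
      (fun _ => by positivity) (fun _ => by simp)
  refine (h1.comp_injective hE).of_nonneg_of_le (fun _ => by positivity) fun x => ?_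
  change _ ≤ (B : ℝ) ^ σ * (((nI (x.1.map φ) : ℕ) : ℝ) ^ (-σ) * 1)
  obtain ⟨h2, h3⟩ := map_fin φ N hNO x.2.1
  rw [← hB] at h3
  have h2' : (0 : ℝ) < nI (x.1.map φ) := by exact_mod_cast Nat.pos_of_ne_zero h2
  have h4' : (0 : ℝ) < nI x.1 := by exact_mod_cast Nat.pos_of_ne_zero x.2.1
  have h3' : (nI (x.1.map φ) : ℝ) ≤ B * nI x.1 := by exact_mod_cast h3
  rw [mul_one, Real.rpow_neg h2'.le, Real.rpow_neg h4'.le, ← div_eq_mul_inv, ← one_div,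
    div_le_div_iff₀ (by positivity) (by positivity), one_mul, ← Real.mul_rpow (by positivity)
    (by positivity)]
  exact Real.rpow_le_rpow h2'.le h3' hσ0.le

end Transfer
end CubicZeta
end Part10

section Part11
namespace CubicZeta

theorem summable_inj {ι κ : Type*} {f : κ → ℝ} {g : ι → ℝ} (h : Summable f) (G : ι → κ)
    (hG : Function.Injective G) (hfg : ∀ i, g i = f (G i)) : Summable g := by
  have := h.comp_injective hG
  exact this.congr fun i => (hfg i).symm

section Ded
open NumberField UniqueFactorizationMonoid
variable (K : Type*) [Field K] [NumberField K]

theorem nI_eq (I : Ideal (𝓞 K)) : nI I = Ideal.absNorm I := by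
  rw [Ideal.absNorm_apply, Submodule.cardQuot_apply]; rfl

theorem nI_mul (I J : Ideal (𝓞 K)) : nI (I * J) = nI I * nI J := by
  simp only [nI_eq, map_mul]

theorem nI_ne (I : Ideal (𝓞 K)) : nI I ≠ 0 ↔ I ≠ ⊥ := by
  rw [nI_eq, Ne, Ideal.absNorm_eq_zero_iff]

def TT (S : Finset (Ideal (𝓞 K))) : Type _ := {I : Ideal (𝓞 K) // I ≠ ⊥ ∧ ∀ P ∈ S, ¬ I ≤ P}

open scoped Classical in
theorem TT_step (s : ℂ) (S : Finset (Ideal (𝓞 K))) (P : Ideal (𝓞 K)) (hP : P.IsPrime) (hP0 : P ≠ ⊥)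
    (hPS : P ∉ S) (hS : ∀ Q ∈ S, Q.IsPrime) (z : ℂ)
    (h : HasSum (fun I : TT K S => ((nI I.1 : ℕ) : ℂ) ^ (-s)) z) :
    HasSum (fun I : TT K (insert P S) => ((nI I.1 : ℕ) : ℂ) ^ (-s))
      (z * (1 - ((nI P : ℕ) : ℂ) ^ (-s))) := by
  have hmax : P.IsMaximal := hP.isMaximal hP0
  let D : Set (TT K S) := {I | I.1 ≤ P}
  let F : TT K S → D := fun J => ⟨⟨P * J.1, mul_ne_zero hP0 J.2.1, fun Q hQ hle => by
    rcases (hS Q hQ).mul_le.mp hle with h1 | h1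
    · exact hPS (hmax.eq_of_le (hS Q hQ).ne_top h1 ▸ hQ)
    · exact J.2.2 Q hQ h1⟩, (Ideal.mul_le_left : P * J.1 ≤ P)⟩
  have hF : Function.Bijective F := by
    constructor
    · intro J J' hJ
      have : P * J.1 = P * J'.1 := congrArg (fun x => x.1.1) hJ
      exact Subtype.ext (mul_left_cancel₀ hP0 this)
    · rintro ⟨⟨I, hI0, hI⟩, hIP⟩
      obtain ⟨J, rfl⟩ := Ideal.dvd_iff_le.mpr (show I ≤ P from hIP)
      exact ⟨⟨J, right_ne_zero_of_mul hI0, fun Q hQ hle => hI Q hQ (Ideal.mul_le_right.trans hle)⟩,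
        rfl⟩
  have h1 : HasSum ((fun I : TT K S => ((nI I.1 : ℕ) : ℂ) ^ (-s)) ∘ ((↑) : D → TT K S))
      (z * ((nI P : ℕ) : ℂ) ^ (-s)) := by
    rw [← (Equiv.ofBijective F hF).hasSum_iff]
    refine (h.mul_right (((nI P : ℕ) : ℂ) ^ (-s))).congr_fun fun J => ?_
    change ((nI (P * J.1) : ℕ) : ℂ) ^ (-s) = _
    rw [nI_mul, Nat.cast_mul, Complex.natCast_mul_natCast_cpow, mul_comm]
  rw [hasSum_subtype_iff_indicator] at h1
  have h2 := h.sub h1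
  have h3 : HasSum ((fun I : TT K S => ((nI I.1 : ℕ) : ℂ) ^ (-s)) ∘ ((↑) : ↑(Dᶜ) → TT K S))
      (z - z * ((nI P : ℕ) : ℂ) ^ (-s)) := by
    rw [hasSum_subtype_iff_indicator]
    refine h2.congr_fun fun I => ?_
    by_cases hI : I ∈ D
    · simp [hI]
    · simp [hI]
  let G : TT K (insert P S) → ↑(Dᶜ) := fun I =>
    ⟨⟨I.1, I.2.1, fun Q hQ => I.2.2 Q (Finset.mem_insert_of_mem hQ)⟩,
      I.2.2 P (Finset.mem_insert_self _ _)⟩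
  have hG : Function.Bijective G := by
    constructor
    · intro J J' hJ
      exact Subtype.ext (congrArg (fun x => x.1.1) hJ)
    · rintro ⟨⟨I, hI0, hI⟩, hIP⟩
      refine ⟨⟨I, hI0, fun Q hQ => ?_⟩, rfl⟩
      rcases Finset.mem_insert.mp hQ with rfl | hQ
      · exact hIP
      · exact hI Q hQ
  rw [← (Equiv.ofBijective G hG).hasSum_iff] at h3
  rw [mul_sub, mul_one]
  exact h3

open scoped Classical in
theorem TT_all (S : Finset (Ideal (𝓞 K))) (hS : ∀ Q ∈ S, Q.IsPrime ∧ Q ≠ ⊥) :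
    ∃ E : ℂ → ℂ, Differentiable ℂ E ∧ E 1 ≠ 0 ∧ ∀ s z : ℂ,
      HasSum (fun I : {I : Ideal (𝓞 K) // I ≠ ⊥} =>
        ((Ideal.absNorm (I : Ideal (𝓞 K)) : ℕ) : ℂ) ^ (-s)) z →
      HasSum (fun I : TT K S => ((nI I.1 : ℕ) : ℂ) ^ (-s)) (z * E s) := by
  induction S using Finset.induction_on with
  | empty =>
    refine ⟨fun _ => 1, by fun_prop, one_ne_zero, fun s z h => ?_⟩
    rw [mul_one]
    let e : TT K ∅ ≃ {I : Ideal (𝓞 K) // I ≠ ⊥} :=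
      { toFun := fun I => ⟨I.1, I.2.1⟩
        invFun := fun I => ⟨I.1, I.2, by simp⟩
        left_inv := fun _ => rfl
        right_inv := fun _ => rfl }
    rw [← e.hasSum_iff] at h
    refine h.congr_fun fun I => ?_
    rw [nI_eq]
    rfl
  | insert P S hPS ih =>
    obtain ⟨E, hE, hE1, h⟩ := ih fun Q hQ => hS Q (Finset.mem_insert_of_mem hQ)
    obtain ⟨hP, hP0⟩ := hS P (Finset.mem_insert_self _ _)
    have hnP : nI P ≠ 0 := (nI_ne K P).mpr hP0
    refine ⟨fun s => E s * (1 - ((nI P : ℕ) : ℂ) ^ (-s)), ?_, mul_ne_zero hE1 ?_, fun s z hz => ?_⟩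
    · refine hE.mul ((differentiable_const _).sub ?_)
      refine Differentiable.const_cpow (by fun_prop) (Or.inl ?_)
      exact_mod_cast hnP
    · rw [Complex.cpow_neg_one, sub_ne_zero, ne_comm, Ne, inv_eq_one]
      · intro h1
        have h1 : nI P = 1 := by exact_mod_cast h1
        rw [nI_eq, Ideal.absNorm_eq_one_iff] at h1
        exact hP.ne_top h1
    · rw [← mul_assoc]
      exact TT_step K s S P hP hP0 hPS (fun Q hQ => (hS Q (Finset.mem_insert_of_mem hQ)).1) _
        (h s z hz)

def UU (S : Finset (Ideal (𝓞 K))) : Type _ :=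
  {I : Ideal (𝓞 K) // I ≠ ⊥ ∧ ∀ P : Ideal (𝓞 K), P.IsPrime → I ≤ P → P ∈ S}

open scoped Classical in
theorem UU_all (S : Finset (Ideal (𝓞 K))) (hS : ∀ Q ∈ S, Q.IsPrime ∧ Q ≠ ⊥) (σ : ℝ) (hσ : 0 < σ) :
    Summable (fun I : UU K S => ((nI I.1 : ℕ) : ℝ) ^ (-σ)) := by
  induction S using Finset.induction_on with
  | empty =>
    have h1 : ∀ I : UU K ∅, I.1 = ⊤ := by
      intro I
      by_contra h
      obtain ⟨M, hM, hIM⟩ := Ideal.exists_le_maximal _ h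
      simpa using I.2.2 M hM.isPrime hIM
    have : Subsingleton (UU K ∅) := ⟨fun I J => Subtype.ext ((h1 I).trans (h1 J).symm)⟩
    exact Summable.of_finite
  | insert P S hPS ih =>
    have ih := ih fun Q hQ => hS Q (Finset.mem_insert_of_mem hQ)
    obtain ⟨hP, hP0⟩ := hS P (Finset.mem_insert_self _ _)
    have hnP : nI P ≠ 0 := (nI_ne K P).mpr hP0
    have hnP1 : nI P ≠ 1 := by
      intro h1
      rw [nI_eq, Ideal.absNorm_eq_one_iff] at h1
      exact hP.ne_top h1
    have hnP2 : (1 : ℝ) < nI P := by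
      have : 1 < nI P := by omega
      exact_mod_cast this
    have hex : ∀ I : UU K (insert P S), ∃ x : UU K S × ℕ, I.1 = P ^ x.2 * x.1.1 := by
      intro I
      have hfin : FiniteMultiplicity P I.1 :=
        FiniteMultiplicity.of_not_isUnit (by rw [Ideal.isUnit_iff]; exact hP.ne_top) I.2.1
      obtain ⟨J, hJ, hPJ⟩ := hfin.exists_eq_pow_mul_and_not_dvd
      have hJ0 : J ≠ ⊥ := fun h => I.2.1 (by rw [hJ, h, Ideal.mul_bot])
      refine ⟨⟨⟨J, hJ0, fun Q hQ hJQ => ?_⟩, _⟩, hJ⟩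
      have h1 : I.1 ≤ Q := by rw [hJ]; exact Ideal.mul_le_right.trans hJQ
      rcases Finset.mem_insert.mp (I.2.2 Q hQ h1) with rfl | h2
      · exact absurd (Ideal.dvd_iff_le.mpr hJQ) hPJ
      · exact h2
    choose G hG using hex
    have hGi : Function.Injective G := fun I J h => Subtype.ext (by rw [hG I, hG J, h])
    have hgeo : Summable fun n : ℕ => (((nI P : ℕ) : ℝ) ^ (-σ)) ^ n := by
      refine summable_geometric_of_lt_one (by positivity) ?_
      exact Real.rpow_lt_one_of_one_lt_of_neg hnP2 (by linarith)
    have h2 := ih.mul_of_nonneg hgeo (fun _ => by positivity) (fun _ => by positivity)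
    refine (h2.comp_injective hGi).congr fun I => ?_
    change ((nI (G I).1.1 : ℕ) : ℝ) ^ (-σ) * (((nI P : ℕ) : ℝ) ^ (-σ)) ^ (G I).2 = _
    rw [hG I, nI_mul]
    have : nI (P ^ (G I).2) = nI P ^ (G I).2 := by simp only [nI_eq, map_pow]
    rw [this, Nat.cast_mul, Real.mul_rpow (by positivity) (by positivity), mul_comm, Nat.cast_pow,
      ← Real.rpow_natCast, ← Real.rpow_natCast, ← Real.rpow_mul (by positivity),
      ← Real.rpow_mul (by positivity), mul_comm (-σ)]

theorem QS_K (N : ℕ) (S : Finset (Ideal (𝓞 K))) (hS : ∀ Q ∈ S, Q.IsPrime ∧ Q ≠ ⊥)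
    (hcop : ∀ I : Ideal (𝓞 K), I ≠ ⊥ → ((nI I).Coprime N ↔ ∀ P ∈ S, ¬ I ≤ P)) :
    QS (𝓞 K) 1 N := by
  intro σ hσ
  have h1 := UU_all K S hS σ (by linarith)
  have hG : ∀ I : Smo (𝓞 K) N, I.1 ≠ ⊥ ∧ ∀ P : Ideal (𝓞 K), P.IsPrime → I.1 ≤ P → P ∈ S := by
    intro I
    refine ⟨(nI_ne K _).mp I.2.1, fun P hP hle => ?_⟩
    by_contra hPS
    have hP0 : P ≠ ⊥ := fun h => (nI_ne K _).mp I.2.1 (le_bot_iff.mp (h ▸ hle))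
    have h2 : (nI P).Coprime N := by
      rw [hcop P hP0]
      intro Q hQ hPQ
      exact hPS ((hP.isMaximal hP0).eq_of_le (hS Q hQ).1.ne_top hPQ ▸ hQ)
    obtain ⟨J, hJ⟩ := Ideal.dvd_iff_le.mpr hle
    have h3 : nI P ∣ nI I.1 := by rw [hJ, nI_mul]; exact dvd_mul_right _ _
    have h4 := Sm.coprime h2 (I.2.2.of_dvd h3)
    rw [Nat.coprime_self, nI_eq, Ideal.absNorm_eq_one_iff] at h4
    exact hP.ne_top h4
  have hi : Function.Injective (fun I : Smo (𝓞 K) N => (⟨I.1, hG I⟩ : UU K S)) := by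
    intro I J h
    have h' : I.1 = J.1 := congrArg (fun x : UU K S => x.1) h
    exact Subtype.ext h'
  exact summable_inj h1 (fun I : Smo (𝓞 K) N => (⟨I.1, hG I⟩ : UU K S)) hi fun I => rfl

theorem Q_K : Q (𝓞 K) 1 := by
  classical
  obtain ⟨δ, hδ, g, hg, hg1, hgs⟩ := zetaK K
  refine ⟨min δ 1, lt_min hδ one_pos, fun N hN => ?_⟩
  have hN0 : Ideal.span {(N : 𝓞 K)} ≠ ⊥ := by
    rw [Ne, Ideal.span_singleton_eq_bot]; exact_mod_cast hN
  let S : Finset (Ideal (𝓞 K)) := (normalizedFactors (Ideal.span {(N : 𝓞 K)})).toFinset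
  have hmem : ∀ P, P ∈ S ↔ P.IsPrime ∧ (N : 𝓞 K) ∈ P := fun P => by
    rw [Multiset.mem_toFinset, Ideal.mem_normalizedFactors_iff hN0,
      Ideal.span_singleton_le_iff_mem]
  have hS : ∀ Q ∈ S, Q.IsPrime ∧ Q ≠ ⊥ := fun Q hQ => by
    refine ⟨((hmem Q).mp hQ).1, fun h => ?_⟩
    have := ((hmem Q).mp hQ).2
    rw [h, Ideal.mem_bot] at this
    exact hN (by exact_mod_cast this)
  have hcop : ∀ I : Ideal (𝓞 K), I ≠ ⊥ → ((nI I).Coprime N ↔ ∀ P ∈ S, ¬ I ≤ P) := by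
    intro I hI
    rw [coprime_iff ((nI_ne K I).mpr hI)]
    constructor
    · rintro ⟨u, hu⟩ P hP hle
      obtain ⟨h1, h2⟩ := (hmem P).mp hP
      apply h1.ne_top
      rw [Ideal.eq_top_iff_one]
      have := P.add_mem (hle hu) (P.mul_mem_right u h2)
      rwa [sub_add_cancel] at this
    · intro h
      have h1 : I ⊔ Ideal.span {(N : 𝓞 K)} = ⊤ := by
        by_contra h1
        obtain ⟨M, hM, hle⟩ := Ideal.exists_le_maximal _ h1
        refine h M ((hmem M).mpr ⟨hM.isPrime, ?_⟩) (le_sup_left.trans hle)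
        exact hle (Ideal.mem_sup_right (Ideal.mem_span_singleton_self _))
      rw [Ideal.eq_top_iff_one] at h1
      obtain ⟨y, hy, z, hz, hyz⟩ := Submodule.mem_sup.mp h1
      obtain ⟨w, rfl⟩ := Ideal.mem_span_singleton.mp hz
      exact ⟨w, by rw [← hyz, add_sub_cancel_right]; exact hy⟩
  refine ⟨QS.mono (δ := 1) (QS_K K N S hS hcop) (min_le_right _ _), ?_⟩
  · refine QC.mono (δ := δ) ?_ (min_le_left _ _)
    obtain ⟨E, hE, hE1, h⟩ := TT_all K S hS
    refine ⟨fun s => g s * E s, hg.mul hE.differentiableOn, mul_ne_zero hg1 hE1, fun s hs => ?_⟩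
    have h1 := h s _ (hgs s hs)
    let e : Cop (𝓞 K) N ≃ TT K S :=
      { toFun := fun I => ⟨I.1, (nI_ne K _).mp I.2.1, (hcop _ ((nI_ne K _).mp I.2.1)).mp I.2.2⟩
        invFun := fun I => ⟨I.1, (nI_ne K _).mpr I.2.1, (hcop _ I.2.1).mpr I.2.2⟩
        left_inv := fun _ => rfl
        right_inv := fun _ => rfl }
    rw [← e.hasSum_iff] at h1
    rw [pow_one, mul_div_right_comm]
    exact h1
end Ded
end CubicZeta
end Part11

section Part12
namespace CubicZeta

section Chain
variable {R R' : Type*} [CommRing R] [CommRing R']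

noncomputable def n0 (π : R →+* ℤ) (I : Ideal R) : ℕ := nI (I.map π)

theorem pi_surj (π : R →+* ℤ) : Function.Surjective π := fun n => ⟨n, by simp⟩

theorem n0_mem (π : R →+* ℤ) (I : Ideal R) : ∃ r ∈ I, π r = n0 π I := by
  have h := nI_mem (I.map π)
  obtain ⟨r, hr, h⟩ := (Ideal.mem_map_iff_of_surjective π (pi_surj π)).mp h
  exact ⟨r, hr, h.trans (by rw [n0])⟩

theorem n0_dvd (π : R →+* ℤ) (I : Ideal R) {r : R} (hr : r ∈ I) : (n0 π I : ℤ) ∣ π r := by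
  have h := Ideal.mem_map_of_mem π hr
  rw [← Int.ideal_span_absNorm_eq_self (I.map π), Ideal.mem_span_singleton, Ideal.absNorm_apply,
    Submodule.cardQuot_apply] at h
  exact h

theorem n0_unique (π : R →+* ℤ) (I : Ideal R) (n : ℕ) (h1 : ∃ r ∈ I, π r = n)
    (h2 : ∀ r ∈ I, (n : ℤ) ∣ π r) : n0 π I = n := by
  obtain ⟨r, hr, h⟩ := h1
  obtain ⟨r', hr', h'⟩ := n0_mem π I
  refine Nat.dvd_antisymm ?_ ?_
  · have := n0_dvd π I hr
    rw [h] at this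
    exact_mod_cast this
  · have := h2 r' hr'
    rw [h'] at this
    exact_mod_cast this

theorem n0_ne_zero (π : R →+* ℤ) {I : Ideal R} (hI : nI I ≠ 0) : n0 π I ≠ 0 := by
  intro h
  have := n0_dvd π I (nI_mem I)
  rw [h, map_natCast] at this
  simp at this
  exact hI this

variable (π : R →+* ℤ) (x : R) (hπ : ∀ r, π r = 0 ↔ x ∣ r) (ρ : R →+* R')
  (hρs : Function.Surjective ρ) (hρ : ∀ r, ρ r = 0 ↔ x * r = 0) (π' : R' →+* ℤ)
  (hπ' : ∀ r, π' (ρ r) = π r)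

def II (I : Ideal R) : Ideal R' := Ideal.map ρ (Submodule.comap (LinearMap.mulLeft R x) I)

include hρs hρ in
theorem mem_II (I : Ideal R) (u : R) : ρ u ∈ II x ρ I ↔ x * u ∈ I := by
  rw [II, Ideal.mem_map_iff_of_surjective ρ hρs]
  constructor
  · rintro ⟨w, hw, h⟩
    have hw : x * w ∈ I := hw
    have h1 : x * (u - w) = 0 := (hρ _).mp (by rw [map_sub, h, sub_self])
    have : x * u = x * w := by linear_combination h1
    rwa [this]
  · intro h
    exact ⟨u, h, rfl⟩

include hπ in
theorem expand (r : R) : ∃ u, r = (π r : R) + x * u := by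
  obtain ⟨u, hu⟩ := (hπ (r - (π r : R))).mp (by simp)
  exact ⟨u, by rw [← hu]; ring⟩

include hπ hρs hρ in
theorem nI_chain (I : Ideal R) (h0 : n0 π I ≠ 0) : nI I = n0 π I * nI (II x ρ I) := by
  obtain ⟨r0, hr0, hπ0⟩ := n0_mem π I
  have hpx : π x = 0 := (hπ x).mpr dvd_rfl
  have hpx' : ∀ u, π (x * u) = 0 := fun u => by rw [map_mul, hpx, zero_mul]
  choose l hl using hρs
  set n := n0 π I with hn
  let F : Fin n × (R' ⧸ II x ρ I) → R ⧸ I := fun p =>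
    Ideal.Quotient.mk I (((p.1 : ℕ) : R) + x * l (Quotient.out p.2))
  have hF : Function.Bijective F := by
    constructor
    · rintro ⟨a, b⟩ ⟨a', b'⟩ h
      have h1 := Ideal.Quotient.eq.mp h
      have h2 := n0_dvd π I h1
      rw [← hn] at h2
      simp only [map_sub, map_add, hpx', add_zero, map_natCast] at h2
      have ha : a = a' := by
        have h3 : ((a' : ℕ) : ℤ) ≡ ((a : ℕ) : ℤ) [ZMOD n] := (Int.modEq_iff_dvd).mpr h2
        have h4 := Int.natCast_modEq_iff.mp h3
        exact Fin.ext (Nat.ModEq.eq_of_lt_of_lt h4.symm a.2 a'.2)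
      subst ha
      have h5 : x * (l (Quotient.out b) - l (Quotient.out b')) ∈ I := by
        convert h1 using 1; ring
      rw [← mem_II x ρ (fun y => ⟨l y, hl y⟩) hρ, map_sub, hl, hl] at h5
      have h6 := Ideal.Quotient.eq.mpr h5
      have h7 : b = b' := by
        rw [← Quotient.out_eq b, ← Quotient.out_eq b']
        exact h6
      rw [h7]
    · intro y
      obtain ⟨y, rfl⟩ := Ideal.Quotient.mk_surjective y
      have hnz : (n : ℤ) ≠ 0 := by exact_mod_cast h0
      have hm0 := Int.emod_nonneg (π y) hnz
      have hm1 := Int.emod_lt_of_pos (π y) (by positivity : (0 : ℤ) < n)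
      obtain ⟨k, hk⟩ := Int.eq_ofNat_of_zero_le hm0
      have hkn : k < n := by rw [hk] at hm1; exact_mod_cast hm1
      have h1 : π (y - (π y / n : ℤ) * r0 - k) = 0 := by
        rw [map_sub, map_sub, map_mul, hπ0, map_intCast, map_natCast]
        have h2 := Int.emod_add_mul_ediv (π y) n
        rw [hk] at h2
        simp only [Int.cast_id]
        have h3 : (Int.ofNat k) = (k : ℤ) := rfl
        linarith [mul_comm (n : ℤ) (π y / n)]
      obtain ⟨u, hu⟩ := (hπ _).mp h1
      refine ⟨(⟨k, hkn⟩, Ideal.Quotient.mk _ (ρ u)), ?_⟩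
      change Ideal.Quotient.mk I ((k : R) + x * l (Quotient.out (Ideal.Quotient.mk (II x ρ I) (ρ u))))
        = _
      rw [Ideal.Quotient.eq]
      have h3 : ρ u - Quotient.out (Ideal.Quotient.mk (II x ρ I) (ρ u)) ∈ II x ρ I := by
        rw [← Ideal.Quotient.eq]
        exact (Quotient.out_eq _).symm
      set w := Quotient.out (Ideal.Quotient.mk (II x ρ I) (ρ u))
      rw [← hl w, ← map_sub, mem_II x ρ (fun y => ⟨l y, hl y⟩) hρ] at h3
      have h4 : (k : R) + x * l w - y = -(x * (u - l w)) - (π y / n : ℤ) * r0 := by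
        linear_combination (-1 : R) * hu
      rw [h4]
      exact I.sub_mem (I.neg_mem h3) (I.mul_mem_left _ hr0)
  rw [nI, ← Nat.card_congr (Equiv.ofBijective F hF), Nat.card_prod, Nat.card_fin]
  rfl

include hπ hρs hρ hπ' in
theorem n1_dvd (I : Ideal R) : n0 π' (II x ρ I) ∣ n0 π I := by
  obtain ⟨r0, hr0, hπ0⟩ := n0_mem π I
  have h1 : ρ r0 ∈ II x ρ I := (mem_II x ρ hρs hρ I r0).mpr (I.mul_mem_left _ hr0)
  have := n0_dvd π' _ h1
  rw [hπ', hπ0] at this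
  exact_mod_cast this

/-- number of solutions of `n + x v = 0` -/
theorem card_sol (π' : R' →+* ℤ) (x' : R') (hx' : ∀ r, π' r = 0 ↔ x' ∣ r) (J : Ideal R')
    (hJ : nI J ≠ 0) (n : ℕ) (hn : n0 π' J ∣ n) :
    Nat.card {v : R' ⧸ J // (n : R' ⧸ J) + Ideal.Quotient.mk J x' * v = 0} = n0 π' J := by
  have hfinJ := nI_finite hJ
  set f : (R' ⧸ J) →+ (R' ⧸ J) := AddMonoidHom.mulLeft (Ideal.Quotient.mk J x') with hf
  have hpx : π' x' = 0 := (hx' x').mpr dvd_rfl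
  have e1 : Nat.card f.ker = f.range.index := by
    have h1 := AddSubgroup.card_mul_index f.ker
    have h2 := AddSubgroup.card_mul_index f.range
    rw [AddSubgroup.index_ker] at h1
    rw [← h2, mul_comm] at h1
    exact Nat.eq_of_mul_eq_mul_left Nat.card_pos h1
  have e2 : f.range.index = n0 π' J := by
    rw [← AddSubgroup.index_comap_of_surjective f.range
      (f := (Ideal.Quotient.mk J : R' →+* R' ⧸ J).toAddMonoidHom) Ideal.Quotient.mk_surjective]
    have h1 : n0 π' J = (Submodule.toAddSubgroup (J.map π')).index :=
      (Submodule.cardQuot_apply _).symm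
    rw [h1, ← AddSubgroup.index_comap_of_surjective _ (f := π'.toAddMonoidHom) (pi_surj π')]
    congr 1
    ext r
    change (∃ y, f y = Ideal.Quotient.mk J r) ↔ π' r ∈ J.map π'
    constructor
    · rintro ⟨y, hy⟩
      obtain ⟨y, rfl⟩ := Ideal.Quotient.mk_surjective y
      have h2 : Ideal.Quotient.mk J (x' * y) = Ideal.Quotient.mk J r := by rw [map_mul]; exact hy
      have h3 := Ideal.mem_map_of_mem π' (Ideal.Quotient.eq.mp h2)
      rw [map_sub, map_mul, hpx, zero_mul, zero_sub] at h3
      simpa using h3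
    · intro h
      obtain ⟨j, hj, h2⟩ := (Ideal.mem_map_iff_of_surjective π' (pi_surj π')).mp h
      obtain ⟨u, hu⟩ := (hx' (r - j)).mp (by rw [map_sub, h2, sub_self])
      refine ⟨Ideal.Quotient.mk J u, ?_⟩
      change Ideal.Quotient.mk J x' * Ideal.Quotient.mk J u = _
      rw [← map_mul, Ideal.Quotient.eq, ← hu, sub_sub_cancel_left]
      exact J.neg_mem hj
  rw [← e2, ← e1]
  obtain ⟨j, hj, hj2⟩ := n0_mem π' J
  obtain ⟨c, hc⟩ := hn
  obtain ⟨w, hw⟩ := (hx' ((n : R') - c * j)).mp (by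
    rw [map_sub, map_mul, map_natCast, map_natCast, hj2, hc]; push_cast; ring)
  have hw2 : (n : R' ⧸ J) = Ideal.Quotient.mk J x' * Ideal.Quotient.mk J w := by
    rw [← map_mul, ← hw, map_sub, map_mul, Ideal.Quotient.eq_zero_iff_mem.mpr hj]
    simp
  refine Nat.card_congr
    { toFun := fun v => ⟨v.1 + Ideal.Quotient.mk J w, ?_⟩
      invFun := fun v => ⟨v.1 - Ideal.Quotient.mk J w, ?_⟩
      left_inv := fun v => by simp
      right_inv := fun v => by simp }
  · change Ideal.Quotient.mk J x' * (v.1 + Ideal.Quotient.mk J w) = 0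
    have h5 : (n : R' ⧸ J) + Ideal.Quotient.mk J x' * v.1 = 0 := v.2
    linear_combination h5 - hw2
  · have : Ideal.Quotient.mk J x' * v.1 = 0 := v.2
    rw [hw2]
    linear_combination this

end Chain
end CubicZeta
end Part12

section Part13
namespace CubicZeta

theorem hasSum_fib_rev {ι κ : Type*} (ν : ι → κ) (hfin : ∀ k, Finite {i // ν i = k}) (F : κ → ℂ)
    (z : ℂ) (h : HasSum (fun k => (Nat.card {i // ν i = k} : ℂ) * F k) z) :
    HasSum (fun i => F (ν i)) z := by
  have h1 : Summable (fun i => ‖F (ν i)‖) := by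
    refine summable_fib ν hfin (fun k => ‖F k‖) (fun k => norm_nonneg _) ?_
    refine h.summable.norm.congr fun k => ?_
    rw [norm_mul, Complex.norm_natCast]
  have h2 := h1.of_norm.hasSum
  have h3 := hasSum_fib ν hfin F _ h2
  rwa [h3.unique h] at h2

section Chain
variable {R R' : Type*} [CommRing R] [CommRing R']

theorem n0_dvd_nI (π : R →+* ℤ) (I : Ideal R) : n0 π I ∣ nI I := by
  have h1 : n0 π I = (Submodule.toAddSubgroup (I.map π)).index :=
    (Submodule.cardQuot_apply _).symm
  have h2 : nI I = (Submodule.toAddSubgroup I).index := (Submodule.cardQuot_apply _).symm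
  rw [h1, h2, ← AddSubgroup.index_comap_of_surjective _ (f := π.toAddMonoidHom) (pi_surj π)]
  refine AddSubgroup.index_dvd_of_le ?_
  intro r hr
  exact Ideal.mem_map_of_mem π hr

variable (π : R →+* ℤ) (x : R) (hπ : ∀ r, π r = 0 ↔ x ∣ r) (ρ : R →+* R')
  (hρs : Function.Surjective ρ) (hρ : ∀ r, ρ r = 0 ↔ x * r = 0) (π' : R' →+* ℤ)
  (hπ' : ∀ r, π' (ρ r) = π r)

include hπ in
/-- the ideal attached to a solution -/
theorem exists_ideal (J : Ideal R') (n : ℕ) (v : R)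
    (hv : ρ ((n : R) + x * v) ∈ J) :
    ∃ I : Ideal R, ∀ r, r ∈ I ↔ ∃ k : ℤ, ∃ u, ρ u ∈ J ∧ r = k * ((n : R) + x * v) + x * u := by
  refine ⟨{ carrier := {r | ∃ k : ℤ, ∃ u, ρ u ∈ J ∧ r = k * ((n : R) + x * v) + x * u}
            add_mem' := ?_, zero_mem' := ?_, smul_mem' := ?_ }, fun r => Iff.rfl⟩
  · rintro a b ⟨k, u, hu, rfl⟩ ⟨k', u', hu', rfl⟩
    exact ⟨k + k', u + u', by rw [map_add]; exact J.add_mem hu hu', by push_cast; ring⟩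
  · exact ⟨0, 0, by simp, by simp⟩
  · rintro c a ⟨k, u, hu, rfl⟩
    obtain ⟨w, hw⟩ := expand π x hπ c
    refine ⟨π c * k, w * k * ((n : R) + x * v) + c * u, ?_, ?_⟩
    · rw [map_add, map_mul, map_mul ρ c]
      exact J.add_mem (J.mul_mem_left _ hv) (J.mul_mem_left _ hu)
    · rw [smul_eq_mul]
      push_cast
      linear_combination (k * ((n : R) + x * v)) * hw

include hπ hρs hρ hπ' in
theorem card_fiber (J : Ideal R') (hJ : nI J ≠ 0) (n : ℕ) (hn0 : n ≠ 0) (hn : n0 π' J ∣ n) :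
    Nat.card {I : Ideal R // n0 π I = n ∧ II x ρ I = J} = n0 π' J := by
  have hpx : π x = 0 := (hπ x).mpr dvd_rfl
  have hpx' : ∀ u, π (x * u) = 0 := fun u => by rw [map_mul, hpx, zero_mul]
  have hx' : ∀ r, π' r = 0 ↔ ρ x ∣ r := by
    intro r
    obtain ⟨r, rfl⟩ := hρs r
    rw [hπ', hπ]
    constructor
    · exact fun h => map_dvd ρ h
    · rintro ⟨y, hy⟩
      obtain ⟨y, rfl⟩ := hρs y
      rw [← map_mul] at hy
      have h1 : π r = π (x * y) := by rw [← hπ', hy, hπ']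
      rw [hpx'] at h1
      exact (hπ r).mp h1
  rw [← card_sol π' (ρ x) hx' J hJ n hn]
  have key : ∀ I : {I : Ideal R // n0 π I = n ∧ II x ρ I = J}, ∃ v, (n : R) + x * v ∈ I.1 := by
    intro I
    obtain ⟨r, hr, h⟩ := n0_mem π I.1
    obtain ⟨v, hv⟩ := expand π x hπ r
    refine ⟨v, ?_⟩
    rw [h, I.2.1] at hv
    rw [hv] at hr
    simpa using hr
  choose V hV using key
  refine Nat.card_congr (Equiv.ofBijective (fun I => ⟨Ideal.Quotient.mk J (ρ (V I)), ?_⟩) ⟨?_, ?_⟩)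
  · have h1 : ρ ((n : R) + x * V I) ∈ II x ρ I.1 :=
      (mem_II x ρ hρs hρ _ _).mpr (I.1.mul_mem_left _ (hV I))
    rw [I.2.2] at h1
    have h2 := Ideal.Quotient.eq_zero_iff_mem.mpr h1
    simpa using h2
  · have aux : ∀ I I' : {I : Ideal R // n0 π I = n ∧ II x ρ I = J},
        Ideal.Quotient.mk J (ρ (V I)) = Ideal.Quotient.mk J (ρ (V I')) → I.1 ≤ I'.1 := by
      intro I I' h r hr
      obtain ⟨k, hk⟩ := n0_dvd π I.1 hr
      rw [I.2.1] at hk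
      obtain ⟨u, hu⟩ := (hπ (r - k * ((n : R) + x * V I))).mp (by
        rw [map_sub, map_mul, map_add, hpx', hk]; simp; ring)
      have h1 : x * u ∈ I.1 := by rw [← hu]; exact I.1.sub_mem hr (I.1.mul_mem_left _ (hV I))
      rw [← mem_II x ρ hρs hρ, I.2.2, ← I'.2.2, mem_II x ρ hρs hρ] at h1
      have h2 := Ideal.Quotient.eq.mp h
      rw [← map_sub, ← I'.2.2, mem_II x ρ hρs hρ] at h2
      have h3 : r = k * ((n : R) + x * V I') + k * (x * (V I - V I')) + x * u := by
        linear_combination hu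
      rw [h3]
      exact I'.1.add_mem (I'.1.add_mem (I'.1.mul_mem_left _ (hV I')) (I'.1.mul_mem_left _ h2)) h1
    intro I I' h
    have h := congrArg Subtype.val h
    exact Subtype.ext (le_antisymm (aux I I' h) (aux I' I h.symm))
  · rintro ⟨v, hv⟩
    obtain ⟨v, rfl⟩ := Ideal.Quotient.mk_surjective v
    obtain ⟨v, rfl⟩ := hρs v
    have hv' : ρ ((n : R) + x * v) ∈ J := by
      rw [← Ideal.Quotient.eq_zero_iff_mem]
      simpa using hv
    obtain ⟨I, hI⟩ := exists_ideal π x hπ ρ J n v hv'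
    have hnv : (n : R) + x * v ∈ I := (hI _).mpr ⟨1, 0, by simp, by simp⟩
    have hI0 : n0 π I = n := by
      refine n0_unique π I n ⟨_, hnv, by rw [map_add, hpx']; simp⟩ ?_
      intro r hr
      obtain ⟨k, u, hu, rfl⟩ := (hI r).mp hr
      rw [map_add, map_mul, map_add, hpx', hpx']
      simp
    have hxu : ∀ u, x * u ∈ I ↔ ρ u ∈ J := by
      intro u
      rw [hI]
      constructor
      · rintro ⟨k, w, hw, h⟩
        have h1 := congrArg π h
        rw [map_add, map_mul π (k : R), map_add, hpx', hpx', hpx'] at h1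
        simp [hn0] at h1
        rw [h1] at h
        have h2 : x * (u - w) = 0 := by simp at h; linear_combination h
        rw [← hρ, map_sub, sub_eq_zero] at h2
        rwa [h2]
      · intro h
        exact ⟨0, u, h, by simp⟩
    have hIJ : II x ρ I = J := by
      ext y
      obtain ⟨y, rfl⟩ := hρs y
      rw [mem_II x ρ hρs hρ, hxu]
    refine ⟨⟨I, hI0, hIJ⟩, Subtype.ext ?_⟩
    change Ideal.Quotient.mk J (ρ (V ⟨I, hI0, hIJ⟩)) = Ideal.Quotient.mk J (ρ v)
    rw [Ideal.Quotient.eq, ← map_sub, ← hxu]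
    have h1 := I.sub_mem (hV ⟨I, hI0, hIJ⟩) hnv
    convert h1 using 1
    ring

end Chain
end CubicZeta
end Part13

section Part14
namespace CubicZeta

def PN (P : ℕ → Prop) : Type := {q : ℕ // q ≠ 0 ∧ P q}
def PI (R : Type*) [CommRing R] (P : ℕ → Prop) : Type _ := {I : Ideal R // nI I ≠ 0 ∧ P (nI I)}

theorem term_q (q a : ℕ) (hq : q ≠ 0) (s : ℂ) :
    (q : ℂ) ^ a * ((q ^ (a + 1) : ℕ) : ℂ) ^ (-s) = (q : ℂ) ^ (-((a + 1) * s - a)) := by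
  have hq' : (q : ℂ) ≠ 0 := by exact_mod_cast hq
  have h1 : ∀ k : ℕ, ((q ^ k : ℕ) : ℂ) ^ (-s) = (q : ℂ) ^ (-((k : ℂ) * s)) := by
    intro k
    rw [show -((k : ℂ) * s) = (k : ℂ) * (-s) by ring, Complex.natCast_cpow_natCast_mul]
    push_cast; rfl
  rw [h1, ← Complex.cpow_natCast, ← Complex.cpow_add _ _ hq']
  congr 1
  push_cast; ring

theorem zeta_cop (N : ℕ) (hN : N ≠ 0) (a : ℕ) : ∃ g : ℂ → ℂ, Differentiable ℂ g ∧ g 1 ≠ 0 ∧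
    ∀ s : ℂ, 1 < s.re → HasSum (fun q : PN (fun k => k.Coprime N) =>
      (q.1 : ℂ) ^ a * ((q.1 ^ (a + 1) : ℕ) : ℂ) ^ (-s)) (g s / (s - 1)) := by
  have : NeZero N := ⟨hN⟩
  have ha : (a : ℂ) + 1 ≠ 0 := by exact_mod_cast Nat.succ_ne_zero a
  refine ⟨fun s => DirichletCharacter.LFunctionTrivChar₁ N ((a + 1) * s - a) / (a + 1), ?_, ?_, ?_⟩
  · have h := DirichletCharacter.differentiable_LFunctionTrivChar₁ N
    exact (h.comp (by fun_prop : Differentiable ℂ (fun s : ℂ => ((a : ℂ) + 1) * s - a))).div_const _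
  · have h := DirichletCharacter.LFunctionTrivChar₁_apply_one_ne_zero N
    have h1 : ((a : ℂ) + 1) * 1 - a = 1 := by ring
    simp only [h1]
    exact div_ne_zero h ha
  · intro s hs
    set w : ℂ := (a + 1) * s - a with hw
    have hwr : 1 < w.re := by
      rw [hw]
      simp only [Complex.sub_re, Complex.mul_re, Complex.add_re, Complex.natCast_re, Complex.one_re,
        Complex.add_im, Complex.natCast_im, Complex.one_im]
      have : (0 : ℝ) ≤ a := Nat.cast_nonneg a
      nlinarith
    have hw1 : w ≠ 1 := by intro h; rw [h] at hwr; simp at hwr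
    have hs1 : s - 1 ≠ 0 := by
      intro h; rw [sub_eq_zero] at h; rw [h] at hs; simp at hs
    have h1 := (DirichletCharacter.LSeriesSummable_of_one_lt_re
      (1 : DirichletCharacter ℂ N) hwr).LSeriesHasSum
    rw [← DirichletCharacter.LFunction_eq_LSeries _ hwr] at h1
    have h2 : DirichletCharacter.LFunctionTrivChar₁ N w / (a + 1) / (s - 1) =
        (1 : DirichletCharacter ℂ N).LFunction w := by
      rw [DirichletCharacter.LFunctionTrivChar₁, Function.update_of_ne hw1]
      have h3 : w - 1 = (a + 1) * (s - 1) := by rw [hw]; ring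
      rw [h3]
      field_simp
    change HasSum _ (DirichletCharacter.LFunctionTrivChar₁ N w / (a + 1) / (s - 1))
    rw [h2]
    have h4 := (hasSum_subtype_iff_of_support_subset (s := {q : ℕ | q ≠ 0 ∧ q.Coprime N}) ?_).mpr h1
    · refine h4.congr_fun fun q => ?_
      have hq : q.1 ≠ 0 := q.2.1
      have hqN : Nat.Coprime q.1 N := q.2.2
      rw [term_q _ _ hq, ← hw, Function.comp_apply, LSeries.term_of_ne_zero hq,
        MulChar.one_apply ((ZMod.isUnit_iff_coprime _ _).mpr hqN), Complex.cpow_neg, one_div]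
    · intro q hq
      rw [Function.mem_support] at hq
      constructor
      · rintro rfl
        simp at hq
      · by_contra hc
        apply hq
        rw [LSeries.term_def]
        rw [MulChar.map_nonunit _ (by rw [ZMod.isUnit_iff_coprime]; exact hc)]
        simp

theorem zeta_smo (N : ℕ) (hN : N ≠ 0) (a : ℕ) (σ : ℝ) (hσ : (a : ℝ) / (a + 1) < σ) :
    Summable (fun q : PN (fun k => Sm N k) =>
      (q.1 : ℂ) ^ a * ((q.1 ^ (a + 1) : ℕ) : ℂ) ^ (-(σ : ℂ))) := by
  have ha : (0 : ℝ) < (a : ℝ) + 1 := by positivity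
  set r : ℝ := (a + 1) * σ - a with hr
  have hr0 : 0 < r := by
    rw [div_lt_iff₀ ha] at hσ
    rw [hr]; linarith
  let F : ℕ →* ℝ :=
    { toFun := fun q => (q : ℝ) ^ (-r)
      map_one' := by simp
      map_mul' := fun x y => by
        rw [Nat.cast_mul, Real.mul_rpow (Nat.cast_nonneg _) (Nat.cast_nonneg _)] }
  have h1 := (EulerProduct.summable_and_hasSum_factoredNumbers_prod_filter_prime_geometric (f := F)
    (fun {p} hp => by
      change ‖(p : ℝ) ^ (-r)‖ < 1
      have hp1 : (1 : ℝ) < p := by exact_mod_cast hp.one_lt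
      rw [Real.norm_of_nonneg (by positivity)]
      exact Real.rpow_lt_one_of_one_lt_of_neg hp1 (by linarith)) N.primeFactors).1
  refine Summable.of_norm ?_
  refine summable_inj h1 (fun q : PN (fun k => Sm N k) => ⟨q.1, ?_⟩) ?_ ?_
  · rw [Nat.mem_factoredNumbers']
    intro p hp hd
    exact Nat.mem_primeFactors.mpr ⟨hp, q.2.2 p hp hd, hN⟩
  · intro q q' h
    exact Subtype.ext (congrArg (fun y : Nat.factoredNumbers N.primeFactors => y.1) h)
  · intro q
    change _ = ‖((q.1 : ℕ) : ℝ) ^ (-r)‖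
    have hq : 0 < q.1 := Nat.pos_of_ne_zero q.2.1
    rw [term_q _ _ q.2.1, Complex.norm_natCast_cpow_of_pos hq, Real.norm_of_nonneg (by positivity)]
    congr 1
    rw [hr]
    simp

/-- weighted term -/
noncomputable def WT {R : Type*} [CommRing R] (π : R →+* ℤ) (a : ℕ) (s : ℂ) (I : Ideal R) : ℂ :=
  (n0 π I : ℂ) ^ a * ((n0 π I ^ a * nI I : ℕ) : ℂ) ^ (-s)

section Chain
variable {R R' : Type*} [CommRing R] [CommRing R']
variable (π : R →+* ℤ) (x : R) (hπ : ∀ r, π r = 0 ↔ x ∣ r) (ρ : R →+* R')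
  (hρs : Function.Surjective ρ) (hρ : ∀ r, ρ r = 0 ↔ x * r = 0) (π' : R' →+* ℤ)
  (hπ' : ∀ r, π' (ρ r) = π r)

include hπ hρs hρ hπ' in
theorem step (P : ℕ → Prop) (hP : ∀ a b, P (a * b) ↔ P a ∧ P b) (a : ℕ) (s zA zB : ℂ)
    (hA : HasSum (fun q : PN P => (q.1 : ℂ) ^ a * ((q.1 ^ (a + 1) : ℕ) : ℂ) ^ (-s)) zA)
    (hB : HasSum (fun J : PI R' P => WT π' (a + 1) s J.1) zB) :
    HasSum (fun I : PI R P => WT π a s I.1) (zA * zB) := by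
  have hd : ∀ I : PI R P, n0 π I.1 = (n0 π I.1 / n0 π' (II x ρ I.1)) * n0 π' (II x ρ I.1) := by
    intro I
    exact (Nat.div_mul_cancel (n1_dvd π x hπ ρ hρs hρ π' hπ' I.1)).symm
  have hn : ∀ I : PI R P, nI I.1 = n0 π I.1 * nI (II x ρ I.1) := fun I =>
    nI_chain π x hπ ρ hρs hρ I.1 (n0_ne_zero π I.2.1)
  let D : PI R P → PN P × PI R' P := fun I =>
    (⟨n0 π I.1 / n0 π' (II x ρ I.1), by
      have h1 := n0_ne_zero π I.2.1
      rw [hd I] at h1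
      refine ⟨left_ne_zero_of_mul h1, ?_⟩
      have h2 := I.2.2
      rw [hn I, hP, hd I, hP] at h2
      exact h2.1.1⟩, ⟨II x ρ I.1, by
      have h1 := I.2.1
      have h2 := I.2.2
      rw [hn I] at h1 h2
      exact ⟨right_ne_zero_of_mul h1, ((hP _ _).mp h2).2⟩⟩)
  have hcard : ∀ k : PN P × PI R' P, Nat.card {I // D I = k} = n0 π' k.2.1 := by
    rintro ⟨q, J⟩
    have hJ0 := n0_ne_zero π' J.2.1
    have hq0 : q.1 * n0 π' J.1 ≠ 0 := mul_ne_zero q.2.1 hJ0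
    rw [← card_fiber π x hπ ρ hρs hρ π' hπ' J.1 J.2.1 (q.1 * n0 π' J.1) hq0
      (Dvd.intro_left _ rfl)]
    refine Nat.card_congr (Equiv.ofBijective (fun I => ⟨I.1.1, ?_, ?_⟩) ⟨?_, ?_⟩)
    · have h1 : (D I.1).1.1 = q.1 := by rw [I.2]
      have h2 : (D I.1).2.1 = J.1 := by rw [I.2]
      rw [hd I.1]
      change (D I.1).1.1 * n0 π' (D I.1).2.1 = _
      rw [h1, h2]
    · change (D I.1).2.1 = J.1
      rw [I.2]
    · intro I I' h
      have h := congrArg Subtype.val h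
      exact Subtype.ext (Subtype.ext h)
    · rintro ⟨I, h1, h2⟩
      have h3 : nI I = (q.1 * n0 π' J.1) * nI J.1 := by
        rw [nI_chain π x hπ ρ hρs hρ I (by rw [h1]; exact hq0), h1, h2]
      have hJP := J.2.2
      refine ⟨⟨⟨I, ?_, ?_⟩, ?_⟩, rfl⟩
      · rw [h3]
        exact mul_ne_zero hq0 J.2.1
      · rw [h3, hP, hP]
        refine ⟨⟨q.2.2, ?_⟩, hJP⟩
        obtain ⟨c, hc⟩ := n0_dvd_nI π' J.1
        rw [hc, hP] at hJP
        exact hJP.1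
      · refine Prod.ext (Subtype.ext ?_) (Subtype.ext h2)
        change n0 π I / n0 π' (II x ρ I) = q.1
        rw [h1, h2]
        exact Nat.mul_div_cancel _ (Nat.pos_of_ne_zero hJ0)
  have hfin : ∀ k, Finite {I // D I = k} := fun k => by
    apply Nat.finite_of_card_ne_zero
    rw [hcard]
    exact n0_ne_zero π' k.2.2.1
  have h := hasSum_mul' hA hB
  let F : PN P × PI R' P → ℂ := fun k => ((k.1.1 * n0 π' k.2.1 : ℕ) : ℂ) ^ a *
    (((k.1.1 * n0 π' k.2.1) ^ a * ((k.1.1 * n0 π' k.2.1) * nI k.2.1) : ℕ) : ℂ) ^ (-s)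
  have h2 := hasSum_fib_rev D hfin F (zA * zB) (h.congr_fun fun k => by
    rw [hcard]
    simp only [F, WT]
    have e : (k.1.1 * n0 π' k.2.1) ^ a * ((k.1.1 * n0 π' k.2.1) * nI k.2.1) =
      (k.1.1 ^ (a + 1)) * (n0 π' k.2.1 ^ (a + 1) * nI k.2.1) := by ring
    rw [e, Nat.cast_mul (k.1.1 ^ (a + 1)), Complex.natCast_mul_natCast_cpow]
    push_cast
    ring)
  refine h2.congr_fun fun I => ?_
  change WT π a s I.1 = ((n0 π I.1 / n0 π' (II x ρ I.1) * n0 π' (II x ρ I.1) : ℕ) : ℂ) ^ a *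
    (((n0 π I.1 / n0 π' (II x ρ I.1) * n0 π' (II x ρ I.1)) ^ a *
      ((n0 π I.1 / n0 π' (II x ρ I.1) * n0 π' (II x ρ I.1)) * nI (II x ρ I.1)) : ℕ) : ℂ) ^ (-s)
  rw [← hd I, ← hn I, WT]

end Chain

def WW {R : Type*} [CommRing R] (π : R →+* ℤ) (e : ℕ) : Prop := ∀ N : ℕ, N ≠ 0 → ∀ a : ℕ,
  (∃ g : ℂ → ℂ, Differentiable ℂ g ∧ g 1 ≠ 0 ∧ ∀ s : ℂ, 1 < s.re →
    HasSum (fun I : PI R (fun k => k.Coprime N) => WT π a s I.1) (g s / (s - 1) ^ (e + 1))) ∧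
  (∀ σ : ℝ, ((a : ℝ) + e) / (a + e + 1) < σ →
    Summable (fun I : PI R (fun k => Sm N k) => WT π a (σ : ℂ) I.1))

theorem hP_cop (N : ℕ) : ∀ a b : ℕ, (a * b).Coprime N ↔ a.Coprime N ∧ b.Coprime N :=
  fun _ _ => Nat.coprime_mul_iff_left

theorem hP_sm (N : ℕ) : ∀ a b : ℕ, Sm N (a * b) ↔ Sm N a ∧ Sm N b :=
  fun a b => ⟨fun h => ⟨h.of_dvd (Dvd.intro _ rfl), h.of_dvd (Dvd.intro_left _ rfl)⟩,
    fun h => h.1.mul h.2⟩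

theorem WW_step {R R' : Type*} [CommRing R] [CommRing R']
    (π : R →+* ℤ) (x : R) (hπ : ∀ r, π r = 0 ↔ x ∣ r) (ρ : R →+* R')
    (hρs : Function.Surjective ρ) (hρ : ∀ r, ρ r = 0 ↔ x * r = 0) (π' : R' →+* ℤ)
    (hπ' : ∀ r, π' (ρ r) = π r) (e : ℕ) (h : WW π' e) : WW π (e + 1) := by
  intro N hN a
  obtain ⟨⟨g, hg, hg1, hg2⟩, hS⟩ := h N hN (a + 1)
  constructor
  · obtain ⟨k, hk, hk1, hk2⟩ := zeta_cop N hN a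
    refine ⟨fun s => k s * g s, hk.mul hg, mul_ne_zero hk1 hg1, fun s hs => ?_⟩
    have h1 := step π x hπ ρ hρs hρ π' hπ' _ (hP_cop N) a s _ _ (hk2 s hs) (hg2 s hs)
    rwa [div_mul_div_comm, ← pow_succ'] at h1
  · intro σ hσ
    have h0 : (a : ℝ) + 1 > 0 := by positivity
    have h1 : (a : ℝ) + e + 1 > 0 := by positivity
    have h2 : (a : ℝ) + e + 1 + 1 > 0 := by positivity
    have h3 := zeta_smo N hN a σ (lt_of_le_of_lt (by
      push_cast
      rw [div_le_div_iff₀ (by positivity) (by positivity)]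
      have : (0 : ℝ) ≤ e := Nat.cast_nonneg e
      nlinarith) hσ)
    have h4 := hS σ (by
      convert hσ using 2 <;> (push_cast; ring))
    exact (step π x hπ ρ hρs hρ π' hπ' _ (hP_sm N) a σ _ _ h3.hasSum h4.hasSum).summable

theorem n0_id (I : Ideal ℤ) : n0 (RingHom.id ℤ) I = nI I := by rw [n0, Ideal.map_id]

theorem nI_span (q : ℕ) : nI (Ideal.span {(q : ℤ)}) = q := by
  have h : nI (Ideal.span {(q : ℤ)}) = Ideal.absNorm (Ideal.span {(q : ℤ)}) := by
    rw [Ideal.absNorm_apply, Submodule.cardQuot_apply]; rfl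
  rw [h]; simp

theorem span_nI (I : Ideal ℤ) : Ideal.span {((nI I : ℕ) : ℤ)} = I := by
  have h : nI I = Ideal.absNorm I := by
    rw [Ideal.absNorm_apply, Submodule.cardQuot_apply]; rfl
  rw [h]; exact Int.ideal_span_absNorm_eq_self I

noncomputable def eZ (P : ℕ → Prop) : PI ℤ P ≃ PN P where
  toFun I := ⟨nI I.1, I.2⟩
  invFun q := ⟨Ideal.span {(q.1 : ℤ)}, by rw [nI_span]; exact q.2⟩
  left_inv I := Subtype.ext (span_nI I.1)
  right_inv q := Subtype.ext (nI_span q.1)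

theorem WW_base : WW (RingHom.id ℤ) 0 := by
  intro N hN a
  have key : ∀ (s : ℂ) (I : Ideal ℤ), WT (RingHom.id ℤ) a s I =
      ((nI I : ℕ) : ℂ) ^ a * ((nI I ^ (a + 1) : ℕ) : ℂ) ^ (-s) := by
    intro s I
    rw [WT, n0_id, ← pow_succ]
  constructor
  · obtain ⟨k, hk, hk1, hk2⟩ := zeta_cop N hN a
    refine ⟨k, hk, hk1, fun s hs => ?_⟩
    rw [zero_add, pow_one]
    have h1 := (eZ _).hasSum_iff.mpr (hk2 s hs)
    exact h1.congr_fun fun I => key s I.1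
  · intro σ hσ
    have h1 := (eZ _).summable_iff.mpr (zeta_smo N hN a σ (by simpa using hσ))
    exact h1.congr fun I => (key σ I.1).symm

theorem WW_Q {R : Type*} [CommRing R] (π : R →+* ℤ) (e : ℕ) (h : WW π e) : Q R (e + 1) := by
  have hd : (0 : ℝ) < (e : ℝ) + 1 := by positivity
  refine ⟨1 / ((e : ℝ) + 1), by positivity, fun N hN => ?_⟩
  obtain ⟨⟨g, hg, hg1, hg2⟩, hS⟩ := h N hN 0
  have key : ∀ (s : ℂ) (I : Ideal R), WT π 0 s I = ((nI I : ℕ) : ℂ) ^ (-s) := by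
    intro s I
    rw [WT]; simp
  constructor
  · intro σ hσ
    have h1 := hS σ (by
      refine lt_of_le_of_lt (le_of_eq ?_) hσ
      push_cast
      field_simp
      ring)
    refine h1.norm.congr fun I => ?_
    have hI : 0 < nI I.1 := Nat.pos_of_ne_zero I.2.1
    rw [key, Complex.norm_natCast_cpow_of_pos hI]
    simp
  · refine ⟨g, hg.differentiableOn, hg1, fun s hs => ?_⟩
    exact (hg2 s hs).congr_fun fun I => (key s I.1).symm

end CubicZeta
end Part14

section Part15
namespace CubicZeta
open Polynomial

theorem finite_quot {O : Type*} [CommRing O] [Module.Finite ℤ O] (k : ℕ) (hk : k ≠ 0) :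
    Finite (O ⧸ Ideal.span {(k : O)}) := by
  have h1 : Module.Finite ℤ (O ⧸ Ideal.span {(k : O)}) :=
    Module.Finite.of_surjective
      ((Ideal.Quotient.mk (Ideal.span {(k : O)})).toAddMonoidHom.toIntLinearMap)
      Ideal.Quotient.mk_surjective
  refine Module.finite_of_fg_torsion _ ?_
  intro y
  obtain ⟨y, rfl⟩ := Ideal.Quotient.mk_surjective y
  refine ⟨⟨(k : ℤ), mem_nonZeroDivisors_of_ne_zero (by exact_mod_cast hk)⟩, ?_⟩
  change (k : ℤ) • Ideal.Quotient.mk (Ideal.span {(k : O)}) y = 0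
  rw [← map_zsmul, Ideal.Quotient.eq_zero_iff_mem, zsmul_eq_mul]
  refine Ideal.mul_mem_right _ _ ?_
  rw [Int.cast_natCast]
  exact Ideal.subset_span rfl

theorem monic_dvd {g : ℤ[X]} (hg : g.Monic) (k : ℤ) (hk : k ≠ 0) (p : ℤ[X])
    (h : g ∣ C k * p) : g ∣ p := by
  rw [← modByMonic_eq_zero_iff_dvd hg] at h ⊢
  rw [← smul_eq_C_mul, smul_modByMonic, smul_eq_zero] at h
  exact h.resolve_left hk

def Good (g : ℤ[X]) (m : ℕ) : Prop := ∃ (O : Type) (_ : CommRing O) (φ : ℤ[X] →+* O) (N : ℕ),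
  Q O m ∧ Module.Finite ℤ O ∧ (∀ k : ℕ, k ≠ 0 → ∀ o : O, (k : O) * o = 0 → o = 0) ∧
  (∀ p, φ p = 0 ↔ g ∣ p) ∧ N ≠ 0 ∧ ∀ o, ∃ p, φ p = (N : O) * o

theorem Good_one : Good 1 0 := by
  refine ⟨PUnit, inferInstance, ⟨⟨⟨fun _ => PUnit.unit, rfl⟩, fun _ _ => rfl⟩, rfl, fun _ _ => rfl⟩, 1, Q_triv, inferInstance, ?_, ?_, one_ne_zero, ?_⟩
  · intros; rfl
  · intro p; simp
  · intro o; exact ⟨0, rfl⟩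

theorem Good_mul {g h : ℤ[X]} {m n : ℕ} (hg : g.Monic) (hh : h.Monic) (u v : ℤ[X]) (M : ℕ)
    (hM : M ≠ 0) (huv : u * g + v * h = C (M : ℤ)) (h1 : Good g m) (h2 : Good h n) :
    Good (g * h) (m + n) := by
  obtain ⟨O1, i1, φ1, N1, hQ1, hf1, hz1, hk1, hN1, hs1⟩ := h1
  obtain ⟨O2, i2, φ2, N2, hQ2, hf2, hz2, hk2, hN2, hs2⟩ := h2
  refine ⟨O1 × O2, inferInstance, φ1.prod φ2, M * N1 * N2, Q_prod hQ1 hQ2, inferInstance, ?_, ?_,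
    mul_ne_zero (mul_ne_zero hM hN1) hN2, ?_⟩
  · rintro k hk ⟨a, b⟩ h
    rw [Prod.ext_iff] at h
    simp only [Prod.fst_mul, Prod.snd_mul, Prod.fst_natCast, Prod.snd_natCast, Prod.fst_zero,
      Prod.snd_zero] at h
    exact Prod.ext (hz1 k hk _ h.1) (hz2 k hk _ h.2)
  · intro p
    rw [RingHom.prod_apply, Prod.mk_eq_zero, hk1, hk2]
    constructor
    · rintro ⟨⟨a, ha⟩, ⟨b, hb⟩⟩
      refine monic_dvd (hg.mul hh) M (by exact_mod_cast hM) p ⟨u * b + v * a, ?_⟩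
      rw [← huv]
      linear_combination u * g * hb + v * h * ha
    · intro h
      exact ⟨(Dvd.intro _ rfl).trans h, (Dvd.intro_left _ rfl).trans h⟩
  · rintro ⟨a, b⟩
    obtain ⟨p, hp⟩ := hs1 a
    obtain ⟨q, hq⟩ := hs2 b
    have e1 := congrArg φ1 huv
    have e2 := congrArg φ2 huv
    rw [map_add, map_mul, map_mul, (hk1 g).mpr dvd_rfl, mul_zero, zero_add] at e1
    rw [map_add, map_mul, map_mul, (hk2 h).mpr dvd_rfl, mul_zero, add_zero] at e2
    have z1 := (hk1 g).mpr dvd_rfl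
    have z2 := (hk2 h).mpr dvd_rfl
    have c1 : φ1 (C (M : ℤ)) = M := by simp
    have c2 : φ2 (C (M : ℤ)) = M := by simp
    rw [c1] at e1
    rw [c2] at e2
    refine ⟨v * h * (p * (N2 : ℤ[X])) + u * g * (q * (N1 : ℤ[X])), ?_⟩
    rw [RingHom.prod_apply]
    refine Prod.ext ?_ ?_
    · simp only [map_add, map_mul, map_natCast, z1, hp, Prod.fst_mul, Prod.fst_natCast]
      push_cast
      linear_combination (N1 * a * N2) * e1
    · simp only [map_add, map_mul, map_natCast, z2, hq, Prod.snd_mul, Prod.snd_natCast]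
      push_cast
      linear_combination (N1 * b * N2) * e2

theorem chain_exists (a : ℤ) (e : ℕ) : ∃ (O : Type) (_ : CommRing O) (φ : ℤ[X] →+* O)
    (π : O →+* ℤ), Function.Surjective φ ∧ (∀ p, φ p = 0 ↔ (X - C a) ^ (e + 1) ∣ p) ∧
    (∀ p, π (φ p) = p.eval a) ∧ WW π e := by
  induction e with
  | zero =>
    refine ⟨ℤ, inferInstance, evalRingHom a, RingHom.id ℤ, ?_, ?_, ?_, WW_base⟩
    · intro n; exact ⟨C n, by simp⟩
    · intro p
      rw [zero_add, pow_one, dvd_iff_isRoot]; rfl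
    · intro p; rfl
  | succ e ih =>
    obtain ⟨O, i, φ, π', hs, hk, hπ', hW⟩ := ih
    have hl : ∀ p ∈ Ideal.span {(X - C a : ℤ[X]) ^ (e + 1 + 1)}, φ p = 0 := by
      intro p hp
      rw [Ideal.mem_span_singleton] at hp
      rw [hk]
      exact (pow_dvd_pow _ (Nat.le_succ _)).trans hp
    let mk := Ideal.Quotient.mk (Ideal.span {(X - C a : ℤ[X]) ^ (e + 1 + 1)})
    have hmk0 : ∀ p, mk p = 0 ↔ (X - C a : ℤ[X]) ^ (e + 1 + 1) ∣ p := fun p => by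
      rw [← Ideal.mem_span_singleton]; exact Ideal.Quotient.eq_zero_iff_mem
    let ρ := Ideal.Quotient.lift (Ideal.span {(X - C a : ℤ[X]) ^ (e + 1 + 1)}) φ hl
    have hρm : ∀ p, ρ (mk p) = φ p := fun p => rfl
    refine ⟨_, inferInstance, mk, π'.comp ρ, Ideal.Quotient.mk_surjective, hmk0,
      fun p => hπ' p, ?_⟩
    refine WW_step (π'.comp ρ) (mk (X - C a)) ?_ ρ ?_ ?_ π' (fun r => rfl) e hW
    · intro r
      obtain ⟨p, rfl⟩ := Ideal.Quotient.mk_surjective r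
      have e1 : (π'.comp ρ) (mk p) = p.eval a := hπ' p
      change (π'.comp ρ) (mk p) = 0 ↔ mk (X - C a) ∣ mk p
      rw [e1]
      have e2 : p.eval a = 0 ↔ (X - C a) ∣ p := by rw [dvd_iff_isRoot]; rfl
      rw [e2]
      constructor
      · exact fun h => map_dvd mk h
      · rintro ⟨q, hq⟩
        obtain ⟨q, rfl⟩ := Ideal.Quotient.mk_surjective q
        have h1 : mk (p - (X - C a) * q) = 0 := by
          rw [map_sub, map_mul, hq]; exact sub_self _
        rw [hmk0] at h1
        have h2 := (dvd_pow_self (X - C a : ℤ[X]) (Nat.succ_ne_zero (e + 1))).trans h1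
        have h3 := dvd_add h2 (Dvd.intro q rfl)
        simpa using h3
    · intro o
      obtain ⟨p, hp⟩ := hs o
      exact ⟨mk p, hp⟩
    · intro r
      obtain ⟨p, rfl⟩ := Ideal.Quotient.mk_surjective r
      change φ p = 0 ↔ mk (X - C a) * mk p = 0
      rw [← map_mul, hmk0, hk, pow_succ' _ (e + 1)]
      exact (mul_dvd_mul_iff_left (X_sub_C_ne_zero a)).symm

theorem Good_linear (a : ℤ) (e : ℕ) : Good ((X - C a) ^ e) e := by
  cases e with
  | zero => rw [pow_zero]; exact Good_one
  | succ e =>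
    obtain ⟨O, i, φ, π, hs, hk, hπ, hW⟩ := chain_exists a e
    have hmon : ((X - C a : ℤ[X]) ^ (e + 1)).Monic := (monic_X_sub_C a).pow _
    refine ⟨O, i, φ, 1, WW_Q π e hW, ?_, ?_, hk, one_ne_zero, ?_⟩
    · have h1 : Module.Finite ℤ (AdjoinRoot ((X - C a : ℤ[X]) ^ (e + 1))) := hmon.finite_adjoinRoot
      have h2 : ∀ p ∈ Ideal.span {(X - C a : ℤ[X]) ^ (e + 1)}, φ p = 0 := by
        intro p hp
        rw [hk, ← Ideal.mem_span_singleton]; exact hp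
      let ψ : AdjoinRoot ((X - C a : ℤ[X]) ^ (e + 1)) →+* O := Ideal.Quotient.lift _ φ h2
      exact Module.Finite.of_surjective ψ.toAddMonoidHom.toIntLinearMap (fun o => by
        obtain ⟨p, hp⟩ := hs o
        exact ⟨AdjoinRoot.mk _ p, hp⟩)
    · intro k hk0 o ho
      obtain ⟨p, rfl⟩ := hs o
      have h1 : φ (C (k : ℤ) * p) = 0 := by rw [map_mul]; simpa using ho
      rw [hk] at h1 ⊢
      exact monic_dvd hmon k (by exact_mod_cast hk0) p h1
    · intro o
      obtain ⟨p, hp⟩ := hs o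
      exact ⟨p, by simp [hp]⟩

end CubicZeta
end Part15

section Part16
namespace CubicZeta
open Polynomial NumberField

theorem clear_den (q : ℚ[X]) : ∃ M : ℕ, M ≠ 0 ∧ ∃ p : ℤ[X], p.map (Int.castRingHom ℚ) = C (M : ℚ) * q := by
  obtain ⟨b, hbm, hb⟩ := IsLocalization.integerNormalization_spec (nonZeroDivisors ℤ) q
  have hb0 : (b : ℤ) ≠ 0 := nonZeroDivisors.ne_zero hbm
  refine ⟨(b : ℤ).natAbs, Int.natAbs_ne_zero.mpr hb0,
    C (SignType.sign (b : ℤ) : ℤ) * IsLocalization.integerNormalization (nonZeroDivisors ℤ) q, ?_⟩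
  have hb' : (IsLocalization.integerNormalization (nonZeroDivisors ℤ) q).map (Int.castRingHom ℚ) =
    C (((b : ℤ) : ℚ)) * q := by
    rw [← smul_eq_C_mul, Int.cast_smul_eq_zsmul]
    exact hb
  rw [Polynomial.map_mul, hb', map_C, ← mul_assoc, ← C_mul]
  congr 2
  have h := sign_mul_abs (b : ℤ)
  have h2 : (SignType.sign (b : ℤ) : ℤ) * (b : ℤ) = (b : ℤ).natAbs := by
    rw [← Int.abs_eq_natAbs]
    exact sign_mul_self (b : ℤ)
  rw [eq_intCast, ← Int.cast_mul, h2]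
  simp

theorem Good_field (g : ℤ[X]) (hg : g.Monic) (hirr : Irreducible g) : Good g 1 := by
  have hirrQ : Irreducible (g.map (Int.castRingHom ℚ)) :=
    (hg.irreducible_iff_irreducible_map_fraction_map (K := ℚ)).mp hirr
  have hmQ : (g.map (Int.castRingHom ℚ)).Monic := hg.map _
  have : Fact (Irreducible (g.map (Int.castRingHom ℚ))) := ⟨hirrQ⟩
  let K := AdjoinRoot (g.map (Int.castRingHom ℚ))
  have hfd : FiniteDimensional ℚ K := hmQ.finite_adjoinRoot
  have hc : CharZero K := algebraRat.charZero K
  have hK : NumberField K := ⟨⟩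
  let α : K := AdjoinRoot.root _
  have hev : ∀ p : ℤ[X], aeval α p = AdjoinRoot.mk (g.map (Int.castRingHom ℚ))
      (p.map (Int.castRingHom ℚ)) := by
    intro p
    rw [← AdjoinRoot.aeval_eq]
    exact (aeval_map_algebraMap ℚ α p).symm
  have hαi : IsIntegral ℤ α := ⟨g, hg, by
    rw [← aeval_def, hev, AdjoinRoot.mk_self]⟩
  let β : 𝓞 K := ⟨α, hαi⟩
  let φ : ℤ[X] →+* 𝓞 K := (aeval β : ℤ[X] →ₐ[ℤ] 𝓞 K).toRingHom
  have hφ : ∀ p, algebraMap (𝓞 K) K (φ p) = AdjoinRoot.mk (g.map (Int.castRingHom ℚ))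
      (p.map (Int.castRingHom ℚ)) := by
    intro p
    rw [← hev]
    exact (aeval_algebraMap_apply K β p).symm
  have hinj := RingOfIntegers.coe_injective (K := K)
  have hfin : Module.Finite ℤ (𝓞 K) := inferInstance
  have key : Finite ((𝓞 K) ⧸ φ.toAddMonoidHom.toIntLinearMap.range) := by
    have : Module.Finite ℤ ((𝓞 K) ⧸ φ.toAddMonoidHom.toIntLinearMap.range) := inferInstance
    refine Module.finite_of_fg_torsion _ ?_
    intro y
    obtain ⟨y, rfl⟩ := Submodule.Quotient.mk_surjective _ y
    obtain ⟨q, hq⟩ := AdjoinRoot.mk_surjective (algebraMap (𝓞 K) K y)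
    obtain ⟨M, hM, p, hp⟩ := clear_den q
    refine ⟨⟨(M : ℤ), mem_nonZeroDivisors_of_ne_zero (by exact_mod_cast hM)⟩, ?_⟩
    rw [Submonoid.mk_smul, ← Submodule.Quotient.mk_smul, Submodule.Quotient.mk_eq_zero]
    refine ⟨p, ?_⟩
    change φ p = _
    apply hinj
    change algebraMap (𝓞 K) K (φ p) = algebraMap (𝓞 K) K ((M : ℤ) • y)
    rw [hφ, hp, map_mul, hq, map_zsmul, zsmul_eq_mul]
    congr 1
  refine ⟨𝓞 K, inferInstance, φ, Nat.card ((𝓞 K) ⧸ φ.toAddMonoidHom.toIntLinearMap.range),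
    Q_K K, hfin, ?_, ?_, Nat.card_pos.ne', ?_⟩
  · intro k hk o ho
    rcases mul_eq_zero.mp ho with h | h
    · exact absurd (by exact_mod_cast h) hk
    · exact h
  · intro p
    rw [← map_dvd_map (Int.castRingHom ℚ) Int.cast_injective hg, ← AdjoinRoot.mk_eq_zero, ← hφ]
    exact (map_eq_zero_iff _ hinj).symm
  · intro o
    have h := card_nsmul_eq_zero' (x := (Submodule.Quotient.mk o :
      (𝓞 K) ⧸ φ.toAddMonoidHom.toIntLinearMap.range))
    rw [← Submodule.Quotient.mk_smul, Submodule.Quotient.mk_eq_zero] at h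
    obtain ⟨p, hp⟩ := h
    exact ⟨p, by rw [← nsmul_eq_mul]; exact hp⟩

end CubicZeta
end Part16

section Part17
namespace CubicZeta
open Polynomial

theorem bezout_of_coprime {g h : ℤ[X]}
    (H : IsCoprime (g.map (Int.castRingHom ℚ)) (h.map (Int.castRingHom ℚ))) :
    ∃ (u v : ℤ[X]) (M : ℕ), M ≠ 0 ∧ u * g + v * h = C (M : ℤ) := by
  obtain ⟨a, b, hab⟩ := H
  obtain ⟨M1, h1, u, hu⟩ := clear_den a
  obtain ⟨M2, h2, v, hv⟩ := clear_den b
  refine ⟨C (M2 : ℤ) * u, C (M1 : ℤ) * v, M1 * M2, mul_ne_zero h1 h2, ?_⟩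
  apply map_injective (Int.castRingHom ℚ) Int.cast_injective
  simp only [Polynomial.map_add, Polynomial.map_mul, hu, hv, map_C]
  simp only [eq_intCast, Int.cast_natCast, Nat.cast_mul, Int.cast_mul, C_mul]
  linear_combination (C (M1 : ℚ) * C (M2 : ℚ)) * hab

theorem coprime_irr {g h : ℤ[X]} (hg : g.Monic) (hh : h.Monic) (ig : Irreducible g)
    (ih : Irreducible h) (hne : g ≠ h) :
    IsCoprime (g.map (Int.castRingHom ℚ)) (h.map (Int.castRingHom ℚ)) := by
  have ig' : Irreducible (g.map (Int.castRingHom ℚ)) :=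
    (hg.irreducible_iff_irreducible_map_fraction_map (K := ℚ)).mp ig
  have ih' : Irreducible (h.map (Int.castRingHom ℚ)) :=
    (hh.irreducible_iff_irreducible_map_fraction_map (K := ℚ)).mp ih
  rcases ig'.isCoprime_or_dvd (h.map (Int.castRingHom ℚ)) with h1 | h1
  · exact h1
  · exfalso
    rw [ig'.dvd_irreducible_iff_associated ih'] at h1
    exact hne (map_injective (Int.castRingHom ℚ) Int.cast_injective
      (eq_of_monic_of_associated (hg.map _) (hh.map _) h1))

theorem Good_power {g : ℤ[X]} (hg : g.Monic) (ig : Irreducible g) (c : ℕ) (hc : c ≠ 0)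
    (h3 : c * g.natDegree ≤ 3) : Good (g ^ c) c := by
  have hd : g.natDegree ≠ 0 := by
    intro h
    have := hg.natDegree_eq_zero.mp h
    exact ig.not_isUnit (by rw [this]; exact isUnit_one)
  by_cases h1 : g.natDegree = 1
  · have e := hg.eq_X_add_C h1
    have e2 : g = X - C (-g.coeff 0) := by rw [C_neg, sub_neg_eq_add]; exact e
    rw [e2]
    exact Good_linear _ c
  · have : c = 1 := by
      have h2 : 2 ≤ g.natDegree := by omega
      by_contra hc1
      have : 2 ≤ c := by omega
      nlinarith
    rw [this, pow_one]
    exact Good_field g hg ig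

theorem Good_prod (T : Finset ℤ[X]) (c : ℤ[X] → ℕ) (hT : ∀ g ∈ T, g.Monic ∧ Irreducible g ∧
    c g ≠ 0 ∧ c g * g.natDegree ≤ 3) : Good (∏ g ∈ T, g ^ c g) (∑ g ∈ T, c g) := by
  classical
  induction T using Finset.induction_on with
  | empty => simpa using Good_one
  | insert g T hgT ih =>
    rw [Finset.prod_insert hgT, Finset.sum_insert hgT]
    have hT' : ∀ h ∈ T, h.Monic ∧ Irreducible h ∧ c h ≠ 0 ∧ c h * h.natDegree ≤ 3 :=
      fun h hh => hT h (Finset.mem_insert_of_mem hh)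
    obtain ⟨mg, ig, cg, dg⟩ := hT g (Finset.mem_insert_self _ _)
    have hcop : IsCoprime ((g ^ c g).map (Int.castRingHom ℚ))
        ((∏ h ∈ T, h ^ c h).map (Int.castRingHom ℚ)) := by
      rw [Polynomial.map_pow, Polynomial.map_prod]
      refine IsCoprime.prod_right fun h hh => ?_
      rw [Polynomial.map_pow]
      refine IsCoprime.pow (coprime_irr mg (hT' h hh).1 ig (hT' h hh).2.1 ?_)
      rintro rfl
      exact hgT hh
    obtain ⟨u, v, M, hM, huv⟩ := bezout_of_coprime hcop
    exact Good_mul (mg.pow _) (monic_prod_of_monic _ _ fun h hh => (hT' h hh).1.pow _) u v M hM huv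
      (Good_power mg ig _ cg dg) (ih hT')

theorem Good_cubic (f : ℤ[X]) (hf : f.Monic) (hdeg : f.natDegree = 3) :
    Good f (Multiset.card (UniqueFactorizationMonoid.factors f)) := by
  classical
  set S := UniqueFactorizationMonoid.normalizedFactors f with hS
  have hcard : Multiset.card S = Multiset.card (UniqueFactorizationMonoid.factors f) := by
    rw [hS, UniqueFactorizationMonoid.normalizedFactors, Multiset.card_map]
  have hass : Associated S.prod f := UniqueFactorizationMonoid.prod_normalizedFactors hf.ne_zero
  have hirr : ∀ g ∈ S, Irreducible g :=
    fun g hg => UniqueFactorizationMonoid.irreducible_of_normalized_factor g hg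
  have hmon : ∀ g ∈ S, g.Monic := by
    intro g hg
    have h1 := UniqueFactorizationMonoid.normalize_normalized_factor g hg
    have h2 := UniqueFactorizationMonoid.dvd_of_mem_normalizedFactors hg
    obtain ⟨k, hk⟩ := h2
    have h3 : g.leadingCoeff * k.leadingCoeff = 1 := by
      rw [← leadingCoeff_mul, ← hk]; exact hf
    have h4 : IsUnit g.leadingCoeff := IsUnit.of_mul_eq_one _ h3
    have h5 := congrArg leadingCoeff h1
    rw [leadingCoeff_normalize, normalize_eq_one.mpr h4] at h5
    exact h5.symm
  have hpm : S.prod.Monic := by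
    have := monic_multiset_prod_of_monic S id (fun g hg => hmon g hg)
    simpa using this
  have hprod : S.prod = f := eq_of_monic_of_associated hpm hf hass
  have h := Good_prod S.toFinset (fun g => S.count g) (fun g hg => by
    rw [Multiset.mem_toFinset] at hg
    refine ⟨hmon g hg, hirr g hg, Multiset.count_ne_zero.mpr hg, ?_⟩
    have h1 : g ^ S.count g ∣ f := by
      rw [← hprod]
      rw [Finset.prod_multiset_count]
      exact Finset.dvd_prod_of_mem (fun g => g ^ S.count g) (Multiset.mem_toFinset.mpr hg)
    rw [← (hmon g hg).natDegree_pow, ← hdeg]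
    exact natDegree_le_of_dvd h1 hf.ne_zero)
  rwa [← Finset.prod_multiset_count, Multiset.toFinset_sum_count_eq, hprod, hcard] at h

theorem main_cubic (f : Polynomial ℤ) (hmonic : f.Monic) (m : ℕ) (hm : Good f m) :
    ∃ δ > (0 : ℝ), ∃ g : ℂ → ℂ,
      DifferentiableOn ℂ g {s : ℂ | 1 - δ < s.re} ∧ g 1 ≠ 0 ∧
      ∀ s : ℂ, 1 < s.re →
        HasSum (fun k : ℕ+ => (idealCount (Polynomial ℤ ⧸ Ideal.span {f}) k : ℂ) / (k : ℂ) ^ s)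
          (g s / (s - 1) ^ m) := by
  obtain ⟨O, i, φ, N, ⟨δ, hδ, hQ⟩, hf, hz, hk, hN, hs⟩ := hm
  obtain ⟨hQS, hQC⟩ := hQ N hN
  have hl : ∀ p ∈ Ideal.span {f}, φ p = 0 := fun p hp => by
    rw [hk, ← Ideal.mem_span_singleton]; exact hp
  let ψ : (Polynomial ℤ ⧸ Ideal.span {f}) →+* O := Ideal.Quotient.lift _ φ hl
  have hψ : Function.Injective ψ := by
    rw [injective_iff_map_eq_zero]
    intro r hr
    obtain ⟨p, rfl⟩ := Ideal.Quotient.mk_surjective r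
    have h1 : φ p = 0 := hr
    rw [hk, ← Ideal.mem_span_singleton] at h1
    exact Ideal.Quotient.eq_zero_iff_mem.mpr h1
  have hNO : ∀ o : O, ∃ r, ψ r = N * o := fun o => by
    obtain ⟨p, hp⟩ := hs o
    exact ⟨Ideal.Quotient.mk _ p, hp⟩
  have hfin := finite_quot (O := O) N hN
  have hfR : Module.Finite ℤ (Polynomial ℤ ⧸ Ideal.span {f}) := hmonic.finite_quotient
  exact final_step m (min δ 1) (lt_min hδ one_pos) N
    (QS_transfer ψ hψ N hNO (hz N hN) (min_le_right _ _) (hQS.mono (min_le_left _ _)))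
    (QC_transfer ψ hψ N hNO (hQC.mono (min_le_left _ _))) (fun k hk => finite_quot k hk)

end CubicZeta
end Part17

/-- For a monic cubic `f ∈ ℤ[X]`, the ideal zeta function of `ℤ[X]/(f)` converges for
`Re s > 1` and has a pole at `s = 1` of order equal to the number of irreducible factors
of `f` counted with multiplicity. -/
theorem ideal_zeta_cubic_pole_order (f : Polynomial ℤ) (hmonic : f.Monic)
    (hdeg : f.natDegree = 3) (m : ℕ)
    (hm : m = Multiset.card (UniqueFactorizationMonoid.factors f)) :
    ∃ δ > (0 : ℝ), ∃ g : ℂ → ℂ,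
      DifferentiableOn ℂ g {s : ℂ | 1 - δ < s.re} ∧ g 1 ≠ 0 ∧
      ∀ s : ℂ, 1 < s.re →
        HasSum
          (fun k : ℕ+ =>
            (idealCount (Polynomial ℤ ⧸ Ideal.span {f}) k : ℂ) / (k : ℂ) ^ s)
          (g s / (s - 1) ^ m) := by
  exact CubicZeta.main_cubic f hmonic m (hm ▸ CubicZeta.Good_cubic f hmonic hdeg)
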